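/- Let Γ ⊂ ℂ be a quasismooth Jordan curve, ν ∈ A∞(Γ), and 1 ≤ p < ∞. There exist constants c₃, c₄ > 0 depending only on Γ, p, λ_ν such that for every n ∈ ℕ, every polynomial p_n ∈ ℙ_n, every s with 0 < s < (diam Γ)/4, and every Borel set A ⊂ Γ with |A| ≥ |Γ| − s, one has ∫_Γ |p_n|^p w_n ds ≤ c₃ exp(c₄ δ(s) n) ∫_A |p_n|^p w_n ds. -/

import Mathlib

open MeasureTheory Metric Set Filter Bornology Complex
open scoped ENNReal NNReal Topology

noncomputable section

/-- `Γ` is a Jordan curve: the image of an injective continuous map of the unit circle. -/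
def IsJordanCurve (Γ : Set ℂ) : Prop :=
  ∃ γ : ℂ → ℂ, ContinuousOn γ (Metric.sphere (0:ℂ) 1) ∧
    Set.InjOn γ (Metric.sphere (0:ℂ) 1) ∧ Γ = γ '' (Metric.sphere (0:ℂ) 1)

/-- A (closed) subarc of `Γ`: a closed connected subset. -/
def IsSubarc (Γ J : Set ℂ) : Prop :=
  J ⊆ Γ ∧ IsClosed J ∧ IsPreconnected J

/-- `|Γ(z₁,z₂)|`: the length (1-dimensional Hausdorff measure) of the shorter subarc of `Γ`
joining `z₁` and `z₂`, described as the infimum of lengths of closed connected subsets of `Γ`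
containing both points. -/
def shorterArcLength (Γ : Set ℂ) (z₁ z₂ : ℂ) : ℝ≥0∞ :=
  ⨅ (J : Set ℂ) (_ : IsSubarc Γ J ∧ z₁ ∈ J ∧ z₂ ∈ J), μH[1] J

/-- `J` is (a realization of) the shorter arc `Γ(z₁,z₂)` of `Γ` between `z₁` and `z₂`. -/
def IsShorterArc (Γ : Set ℂ) (z₁ z₂ : ℂ) (J : Set ℂ) : Prop :=
  IsSubarc Γ J ∧ z₁ ∈ J ∧ z₂ ∈ J ∧ μH[1] J = shorterArcLength Γ z₁ z₂

/-- `Γ` is quasismooth (in the sense of Lavrentiev) with constant `Λ ≥ 1`: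
`|Γ(z₁,z₂)| ≤ Λ |z₁ - z₂|`. -/
def IsQuasismooth (Γ : Set ℂ) (Λ : ℝ) : Prop :=
  1 ≤ Λ ∧ ∀ z₁ ∈ Γ, ∀ z₂ ∈ Γ,
    shorterArcLength Γ z₁ z₂ ≤ ENNReal.ofReal (Λ * dist z₁ z₂)

/-- The union of the unbounded connected components of `Γᶜ`; for a Jordan curve `Γ` this is
the (unique) unbounded component `Ω` of the complement of `Γ`. -/
def unboundedComponent (Γ : Set ℂ) : Set ℂ :=
  {z | z ∉ Γ ∧ ¬ Bornology.IsBounded (connectedComponentIn Γᶜ z)}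

/-- `d(A,B) := inf {|z-ζ| : z ∈ A, ζ ∈ B}`. -/
def setDist (A B : Set ℂ) : ℝ := sInf (Set.image2 dist A B)

/-- The exterior `𝔻*` of the closed unit disk (finite part). -/
def extDisk : Set ℂ := {w : ℂ | 1 < ‖w‖}

/-- `Φ` is the conformal (holomorphic bijective) map of `Ω` onto `𝔻* = {|w| > 1}` normalized
by `Φ(∞) = ∞` and `Φ'(∞) := lim_{z→∞} Φ(z)/z > 0`. -/
def IsExtConformal (Ω : Set ℂ) (Φ : ℂ → ℂ) : Prop :=
  DifferentiableOn ℂ Φ Ω ∧ Set.BijOn Φ Ω extDisk ∧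
    ∃ c : ℝ, 0 < c ∧
      Filter.Tendsto (fun z => Φ z / z) (Bornology.cobounded ℂ) (nhds (c : ℂ))

/-- `Φ` additionally extends to a homeomorphism of `closure Ω` onto `{|w| ≥ 1}`. -/
def IsExtConformalClosure (Ω : Set ℂ) (Φ : ℂ → ℂ) : Prop :=
  IsExtConformal Ω Φ ∧ ContinuousOn Φ (closure Ω) ∧
    Set.BijOn Φ (closure Ω) {w : ℂ | 1 ≤ ‖w‖}

/-- The level curve `Γ_δ := {ζ ∈ Ω : |Φ(ζ)| = 1 + δ}`. -/
def levelCurve (Ω : Set ℂ) (Φ : ℂ → ℂ) (δ : ℝ) : Set ℂ :=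
  {ζ ∈ Ω | ‖Φ ζ‖ = 1 + δ}

/-- `ρ_δ(z) := d({z}, Γ_δ)`. -/
def rho (Ω : Set ℂ) (Φ : ℂ → ℂ) (δ : ℝ) (z : ℂ) : ℝ :=
  Metric.infDist z (levelCurve Ω Φ δ)

/-- `ν ∈ A∞(Γ)` with constant `lam ≥ 1`: `ν(J) ≤ lam · ν(S)` for every subarc `J ⊂ Γ` and
every Borel set `S ⊂ J` with `|J| ≤ 2|S|`. -/
def IsAInftyMeasure (Γ : Set ℂ) (ν : MeasureTheory.Measure ℂ) (lam : ℝ) : Prop :=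
  1 ≤ lam ∧ ∀ J S : Set ℂ, IsSubarc Γ J → S ⊆ J → MeasurableSet S →
    μH[1] J ≤ 2 * μH[1] S → ν J ≤ ENNReal.ofReal lam * ν S

/-- The family `z ↦ l_n(z)` of arcs: for `z ∈ Γ` and `1/n < δ₀`, `l_n(z) = Γ(z'_{1/n}, z''_{1/n})`
is a shorter arc around `z` whose two halves `Γ(z'_{1/n},z)`, `Γ(z,z''_{1/n})` both have length
`ρ_{1/n}(z)/2`; for `1/n ≥ δ₀` it is all of `Γ`. -/
def IsArcFamily (Γ Ω : Set ℂ) (Φ : ℂ → ℂ) (δ₀ : ℝ) (n : ℕ) (ℓ : ℂ → Set ℂ) : Prop :=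
  ∀ z ∈ Γ,
    (1 / (n:ℝ) < δ₀ →
      ∃ z' z'' : ℂ, z' ∈ Γ ∧ z'' ∈ Γ ∧ IsShorterArc Γ z' z'' (ℓ z) ∧ z ∈ ℓ z ∧
        shorterArcLength Γ z' z = ENNReal.ofReal (rho Ω Φ (1/(n:ℝ)) z / 2) ∧
        shorterArcLength Γ z z'' = ENNReal.ofReal (rho Ω Φ (1/(n:ℝ)) z / 2)) ∧
    (δ₀ ≤ 1 / (n:ℝ) → ℓ z = Γ)

/-- The weight `w_n(z) := ν(l_n(z)) / ρ_{1/n}(z)`. -/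
def wFun (ν : MeasureTheory.Measure ℂ) (Ω : Set ℂ) (Φ : ℂ → ℂ) (n : ℕ)
    (ℓ : ℂ → Set ℂ) (z : ℂ) : ℝ :=
  (ν (ℓ z)).toReal / rho Ω Φ (1/(n:ℝ)) z

/-!
Arclength on `Γ` is one-dimensional regular and `ν` is doubling, so on `Γ` the weight `w_n` is
comparable to the `ν`-mass of the ball of radius `ρ_{1/n} / 2` divided by `ρ_{1/n}`.

Let `s = d(Γ, Γ_δ)` and `x ∈ Γ`, and choose `z ∈ Γ` where `(s / (s + |x - z|)) ^ M * |P z|` is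
largest. The first factor is comparable to the modulus of a function holomorphic off `Γ` near each
point, namely the exponential of a logarithmic potential. Apply the maximum principle outside `Γ`
to its product with `P / Φ ^ n`. By Harnack's inequality `‖Φ‖` is at most a power of `1 + δ` at
distance of order `s` from `Γ`, hence `|P| ≤ B * |P z|` on a disc about `z` of radius comparable to
`s`, with `B = C * exp (c * δ * n)`. Dividing out the zeros of `P` in this disc, of which there are
at most `O(log B)`, and integrating their logarithms along `Γ` shows that `|P|` is smaller than a
fixed negative power of `B` times `|P z|` only on a set of length at most `s / 8`. Hence
`|P x|` is at most `B ^ l` times the decaying factor times `|P|` on most of an arc of `A` near `z`,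
and Schur's test for the decaying kernel turns this pointwise bound into the integral one.
-/

/-! ### Length of subarcs -/

section PseudoMetricSpace

variable {X : Type*} [PseudoMetricSpace X] {S : Set X} {x y : X} {r : ℝ}

lemma Icc_zero_dist_subset_image_dist (hS : IsPreconnected S) (hx : x ∈ S) (hy : y ∈ S) :
    Icc 0 (dist x y) ⊆ dist x '' S := by
  simpa using (hS.image (dist x) (by fun_prop)).ordConnected.out
    (mem_image_of_mem _ hx) (mem_image_of_mem _ hy)

lemma exists_le_dist_of_two_mul_lt_diam (x : X) (hr₀ : 0 ≤ r) (hr : 2 * r < diam S) :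
    ∃ y ∈ S, r ≤ dist x y := by
  by_contra! hlt
  refine hr.not_ge (diam_le_of_forall_dist_le (by positivity) fun y hy z hz => ?_)
  linarith [dist_triangle_left y z x, hlt y hy, hlt z hz]

end PseudoMetricSpace

section HausdorffMeasure

variable {X : Type*} [MetricSpace X] [MeasurableSpace X] [BorelSpace X]

lemma hausdorffMeasure_one_singleton (x : X) : μH[1] ({x} : Set X) = 0 :=
  haveI := Measure.nullSingletonClass_hausdorff X one_pos
  measure_singleton x

lemma volume_image_dist_le_hausdorffMeasure (x : X) (S : Set X) :
    volume (dist x '' S) ≤ μH[1] S := by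
  simpa [hausdorffMeasure_real] using
    (LipschitzWith.dist_right x).hausdorffMeasure_image_le zero_le_one S

lemma ofReal_dist_le_hausdorffMeasure {S : Set X} (hS : IsPreconnected S) {x y : X} (hx : x ∈ S)
    (hy : y ∈ S) : ENNReal.ofReal (dist x y) ≤ μH[1] S :=
  calc ENNReal.ofReal (dist x y) = volume (Icc 0 (dist x y)) := by simp
    _ ≤ volume (dist x '' S) := measure_mono (Icc_zero_dist_subset_image_dist hS hx hy)
    _ ≤ μH[1] S := volume_image_dist_le_hausdorffMeasure x S

lemma ofReal_le_hausdorffMeasure_inter_ball {S : Set X} (hS : IsPreconnected S) {x : X}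
    (hx : x ∈ S) {r : ℝ} (hr : 2 * r ≤ diam S) : ENNReal.ofReal r ≤ μH[1] (S ∩ ball x r) := by
  have hsub : Ico 0 r ⊆ dist x '' (S ∩ ball x r) := by
    rintro t ⟨ht₀, htr⟩
    obtain ⟨y, hy, hty⟩ := exists_le_dist_of_two_mul_lt_diam (S := S) x ht₀ (by linarith)
    obtain ⟨w, hw, rfl⟩ := Icc_zero_dist_subset_image_dist hS hx hy ⟨ht₀, hty⟩
    exact ⟨w, ⟨hw, mem_ball'.2 htr⟩, rfl⟩
  calc ENNReal.ofReal r = volume (Ico 0 r) := by simp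
    _ ≤ volume (dist x '' (S ∩ ball x r)) := measure_mono hsub
    _ ≤ μH[1] (S ∩ ball x r) := volume_image_dist_le_hausdorffMeasure x _

lemma exists_isGreatest_hausdorffMeasure_image_Icc_le (g : ℝ → X) {a b : ℝ} (hab : a ≤ b)
    (c : ℝ≥0∞) : ∃ t, IsGreatest {t ∈ Icc a b | μH[1] (g '' Icc a t) ≤ c} t := by
  set E := {t ∈ Icc a b | μH[1] (g '' Icc a t) ≤ c}
  have haE : a ∈ E := ⟨left_mem_Icc.2 hab, by simp [hausdorffMeasure_one_singleton]⟩
  have hbdd : BddAbove E := ⟨b, fun t ht => ht.1.2⟩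
  refine ⟨sSup E, ⟨⟨le_csSup hbdd haE, csSup_le ⟨a, haE⟩ fun t ht => ht.1.2⟩, ?_⟩,
    fun t ht => le_csSup hbdd ht⟩
  obtain ⟨u, hu, hlim, huE⟩ := exists_seq_tendsto_sSup ⟨a, haE⟩ hbdd
  have hsub : g '' Icc a (sSup E) ⊆ (⋃ n, g '' Icc a (u n)) ∪ {g (sSup E)} := by
    rintro _ ⟨t, ht, rfl⟩
    rcases ht.2.eq_or_lt with rfl | hlt
    · exact Or.inr rfl
    · obtain ⟨n, hn⟩ := (hlim.eventually (lt_mem_nhds hlt)).exists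
      exact Or.inl (mem_iUnion.2 ⟨n, mem_image_of_mem g ⟨ht.1, hn.le⟩⟩)
  have hmono : Monotone fun n => g '' Icc a (u n) := fun i j hij =>
    image_mono (Icc_subset_Icc_right (hu hij))
  calc μH[1] (g '' Icc a (sSup E))
      ≤ μH[1] (⋃ n, g '' Icc a (u n)) + μH[1] {g (sSup E)} :=
        (measure_mono hsub).trans (measure_union_le _ _)
    _ = ⨆ n, μH[1] (g '' Icc a (u n)) := by
        rw [hausdorffMeasure_one_singleton, add_zero, hmono.measure_iUnion]
    _ ≤ c := iSup_le fun n => (huE n).2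

end HausdorffMeasure

section IsQuasismooth

variable {Γ : Set ℂ} {Λ : ℝ} {z w : ℂ}

lemma ofReal_dist_le_shorterArcLength (Γ : Set ℂ) (z w : ℂ) :
    ENNReal.ofReal (dist z w) ≤ shorterArcLength Γ z w :=
  le_iInf₂ fun _ hJ => ofReal_dist_le_hausdorffMeasure hJ.1.2.2 hJ.2.1 hJ.2.2

lemma IsQuasismooth.pos (hq : IsQuasismooth Γ Λ) : 0 < Λ := one_pos.trans_le hq.1

lemma IsQuasismooth.exists_isSubarc_hausdorffMeasure_le (hq : IsQuasismooth Γ Λ) (hz : z ∈ Γ)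
    (hw : w ∈ Γ) (hne : z ≠ w) :
    ∃ J, IsSubarc Γ J ∧ z ∈ J ∧ w ∈ J ∧ μH[1] J ≤ ENNReal.ofReal (2 * Λ * dist z w) := by
  have hlt : shorterArcLength Γ z w < ENNReal.ofReal (2 * Λ * dist z w) := by
    have := mul_pos hq.pos (dist_pos.2 hne)
    refine (hq.2 z hz w hw).trans_lt ((ENNReal.ofReal_lt_ofReal_iff ?_).2 ?_) <;> linarith
  simp only [shorterArcLength, iInf_lt_iff] at hlt
  obtain ⟨J, ⟨hJ, hzJ, hwJ⟩, hlen⟩ := hlt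
  exact ⟨J, hJ, hzJ, hwJ, hlen.le⟩

lemma IsQuasismooth.exists_isSubarc_subset_closedBall (hq : IsQuasismooth Γ Λ) (hz : z ∈ Γ)
    (hw : w ∈ Γ) (hne : z ≠ w) :
    ∃ J, IsSubarc Γ J ∧ z ∈ J ∧ w ∈ J ∧ J ⊆ closedBall z (2 * Λ * dist z w) := by
  obtain ⟨J, hJ, hzJ, hwJ, hlen⟩ := hq.exists_isSubarc_hausdorffMeasure_le hz hw hne
  refine ⟨J, hJ, hzJ, hwJ, fun t ht => ?_⟩
  have := hq.pos
  exact (ENNReal.ofReal_le_ofReal_iff (by positivity)).1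
    ((ofReal_dist_le_hausdorffMeasure hJ.2.2 ht hzJ).trans hlen)

lemma IsShorterArc.subset_closedBall (hq : IsQuasismooth Γ Λ) {z' z'' : ℂ} {J : Set ℂ} {r : ℝ}
    (hr : 0 ≤ r) (hJ : IsShorterArc Γ z' z'' J)
    (hz' : shorterArcLength Γ z' z = ENNReal.ofReal (r / 2))
    (hz'' : shorterArcLength Γ z z'' = ENNReal.ofReal (r / 2)) (hz : z ∈ J) :
    J ⊆ closedBall z (Λ * r) := fun t ht => by
  have hΛ := hq.pos
  have hdist' : dist z' z ≤ r / 2 := (ENNReal.ofReal_le_ofReal_iff (by positivity)).1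
    (hz' ▸ ofReal_dist_le_shorterArcLength Γ z' z)
  have hdist'' : dist z z'' ≤ r / 2 := (ENNReal.ofReal_le_ofReal_iff (by positivity)).1
    (hz'' ▸ ofReal_dist_le_shorterArcLength Γ z z'')
  have hdist : dist t z ≤ Λ * dist z' z'' := (ENNReal.ofReal_le_ofReal_iff (by positivity)).1 <|
    (ofReal_dist_le_hausdorffMeasure hJ.1.2.2 ht hz).trans <|
      hJ.2.2.2.le.trans (hq.2 z' (hJ.1.1 hJ.2.1) z'' (hJ.1.1 hJ.2.2.1))
  exact hdist.trans (by gcongr; linarith [dist_triangle z' z z''])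

end IsQuasismooth

/-- `g` is a continuous `T`-periodic parametrization of the closed curve `Γ` that is injective on
each half-open period. It is defined on the whole line so that a subarc through the base point is
still the image of an interval. -/
structure IsLoop (Γ : Set ℂ) (g : ℝ → ℂ) (T : ℝ) : Prop where
  continuous : Continuous g
  pos : 0 < T
  periodic : Function.Periodic g T
  eq_of_abs_sub_lt : ∀ {x y}, |x - y| < T → g x = g y → x = y
  range_eq : range g = Γ

lemma IsJordanCurve.exists_isLoop {Γ : Set ℂ} (h : IsJordanCurve Γ) : ∃ g T, IsLoop Γ g T := by
  obtain ⟨γ, hc, hinj, rfl⟩ := h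
  have hmem (t : ℝ) : circleMap 0 1 t ∈ sphere (0 : ℂ) 1 := circleMap_mem_sphere 0 zero_le_one t
  exact ⟨γ ∘ circleMap 0 1, 2 * Real.pi,
    { continuous := hc.comp_continuous (continuous_circleMap 0 1) hmem
      pos := Real.two_pi_pos
      periodic := (periodic_circleMap 0 1).comp γ
      eq_of_abs_sub_lt := fun hxy he =>
        eq_of_circleMap_eq one_ne_zero hxy (hinj (hmem _) (hmem _) he)
      range_eq := by rw [range_comp, range_circleMap, abs_one] }⟩

namespace IsLoop

variable {Γ : Set ℂ} {g : ℝ → ℂ} {T Λ : ℝ}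

lemma image_comp_neg_Icc (g : ℝ → ℂ) (a b : ℝ) :
    (fun t => g (-t)) '' Icc a b = g '' Icc (-b) (-a) := by
  rw [← image_image g Neg.neg, image_neg_Icc]

lemma comp_neg (h : IsLoop Γ g T) : IsLoop Γ (fun t => g (-t)) T where
  continuous := h.continuous.comp continuous_neg
  pos := h.pos
  periodic t := by simp only [neg_add, ← sub_eq_add_neg, h.periodic.sub_eq]
  eq_of_abs_sub_lt {x y} hxy he :=
    neg_injective (h.eq_of_abs_sub_lt (by rwa [neg_sub_neg, abs_sub_comm]) he)
  range_eq := by rw [← h.range_eq]; exact neg_surjective.range_comp g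

lemma mem (h : IsLoop Γ g T) (t : ℝ) : g t ∈ Γ := h.range_eq ▸ mem_range_self t

lemma image_Icc_add (h : IsLoop Γ g T) (a : ℝ) : g '' Icc a (a + T) = Γ :=
  (h.periodic.image_Icc h.pos a).trans h.range_eq

lemma image_Icc_add_add (h : IsLoop Γ g T) (a b : ℝ) : g '' Icc (a + T) (b + T) = g '' Icc a b := by
  rw [← image_add_const_Icc, image_image]
  simp only [h.periodic _]

lemma exists_mem_Icc_eq (h : IsLoop Γ g T) (a : ℝ) {z : ℂ} (hz : z ∈ Γ) :
    ∃ t ∈ Icc a (a + T), g t = z := by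
  rwa [← h.image_Icc_add a] at hz

lemma isSubarc_image_Icc (h : IsLoop Γ g T) (a b : ℝ) : IsSubarc Γ (g '' Icc a b) :=
  ⟨image_subset_iff.2 fun t _ => h.mem t, (isCompact_Icc.image h.continuous).isClosed,
    isPreconnected_Icc.image _ h.continuous.continuousOn⟩

lemma measurableSet_image_Icc (h : IsLoop Γ g T) (a b : ℝ) : MeasurableSet (g '' Icc a b) :=
  (h.isSubarc_image_Icc a b).2.1.measurableSet

lemma isCompact (h : IsLoop Γ g T) : IsCompact Γ :=
  h.image_Icc_add 0 ▸ isCompact_Icc.image h.continuous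

lemma isSubarc_self (h : IsLoop Γ g T) : IsSubarc Γ Γ := by
  simpa only [h.image_Icc_add] using h.isSubarc_image_Icc 0 (0 + T)

lemma isPreconnected (h : IsLoop Γ g T) : IsPreconnected Γ := h.isSubarc_self.2.2

lemma image_Icc_subset_or (h : IsLoop Γ g T) {J : Set ℂ} (hJ : IsSubarc Γ J) {a b : ℝ}
    (ha : g a ∈ J) (hb : g b ∈ J) : g '' Icc a b ⊆ J ∨ g '' Icc b (a + T) ⊆ J := by
  -- Removing one point from each of the two arcs would disconnect `J`.
  by_contra! hcon
  obtain ⟨_, ⟨u, ⟨hau, hub⟩, rfl⟩, huJ⟩ := not_subset.1 hcon.1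
  obtain ⟨_, ⟨v, ⟨hbv, hva⟩, rfl⟩, hvJ⟩ := not_subset.1 hcon.2
  have hcover : J ⊆ g '' Icc u v ∪ g '' Icc v (u + T) := by
    rw [← image_union, Icc_union_Icc_eq_Icc (hub.trans hbv) (by linarith), h.image_Icc_add]
    exact hJ.1
  obtain ⟨_, hxJ, ⟨x, hx, rfl⟩, ⟨y, hy, hyx⟩⟩ := isPreconnected_closed_iff.1 hJ.2.2 _ _
    (h.isSubarc_image_Icc u v).2.1 (h.isSubarc_image_Icc v (u + T)).2.1 hcover
    ⟨g b, hb, mem_image_of_mem _ ⟨hub, hbv⟩⟩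
    ⟨g a, ha, ⟨a + T, ⟨hva, by linarith⟩, h.periodic a⟩⟩
  rcases lt_or_ge y (x + T) with hlt | hge
  · have hyx' : y = x :=
      h.eq_of_abs_sub_lt (by rw [abs_of_nonneg] <;> linarith [hx.2, hy.1]) hyx
    obtain rfl : x = v := le_antisymm hx.2 (hyx' ▸ hy.1)
    exact hvJ hxJ
  · obtain rfl : x = u := le_antisymm (by linarith [hy.2]) hx.1
    exact huJ hxJ

lemma min_le_shorterArcLength (h : IsLoop Γ g T) (a b : ℝ) :
    min (μH[1] (g '' Icc a b)) (μH[1] (g '' Icc b (a + T))) ≤ shorterArcLength Γ (g a) (g b) :=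
  le_iInf₂ fun _ ⟨hJ, ha, hb⟩ => (h.image_Icc_subset_or hJ ha hb).elim
    (fun hsub => min_le_of_left_le (measure_mono hsub))
    (fun hsub => min_le_of_right_le (measure_mono hsub))

lemma exists_inter_ball_subset_image_Icc (h : IsLoop Γ g T) (hq : IsQuasismooth Γ Λ) (θ r : ℝ) :
    ∃ a ∈ Icc (θ - T) θ, ∃ b ∈ Icc θ (θ + T), Γ ∩ ball (g θ) r ⊆ g '' Icc a b ∧
      μH[1] (g '' Icc a θ) ≤ ENNReal.ofReal (Λ * r) ∧
      μH[1] (g '' Icc θ b) ≤ ENNReal.ofReal (Λ * r) := by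
  obtain ⟨b, ⟨hb, hbr⟩, hbmax⟩ := exists_isGreatest_hausdorffMeasure_image_Icc_le g
    (by linarith [h.pos] : θ ≤ θ + T) (ENNReal.ofReal (Λ * r))
  obtain ⟨a, ⟨ha, har⟩, hamax⟩ := exists_isGreatest_hausdorffMeasure_image_Icc_le (fun t => g (-t))
    (by linarith [h.pos] : -θ ≤ -θ + T) (ENNReal.ofReal (Λ * r))
  rw [image_comp_neg_Icc, neg_neg] at har
  refine ⟨-a, ⟨by linarith [ha.2], by linarith [ha.1]⟩, b, hb, ?_, har, hbr⟩
  rintro _ ⟨hz, hzr⟩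
  obtain ⟨t, ht, rfl⟩ := h.exists_mem_Icc_eq θ hz
  have hshort : shorterArcLength Γ (g θ) (g t) ≤ ENNReal.ofReal (Λ * r) := by
    refine (hq.2 _ (h.mem θ) _ hz).trans (ENNReal.ofReal_le_ofReal ?_)
    have := hq.pos
    gcongr
    exact (mem_ball'.1 hzr).le
  rcases min_le_iff.1 ((h.min_le_shorterArcLength θ t).trans hshort) with hle | hle
  · exact ⟨t, ⟨by linarith [ha.1, ht.1], hbmax ⟨ht, hle⟩⟩, rfl⟩
  · have hTt : T - t ≤ a := hamax ⟨⟨by linarith [ht.2], by linarith [ht.1]⟩, by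
      rwa [image_comp_neg_Icc, neg_neg, neg_sub, ← h.image_Icc_add_add, sub_add_cancel]⟩
    exact ⟨t - T, ⟨by linarith, by linarith [hb.1, ht.2]⟩, h.periodic.sub_eq t⟩

lemma hausdorffMeasure_inter_ball_le (h : IsLoop Γ g T) (hq : IsQuasismooth Γ Λ) (x : ℂ) (r : ℝ) :
    μH[1] (Γ ∩ ball x r) ≤ ENNReal.ofReal (4 * Λ * r) := by
  rcases (Γ ∩ ball x r).eq_empty_or_nonempty with he | ⟨z, hz, hzx⟩
  · simp [he]
  obtain ⟨θ, -, rfl⟩ := h.exists_mem_Icc_eq 0 hz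
  obtain ⟨a, ha, b, hb, hsub, hleft, hright⟩ :=
    h.exists_inter_ball_subset_image_Icc hq θ (2 * r)
  have hball : ball x r ⊆ ball (g θ) (2 * r) :=
    ball_subset_ball' (by linarith [mem_ball'.1 hzx])
  have := hq.pos
  have := pos_of_mem_ball hzx
  calc μH[1] (Γ ∩ ball x r)
      ≤ μH[1] (g '' Icc a θ ∪ g '' Icc θ b) := by
        rw [← image_union, Icc_union_Icc_eq_Icc ha.2 hb.1]
        exact measure_mono ((inter_subset_inter_right _ hball).trans hsub)
    _ ≤ ENNReal.ofReal (Λ * (2 * r)) + ENNReal.ofReal (Λ * (2 * r)) :=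
        (measure_union_le _ _).trans (add_le_add hleft hright)
    _ = ENNReal.ofReal (4 * Λ * r) := by
        rw [← ENNReal.ofReal_add (by positivity) (by positivity)]
        congr 1
        ring

lemma hausdorffMeasure_ne_top (h : IsLoop Γ g T) (hq : IsQuasismooth Γ Λ) : μH[1] Γ ≠ ∞ := by
  obtain ⟨r, hr⟩ := h.isCompact.isBounded.subset_ball 0
  have := h.hausdorffMeasure_inter_ball_le hq 0 r
  rw [inter_eq_self_of_subset_left hr] at this
  exact ne_top_of_le_ne_top ENNReal.ofReal_ne_top this

lemma hausdorffMeasure_image_Icc_ne_top (h : IsLoop Γ g T) (hq : IsQuasismooth Γ Λ) (a b : ℝ) :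
    μH[1] (g '' Icc a b) ≠ ∞ :=
  measure_ne_top_of_subset (h.isSubarc_image_Icc a b).1 (h.hausdorffMeasure_ne_top hq)

lemma exists_isSubarc_at_scale (h : IsLoop Γ g T) (hq : IsQuasismooth Γ Λ) {z : ℂ} (hz : z ∈ Γ)
    {s : ℝ} (hs : 0 < s) (hsd : 4 * s < diam Γ) :
    ∃ J, IsSubarc Γ J ∧ z ∈ J ∧ J ⊆ closedBall z (8 * Λ * s) ∧
      (∃ w ∈ J, 2 * s ≤ dist z w) ∧ ENNReal.ofReal (4 * s) ≤ μH[1] J := by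
  by_cases hex : ∃ w ∈ Γ, 4 * s ≤ dist z w
  · obtain ⟨y, hy, hzy⟩ := hex
    obtain ⟨w, hw, hzw⟩ := Icc_zero_dist_subset_image_dist h.isPreconnected hz hy
      ⟨by positivity, hzy⟩
    obtain ⟨J, hJ, hzJ, hwJ, hJz⟩ :=
      hq.exists_isSubarc_subset_closedBall hz hw (dist_pos.1 (by linarith))
    refine ⟨J, hJ, hzJ, ?_, ⟨w, hwJ, by linarith⟩, ?_⟩
    · rwa [hzw, show 2 * Λ * (4 * s) = 8 * Λ * s by ring] at hJz
    · exact hzw ▸ ofReal_dist_le_hausdorffMeasure hJ.2.2 hzJ hwJ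
  · push Not at hex
    refine ⟨Γ, h.isSubarc_self, hz, fun t ht => ?_,
      exists_le_dist_of_two_mul_lt_diam z (by positivity) (by linarith), ?_⟩
    · exact mem_closedBall'.2 (by nlinarith [hex t ht, hq.1])
    · have hfin := h.hausdorffMeasure_ne_top hq
      rw [ENNReal.ofReal_le_iff_le_toReal hfin]
      refine hsd.le.trans (diam_le_of_forall_dist_le ENNReal.toReal_nonneg fun x hx y hy => ?_)
      exact (ENNReal.ofReal_le_iff_le_toReal hfin).1
        (ofReal_dist_le_hausdorffMeasure h.isPreconnected hx hy)

end IsLoop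

/-! ### `A∞` measures on subarcs -/

namespace IsLoop

variable {Γ : Set ℂ} {g : ℝ → ℂ} {T Λ : ℝ}

lemma tendsto_hausdorffMeasure_image_Icc_right (h : IsLoop Γ g T) (hq : IsQuasismooth Γ Λ)
    {a t : ℝ} (ht : t < a + T) :
    Tendsto (fun r => μH[1] (g '' Icc a r)) (𝓝[>] t) (𝓝 (μH[1] (g '' Icc a t))) := by
  have hmono (r r' : ℝ) (_ : t < r) (hr : r ≤ r') : g '' Icc a r ⊆ g '' Icc a r' :=
    image_mono (Icc_subset_Icc_right hr)
  have hInter : ⋂ r > t, g '' Icc a r = g '' Icc a t := by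
    refine Subset.antisymm (fun z hz => ?_)
      (subset_iInter₂ fun r hr => image_mono (Icc_subset_Icc_right (le_of_lt hr)))
    rw [mem_iInter₂] at hz
    obtain ⟨c, htc, hca⟩ := exists_between ht
    obtain ⟨x, hx, rfl⟩ := hz c htc
    refine ⟨x, ⟨hx.1, le_of_forall_gt_imp_ge_of_dense fun r hr => ?_⟩, rfl⟩
    obtain ⟨y, hy, hyx⟩ := hz (min r c) (lt_min hr htc)
    have hyc := hy.2.trans (min_le_right r c)
    have hlt : |y - x| < T := abs_sub_lt_iff.2 ⟨by linarith [hx.1], by linarith [hy.1, hx.2]⟩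
    exact h.eq_of_abs_sub_lt hlt hyx ▸ hy.2.trans (min_le_left r c)
  rw [← hInter]
  exact tendsto_measure_biInter_gt (fun r _ => (h.measurableSet_image_Icc a r).nullMeasurableSet)
    hmono ⟨t + 1, lt_add_one t, h.hausdorffMeasure_image_Icc_ne_top hq a _⟩

lemma exists_hausdorffMeasure_image_Icc_eq (h : IsLoop Γ g T) (hq : IsQuasismooth Γ Λ)
    {a b' b : ℝ} (hab' : a ≤ b') (hb'b : b' ≤ b) (hb : b ≤ a + T) {c : ℝ≥0∞}
    (hb'c : μH[1] (g '' Icc a b') ≤ c) (hcb : c ≤ μH[1] (g '' Icc a b)) :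
    ∃ t ∈ Icc b' b, μH[1] (g '' Icc a t) = c := by
  obtain ⟨t, ⟨ht, htc⟩, htmax⟩ :=
    exists_isGreatest_hausdorffMeasure_image_Icc_le g (hab'.trans hb'b) c
  refine ⟨t, ⟨htmax ⟨⟨hab', hb'b⟩, hb'c⟩, ht.2⟩, htc.antisymm ?_⟩
  rcases ht.2.eq_or_lt with rfl | htb
  · exact hcb
  refine ge_of_tendsto (h.tendsto_hausdorffMeasure_image_Icc_right hq (htb.trans_le hb)) ?_
  filter_upwards [Ioo_mem_nhdsGT htb] with r hr
  by_contra! hrc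
  exact hr.1.not_ge (htmax ⟨⟨ht.1.trans hr.1.le, hr.2.le⟩, hrc.le⟩)

end IsLoop

section AInfty

variable {Γ : Set ℂ} {g : ℝ → ℂ} {T Λ lam : ℝ} {ν : Measure ℂ}

lemma IsAInftyMeasure.one_le (hν : IsAInftyMeasure Γ ν lam) : 1 ≤ ENNReal.ofReal lam :=
  ENNReal.one_le_ofReal.2 hν.1

namespace IsLoop

lemma measure_image_Icc_extend_right_le (h : IsLoop Γ g T) (hq : IsQuasismooth Γ Λ)
    (hν : IsAInftyMeasure Γ ν lam) {a b' b : ℝ} (k : ℕ) (hab' : a ≤ b') (hb'b : b' ≤ b)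
    (hb : b ≤ a + T) (hlen : μH[1] (g '' Icc a b) ≤ 2 ^ k * μH[1] (g '' Icc a b')) :
    ν (g '' Icc a b) ≤ ENNReal.ofReal lam ^ (k + 1) * ν (g '' Icc a b') := by
  have hstep {c d : ℝ} (hcd : c ≤ d) (hle : μH[1] (g '' Icc a d) ≤ 2 * μH[1] (g '' Icc a c)) :
      ν (g '' Icc a d) ≤ ENNReal.ofReal lam * ν (g '' Icc a c) :=
    hν.2 _ _ (h.isSubarc_image_Icc a d) (image_mono (Icc_subset_Icc_right hcd))
      (h.measurableSet_image_Icc a c) hle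
  induction k generalizing b with
  | zero =>
    rw [zero_add, pow_one]
    exact hstep hb'b (hlen.trans (by gcongr; norm_num))
  | succ k ih =>
    -- Halving the length of the arc, while keeping its left end, costs one factor `lam`.
    rcases le_total (μH[1] (g '' Icc a b)) (2 * μH[1] (g '' Icc a b')) with hle | hge
    · refine (hstep hb'b hle).trans ?_
      gcongr
      exact le_self_pow hν.one_le (by omega)
    · obtain ⟨t, ht, htlen⟩ := h.exists_hausdorffMeasure_image_Icc_eq hq hab' hb'b hb
        (c := μH[1] (g '' Icc a b) / 2)
        (by rwa [ENNReal.le_div_iff_mul_le (by simp) (by simp), mul_comm]) ENNReal.half_le_self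
      have htb' : μH[1] (g '' Icc a t) ≤ 2 ^ k * μH[1] (g '' Icc a b') := by
        rw [htlen]
        exact ENNReal.div_le_of_le_mul (hlen.trans_eq (by ring))
      calc ν (g '' Icc a b) ≤ ENNReal.ofReal lam * ν (g '' Icc a t) :=
            hstep ht.2 (by rw [htlen, ENNReal.mul_div_cancel (by simp) (by simp)])
        _ ≤ ENNReal.ofReal lam * (ENNReal.ofReal lam ^ (k + 1) * ν (g '' Icc a b')) := by
            gcongr
            exact ih ht.1 (ht.2.trans hb) htb'
        _ = ENNReal.ofReal lam ^ (k + 1 + 1) * ν (g '' Icc a b') := by ring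

lemma measure_image_Icc_extend_le (h : IsLoop Γ g T) (hq : IsQuasismooth Γ Λ)
    (hν : IsAInftyMeasure Γ ν lam) (k : ℕ) {a a' b' b : ℝ} (ha : a ≤ a') (hab' : a' ≤ b')
    (hb : b' ≤ b) (hT : b ≤ a + T)
    (hlen : μH[1] (g '' Icc a b) ≤ 2 ^ k * μH[1] (g '' Icc a' b')) :
    ν (g '' Icc a b) ≤ ENNReal.ofReal lam ^ (2 * k + 2) * ν (g '' Icc a' b') := by
  have hright : ν (g '' Icc a' b) ≤ ENNReal.ofReal lam ^ (k + 1) * ν (g '' Icc a' b') :=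
    h.measure_image_Icc_extend_right_le hq hν k hab' hb (by linarith)
      ((measure_mono (image_mono (Icc_subset_Icc_left ha))).trans hlen)
  have hleft : ν (g '' Icc a b) ≤ ENNReal.ofReal lam ^ (k + 1) * ν (g '' Icc a' b) := by
    have := h.comp_neg.measure_image_Icc_extend_right_le hq hν k (a := -b) (b' := -a') (b := -a)
      (by linarith) (by linarith) (by linarith)
    simp only [image_comp_neg_Icc, neg_neg] at this
    exact this (hlen.trans (by gcongr))
  calc ν (g '' Icc a b)
      ≤ ENNReal.ofReal lam ^ (k + 1) * (ENNReal.ofReal lam ^ (k + 1) * ν (g '' Icc a' b')) :=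
        hleft.trans (by gcongr)
    _ = ENNReal.ofReal lam ^ (2 * k + 2) * ν (g '' Icc a' b') := by ring

lemma exists_image_Icc_supset_inter_ball (h : IsLoop Γ g T) (hq : IsQuasismooth Γ Λ) {θ t : ℝ}
    (htT : t ≤ θ + T) {R : ℝ} (hR : 0 ≤ R) :
    ∃ a ≤ θ, ∃ b ≥ t, b ≤ a + T ∧ Γ ∩ ball (g θ) R ⊆ g '' Icc a b ∧
      μH[1] (g '' Icc a b) ≤ ENNReal.ofReal (2 * Λ * R) + μH[1] (g '' Icc θ t) := by
  obtain ⟨a, ha, b, hb, hsub, hleft, hright⟩ := h.exists_inter_ball_subset_image_Icc hq θ R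
  have hbT : max b t - T ≤ θ := sub_le_iff_le_add.2 (max_le hb.2 htT)
  refine ⟨max a (max b t - T), max_le ha.2 hbT, max b t, le_max_right b t,
    sub_le_iff_le_add.1 (le_max_right _ _), ?_, ?_⟩
  · rcases le_total a (max b t - T) with hle | hle
    · rw [max_eq_right hle]
      exact inter_subset_left.trans_eq (by rw [← h.image_Icc_add (max b t - T), sub_add_cancel])
    · rw [max_eq_left hle]
      exact hsub.trans (image_mono (Icc_subset_Icc_right (le_max_left b t)))
  · have hcover : Icc (max a (max b t - T)) (max b t) ⊆ (Icc a θ ∪ Icc θ b) ∪ Icc θ t := by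
      rw [union_assoc]
      refine (Icc_subset_Icc_left (le_max_left _ _)).trans
        (Icc_subset_Icc_union_Icc.trans (union_subset_union_right _ ?_))
      rcases max_choice b t with hmax | hmax <;> simp [hmax]
    have := hq.pos
    calc μH[1] (g '' Icc (max a (max b t - T)) (max b t))
        ≤ μH[1] (g '' Icc a θ) + μH[1] (g '' Icc θ b) + μH[1] (g '' Icc θ t) := by
          refine (measure_mono (image_mono hcover)).trans ?_
          rw [image_union, image_union]
          exact (measure_union_le _ _).trans (by gcongr; exact measure_union_le _ _)
      _ ≤ ENNReal.ofReal (Λ * R) + ENNReal.ofReal (Λ * R) + μH[1] (g '' Icc θ t) := by gcongr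
      _ = ENNReal.ofReal (2 * Λ * R) + μH[1] (g '' Icc θ t) := by
          rw [← ENNReal.ofReal_add (by positivity) (by positivity)]
          congr 2
          ring

lemma measure_inter_ball_le_of_image_Icc (h : IsLoop Γ g T) (hq : IsQuasismooth Γ Λ)
    (hν : IsAInftyMeasure Γ ν lam) {θ t R : ℝ} (hθt : θ ≤ t) (htT : t ≤ θ + T) (k : ℕ)
    (hk : 2 * Λ * R ≤ (2 ^ k - 1) * dist (g θ) (g t)) (hR : 0 ≤ R) :
    ν (Γ ∩ ball (g θ) R) ≤ ENNReal.ofReal lam ^ (2 * k + 2) * ν (g '' Icc θ t) := by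
  obtain ⟨a, ha, b, hb, hbT, hsub, hlen⟩ := h.exists_image_Icc_supset_inter_ball hq htT hR
  refine (measure_mono hsub).trans
    (h.measure_image_Icc_extend_le hq hν k ha hθt hb hbT (hlen.trans ?_))
  have hk0 : (0 : ℝ) ≤ 2 ^ k - 1 := sub_nonneg.2 (one_le_pow₀ one_le_two)
  calc ENNReal.ofReal (2 * Λ * R) + μH[1] (g '' Icc θ t)
      ≤ ENNReal.ofReal (2 ^ k - 1) * ENNReal.ofReal (dist (g θ) (g t)) + μH[1] (g '' Icc θ t) := by
        rw [← ENNReal.ofReal_mul hk0]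
        gcongr
    _ ≤ ENNReal.ofReal (2 ^ k - 1) * μH[1] (g '' Icc θ t) +
          ENNReal.ofReal 1 * μH[1] (g '' Icc θ t) := by
        rw [ENNReal.ofReal_one, one_mul]
        gcongr
        exact ofReal_dist_le_hausdorffMeasure (h.isSubarc_image_Icc θ t).2.2
          (mem_image_of_mem _ (left_mem_Icc.2 hθt)) (mem_image_of_mem _ (right_mem_Icc.2 hθt))
    _ = 2 ^ k * μH[1] (g '' Icc θ t) := by
        rw [← add_mul, ← ENNReal.ofReal_add hk0 zero_le_one, sub_add_cancel,
          ENNReal.ofReal_pow zero_le_two, ENNReal.ofReal_ofNat]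

lemma measure_inter_ball_le_of_isSubarc (h : IsLoop Γ g T) (hq : IsQuasismooth Γ Λ)
    (hν : IsAInftyMeasure Γ ν lam) {J : Set ℂ} (hJ : IsSubarc Γ J) {z w : ℂ} (hz : z ∈ J)
    (hw : w ∈ J) {R : ℝ} (hR : 0 ≤ R) (k : ℕ) (hk : 2 * Λ * R ≤ (2 ^ k - 1) * dist z w) :
    ν (Γ ∩ ball z R) ≤ ENNReal.ofReal lam ^ (2 * k + 2) * ν J := by
  obtain ⟨θ, -, rfl⟩ := h.exists_mem_Icc_eq 0 (hJ.1 hz)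
  obtain ⟨t, ht, rfl⟩ := h.exists_mem_Icc_eq θ (hJ.1 hw)
  rcases h.image_Icc_subset_or hJ hz hw with hsub | hsub
  · exact (h.measure_inter_ball_le_of_image_Icc hq hν ht.1 ht.2 k hk hR).trans (by gcongr)
  · have hθ : g (- -θ) = g θ := by rw [neg_neg]
    have ht' : g (-(T - t)) = g t := by rw [neg_sub, h.periodic.sub_eq]
    have hle := h.comp_neg.measure_inter_ball_le_of_image_Icc hq hν (θ := -θ) (t := T - t)
      (by linarith [ht.2]) (by linarith [ht.1]) k (by simpa only [hθ, ht'] using hk) hR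
    rw [image_comp_neg_Icc, neg_sub, hθ, neg_neg, ← h.image_Icc_add_add, sub_add_cancel] at hle
    exact hle.trans (by gcongr)

lemma measure_inter_ball_le_of_isShorterArc (h : IsLoop Γ g T) (hq : IsQuasismooth Γ Λ)
    (hν : IsAInftyMeasure Γ ν lam) {z z' z'' : ℂ} {J : Set ℂ} {r : ℝ}
    (hr : 0 ≤ r) (hJ : IsShorterArc Γ z' z'' J)
    (hz' : shorterArcLength Γ z' z = ENNReal.ofReal (r / 2)) (hz : z ∈ J) {k : ℕ}
    (hk : 2 * Λ ^ 2 + 1 ≤ 2 ^ k) :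
    ν (Γ ∩ ball z (r / 2)) ≤ ENNReal.ofReal lam ^ (2 * k + 2) * ν J := by
  have hΛ := hq.pos
  have hdist : r / 2 ≤ Λ * dist z' z :=
    (ENNReal.ofReal_le_ofReal_iff (by positivity)).1 (hz' ▸ hq.2 z' (hJ.1.1 hJ.2.1) z (hJ.1.1 hz))
  refine h.measure_inter_ball_le_of_isSubarc hq hν hJ.1 hz hJ.2.1 (by positivity) k ?_
  calc 2 * Λ * (r / 2) ≤ 2 * Λ * (Λ * dist z' z) := by gcongr
    _ = 2 * Λ ^ 2 * dist z z' := by rw [dist_comm]; ring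
    _ ≤ (2 ^ k - 1) * dist z z' := by gcongr; linarith

lemma measure_inter_ball_two_mul_le (h : IsLoop Γ g T) (hq : IsQuasismooth Γ Λ)
    (hν : IsAInftyMeasure Γ ν lam) {k : ℕ} (hk : 16 * Λ ^ 2 + 1 ≤ 2 ^ k) {z : ℂ} (hz : z ∈ Γ)
    (r : ℝ) : ν (Γ ∩ ball z (2 * r)) ≤ ENNReal.ofReal lam ^ (2 * k + 2) * ν (Γ ∩ ball z r) := by
  rcases le_or_gt r 0 with hr | hr
  · simp [ball_eq_empty.2 (by linarith : 2 * r ≤ 0)]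
  have hΛ := hq.pos
  obtain ⟨d, rfl⟩ : ∃ d, r = 4 * Λ * d := ⟨r / (4 * Λ), by field_simp⟩
  have hd : 0 < d := pos_of_mul_pos_right hr (by positivity)
  by_cases hex : ∃ w ∈ Γ, d ≤ dist z w
  · obtain ⟨y, hy, hzy⟩ := hex
    obtain ⟨w, hw, rfl⟩ := Icc_zero_dist_subset_image_dist h.isPreconnected hz hy ⟨hd.le, hzy⟩
    obtain ⟨J, hJ, hzJ, hwJ, hJz⟩ := hq.exists_isSubarc_subset_closedBall hz hw (dist_pos.1 hd)
    refine (h.measure_inter_ball_le_of_isSubarc hq hν hJ hzJ hwJ (by positivity) k ?_).trans ?_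
    · calc 2 * Λ * (2 * (4 * Λ * dist z w)) = 16 * Λ ^ 2 * dist z w := by ring
        _ ≤ (2 ^ k - 1) * dist z w := by gcongr; linarith
    · gcongr
      exact subset_inter hJ.1 (hJz.trans (closedBall_subset_ball (by nlinarith)))
  · push Not at hex
    have hsub : Γ ∩ ball z (2 * (4 * Λ * d)) ⊆ Γ ∩ ball z (4 * Λ * d) := fun x hx =>
      ⟨hx.1, mem_ball'.2 (by nlinarith [hex x hx.1, hq.1])⟩
    exact (measure_mono hsub).trans (le_mul_of_one_le_left' (one_le_pow₀ hν.one_le))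

end IsLoop

end AInfty

/-! ### Mean densities -/

lemma le_add_dist_of_lipschitzWith_one {X : Type*} [PseudoMetricSpace X] {f : X → ℝ}
    (hf : LipschitzWith 1 f) (x y : X) : f x ≤ f y + dist x y := by
  simpa only [NNReal.coe_one, one_mul] using hf.le_add_mul x y

lemma ball_subset_setOf_dist_lt_div {X : Type*} [PseudoMetricSpace X] {ρ : X → ℝ}
    (hρ : LipschitzWith 1 ρ) {t : X} {r θ : ℝ} (hθ : 0 < θ) (hr : θ * r ≤ ρ t - r) :
    ball t r ⊆ {y | dist t y < ρ y / θ} := by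
  intro y hy
  rw [mem_ball'] at hy
  refine hy.trans_le ((le_div_iff₀' hθ).2 (hr.trans ?_))
  linarith [le_add_dist_of_lipschitzWith_one hρ t y]

lemma measure_le_two_mul_of_two_mul_measure_diff_le {X : Type*} [MeasurableSpace X]
    {μ : Measure X} {J U : Set X} (hJ : μ J ≠ ∞) (h : 2 * μ (J \ U) ≤ μ J) : μ J ≤ 2 * μ U := by
  refine (ENNReal.add_le_add_iff_right hJ).1 ?_
  calc μ J + μ J = 2 * μ J := (two_mul _).symm
    _ ≤ 2 * (μ U + μ (J \ U)) := by
        gcongr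
        exact (measure_mono (by simp)).trans (measure_union_le U (J \ U))
    _ ≤ 2 * μ U + μ J := by rw [mul_add]; gcongr

section MeanDensity

variable {X : Type*} [PseudoMetricSpace X] [MeasurableSpace X]

/-- The `N`-mass per unit length of the ball of radius `ρ y / 2` about `y`. For `N = ν` and
`ρ = rho Ω Φ (1 / n)` it is comparable to the weight `w_n` on `Γ`. -/
def meanDensity (N : Measure X) (ρ : X → ℝ) (y : X) : ℝ≥0∞ :=
  N (ball y (ρ y / 2)) / ENNReal.ofReal (ρ y)

/-- A regularized `N`-mass of `ball z r`, comparable to `∫ y in ball z r, meanDensity N ρ y`: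
below the scale `ρ z` it is linear in the radius. -/
def meanVolume (N : Measure X) (ρ : X → ℝ) (z : X) (r : ℝ) : ℝ≥0∞ :=
  ENNReal.ofReal (r / max r (ρ z)) * N (ball z (max r (ρ z)))

lemma meanVolume_ne_top (N : Measure X) [IsFiniteMeasure N] (ρ : X → ℝ) (z : X) (r : ℝ) :
    meanVolume N ρ z r ≠ ∞ :=
  ENNReal.mul_ne_top ENNReal.ofReal_ne_top (measure_ne_top N _)

lemma meanVolume_le_measure_ball (N : Measure X) (ρ : X → ℝ) (z : X) {r : ℝ} (hr : 0 < r) :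
    meanVolume N ρ z r ≤ N (ball z (max r (ρ z))) := by
  refine mul_le_of_le_one_left' (ENNReal.ofReal_le_one.2 ?_)
  exact (div_le_one (lt_max_of_lt_left hr)).2 (le_max_left r (ρ z))

lemma inv_mul_measure_ball_le_setLIntegral_inv [OpensMeasurableSpace X] {ρ : X → ℝ}
    (hρ : LipschitzWith 1 ρ) (m : Measure X) (t : X) (r : ℝ) :
    (ENNReal.ofReal (ρ t + r))⁻¹ * m (ball t r) ≤
      ∫⁻ y in ball t r, (ENNReal.ofReal (ρ y))⁻¹ ∂m := by
  rw [← setLIntegral_const]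
  refine setLIntegral_mono' measurableSet_ball fun y hy => ?_
  gcongr
  exact (le_add_dist_of_lipschitzWith_one hρ y t).trans (by gcongr; exact (mem_ball.1 hy).le)

variable [OpensMeasurableSpace X] [SecondCountableTopology X]

lemma measurableSet_dist_lt {f : X → ℝ} (hf : Measurable f) :
    MeasurableSet {q : X × X | dist q.2 q.1 < f q.1} :=
  measurableSet_lt (measurable_snd.dist measurable_fst) (hf.comp measurable_fst)

lemma measurable_measure_ball {N : Measure X} [SFinite N] {f : X → ℝ} (hf : Measurable f) :
    Measurable fun y => N (ball y (f y)) :=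
  measurable_measure_prodMk_left (measurableSet_dist_lt hf)

lemma measurable_meanDensity {N : Measure X} [SFinite N] {ρ : X → ℝ} (hρ : Measurable ρ) :
    Measurable (meanDensity N ρ) :=
  (measurable_measure_ball (hρ.div_const 2)).div hρ.ennreal_ofReal

lemma measurable_meanVolume {N : Measure X} [SFinite N] {ρ : X → ℝ} (hρ : Measurable ρ) (s : ℝ) :
    Measurable fun z => meanVolume N ρ z s :=
  (Measurable.ennreal_ofReal (by fun_prop)).mul (measurable_measure_ball (by fun_prop))

lemma lintegral_measure_ball_mul {μ N : Measure X} [SFinite μ] [SFinite N] {f : X → ℝ}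
    (hf : Measurable f) {g : X → ℝ≥0∞} (hg : Measurable g) :
    ∫⁻ y, N (ball y (f y)) * g y ∂μ = ∫⁻ t, ∫⁻ y in {y | dist t y < f y}, g y ∂μ ∂N := by
  let S : Set (X × X) := {q | dist q.2 q.1 < f q.1}
  have hS : MeasurableSet S := measurableSet_dist_lt hf
  calc ∫⁻ y, N (ball y (f y)) * g y ∂μ
      = ∫⁻ y, ∫⁻ t, S.indicator (fun q => g q.1) (y, t) ∂N ∂μ := by
        refine lintegral_congr fun y => ?_
        have : (fun t => S.indicator (fun q => g q.1) (y, t)) =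
            (ball y (f y)).indicator fun _ => g y := by
          ext t; simp [S, Set.indicator, mem_ball]
        rw [this, lintegral_indicator measurableSet_ball, setLIntegral_const, mul_comm]
    _ = ∫⁻ t, ∫⁻ y, S.indicator (fun q => g q.1) (y, t) ∂μ ∂N :=
        lintegral_lintegral_swap ((hg.comp measurable_fst).indicator hS).aemeasurable
    _ = ∫⁻ t, ∫⁻ y in {y | dist t y < f y}, g y ∂μ ∂N := by
        refine lintegral_congr fun t => ?_
        rw [← lintegral_indicator (measurableSet_lt (by fun_prop) hf)]
        exact lintegral_congr fun y => by simp [S, Set.indicator]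

end MeanDensity

/-- A measure `m` on `Γ` that is upper `a`-regular of dimension one (and lower regular with
constant `1`) and a measure `N` on `Γ` with doubling constant `b`, together with a positive
Lipschitz scale `ρ`. The model is arclength and an `A∞` measure on a quasismooth curve. -/
structure IsRegularPair {X : Type*} [PseudoMetricSpace X] [MeasurableSpace X] (Γ : Set X)
    (m N : Measure X) (ρ : X → ℝ) (a b : ℝ≥0) : Prop where
  isFiniteMeasure_left : IsFiniteMeasure m
  isFiniteMeasure_right : IsFiniteMeasure N
  ae_mem_left : ∀ᵐ y ∂m, y ∈ Γ
  ae_mem_right : ∀ᵐ y ∂N, y ∈ Γ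
  measure_ball_le : ∀ x r, m (ball x r) ≤ a * ENNReal.ofReal r
  le_measure_ball : ∀ z ∈ Γ, ∀ r, 2 * r ≤ diam Γ → ENNReal.ofReal r ≤ m (ball z r)
  measure_ball_two_mul_le : ∀ z ∈ Γ, ∀ r, N (ball z (2 * r)) ≤ b * N (ball z r)
  one_le : 1 ≤ b
  lipschitz : LipschitzWith 1 ρ
  pos : ∀ z ∈ Γ, 0 < ρ z

namespace IsRegularPair

variable {X : Type*} [PseudoMetricSpace X] [MeasurableSpace X] {Γ : Set X} {m N : Measure X}
  {ρ : X → ℝ} {a b : ℝ≥0}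

lemma le_add_dist (h : IsRegularPair Γ m N ρ a b) (x y : X) : ρ x ≤ ρ y + dist x y :=
  le_add_dist_of_lipschitzWith_one h.lipschitz x y

lemma measure_ball_le_pow (h : IsRegularPair Γ m N ρ a b) {z : X} (hz : z ∈ Γ) {r R : ℝ} (j : ℕ)
    (hR : R ≤ 2 ^ j * r) : N (ball z R) ≤ b ^ j * N (ball z r) := by
  refine (measure_mono (ball_subset_ball hR)).trans ?_
  clear hR
  induction j with
  | zero => simp
  | succ j ih =>
    rw [pow_succ', mul_assoc, pow_succ', mul_assoc]
    exact (h.measure_ball_two_mul_le z hz _).trans (by gcongr)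

lemma meanVolume_ne_zero (h : IsRegularPair Γ m N ρ a b) (hΓ : IsBounded Γ) (hN : N ≠ 0)
    {z : X} (hz : z ∈ Γ) {s : ℝ} (hs : 0 < s) : meanVolume N ρ z s ≠ 0 := by
  have hr : 0 < max s (ρ z) := lt_max_of_lt_left hs
  refine mul_ne_zero (ENNReal.ofReal_pos.2 (by positivity)).ne' fun h0 => hN ?_
  obtain ⟨j, hj⟩ := pow_unbounded_of_one_lt ((diam Γ + 1) / max s (ρ z)) one_lt_two
  have hball := h.measure_ball_le_pow hz j ((div_lt_iff₀ hr).1 hj).le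
  rw [h0, mul_zero, nonpos_iff_eq_zero] at hball
  refine Measure.measure_univ_eq_zero.1 (measure_mono_null_ae ?_ hball)
  filter_upwards [h.ae_mem_right] with y hy _
  exact mem_ball.2 ((dist_le_diam_of_mem hΓ hy hz).trans_lt (lt_add_one _))

lemma meanVolume_two_mul_le (h : IsRegularPair Γ m N ρ a b) {z : X} (hz : z ∈ Γ) {r : ℝ}
    (hr : 0 < r) : meanVolume N ρ z (2 * r) ≤ (2 * b : ℝ≥0) * meanVolume N ρ z r := by
  have hρ := h.pos z hz
  have hmax : max (2 * r) (ρ z) ≤ 2 * max r (ρ z) := by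
    rw [mul_max_of_nonneg _ _ zero_le_two]
    exact max_le_max le_rfl (le_mul_of_one_le_left hρ.le one_le_two)
  have hdiv : 2 * r / max (2 * r) (ρ z) ≤ 2 * (r / max r (ρ z)) := by
    rw [mul_div_assoc]
    gcongr
    exact le_mul_of_one_le_left hr.le one_le_two
  calc meanVolume N ρ z (2 * r)
      ≤ ENNReal.ofReal (2 * (r / max r (ρ z))) * (b ^ 1 * N (ball z (max r (ρ z)))) :=
        mul_le_mul' (ENNReal.ofReal_le_ofReal hdiv)
          (h.measure_ball_le_pow hz 1 (by rwa [pow_one]))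
    _ = (2 * b : ℝ≥0) * meanVolume N ρ z r := by
        rw [ENNReal.ofReal_mul zero_le_two, meanVolume, pow_one, ENNReal.ofReal_ofNat]
        push_cast
        ring

lemma meanVolume_two_pow_mul_le (h : IsRegularPair Γ m N ρ a b) {z : X} (hz : z ∈ Γ) {r : ℝ}
    (hr : 0 < r) (k : ℕ) :
    meanVolume N ρ z (2 ^ k * r) ≤ (2 * b : ℝ≥0) ^ k * meanVolume N ρ z r := by
  induction k with
  | zero => simp
  | succ k ih =>
    rw [pow_succ', mul_assoc, pow_succ', mul_assoc]
    exact (h.meanVolume_two_mul_le hz (by positivity)).trans (by gcongr)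

lemma max_scale_le_of_dist_le (h : IsRegularPair Γ m N ρ a b) {z t : X} {r K : ℝ}
    (hK : 0 ≤ K) (hzt : dist t z ≤ K * r) :
    max r (ρ t) ≤ (1 + K) * max r (ρ z) := by
  have hr : K * r ≤ K * max r (ρ z) := by gcongr; exact le_max_left _ _
  refine max_le ?_ ?_
  · linarith [le_max_left r (ρ z), dist_nonneg (x := t) (y := z)]
  · linarith [le_max_right r (ρ z), h.le_add_dist t z]

lemma meanVolume_le_of_dist_le (h : IsRegularPair Γ m N ρ a b) {z t : X} (hz : z ∈ Γ)
    {r K : ℝ} (hr : 0 < r) (hK : 0 ≤ K) (hzt : dist t z ≤ K * r) {j : ℕ}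
    (hj : 1 + 2 * K ≤ 2 ^ j) :
    meanVolume N ρ t r ≤ ENNReal.ofReal (1 + K) * b ^ j * meanVolume N ρ z r := by
  have hpz : 0 < max r (ρ z) := lt_max_of_lt_left hr
  have hpt : 0 < max r (ρ t) := lt_max_of_lt_left hr
  have hdiv : r / max r (ρ t) ≤ (1 + K) * (r / max r (ρ z)) := by
    rw [← mul_div_assoc, div_le_div_iff₀ hpt hpz, mul_comm (1 + K), mul_assoc]
    gcongr
    exact h.max_scale_le_of_dist_le hK (by rwa [dist_comm])
  have hmass : N (ball t (max r (ρ t))) ≤ b ^ j * N (ball z (max r (ρ z))) := by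
    refine (measure_mono (ball_subset_ball' ?_)).trans
      (h.measure_ball_le_pow hz (R := (1 + 2 * K) * max r (ρ z)) j (by gcongr))
    have hKr : K * r ≤ K * max r (ρ z) := by gcongr; exact le_max_left _ _
    linarith [h.max_scale_le_of_dist_le hK hzt]
  calc meanVolume N ρ t r
      ≤ ENNReal.ofReal ((1 + K) * (r / max r (ρ z))) * (b ^ j * N (ball z (max r (ρ z)))) :=
        mul_le_mul' (ENNReal.ofReal_le_ofReal hdiv) hmass
    _ = ENNReal.ofReal (1 + K) * b ^ j * meanVolume N ρ z r := by
        rw [ENNReal.ofReal_mul (by positivity), meanVolume]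
        ring

end IsRegularPair

namespace IsRegularPair

variable {X : Type*} [PseudoMetricSpace X] [MeasurableSpace X] {Γ : Set X} {m N : Measure X}
  {ρ : X → ℝ} {a b : ℝ≥0}

lemma meanDensity_le (h : IsRegularPair Γ m N ρ a b) {y z : X} (hy : 4 * dist y z ≤ ρ z) :
    meanDensity N ρ y ≤ N (ball z (ρ z)) / ENNReal.ofReal (3 / 4 * ρ z) := by
  have hyz := h.le_add_dist y z
  have hzy := h.le_add_dist z y
  rw [dist_comm] at hzy
  refine ENNReal.div_le_div (measure_mono (ball_subset_ball' ?_)) (ENNReal.ofReal_le_ofReal ?_)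
  · linarith
  · linarith

lemma le_meanDensity (h : IsRegularPair Γ m N ρ a b) {y z : X} (hy : 8 * dist y z ≤ ρ z) :
    N (ball z (ρ z / 4)) / ENNReal.ofReal (2 * ρ z) ≤ meanDensity N ρ y := by
  have hyz := h.le_add_dist y z
  have hzy := h.le_add_dist z y
  rw [dist_comm] at hzy
  refine ENNReal.div_le_div (measure_mono (ball_subset_ball' ?_)) (ENNReal.ofReal_le_ofReal ?_)
  · rw [dist_comm]
    linarith
  · linarith [dist_nonneg (x := y) (y := z)]

lemma setLIntegral_inv_le (h : IsRegularPair Γ m N ρ a b) {t : X} (ht : t ∈ Γ) :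
    ∫⁻ y in {y | dist t y < ρ y / 2}, (ENNReal.ofReal (ρ y))⁻¹ ∂m ≤ (3 / 2 * a : ℝ≥0) := by
  have hρt := h.pos t ht
  have hsub : {y | dist t y < ρ y / 2} ⊆ ball t (ρ t) := by
    intro y hy
    have hy' : dist t y < ρ y / 2 := hy
    rw [mem_ball']
    linarith [h.le_add_dist y t, dist_comm t y]
  calc ∫⁻ y in {y | dist t y < ρ y / 2}, (ENNReal.ofReal (ρ y))⁻¹ ∂m
      ≤ ∫⁻ _ in {y | dist t y < ρ y / 2}, (ENNReal.ofReal (2 / 3 * ρ t))⁻¹ ∂m := by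
        refine setLIntegral_mono measurable_const fun y hy => ?_
        have hy' : dist t y < ρ y / 2 := hy
        gcongr
        linarith [h.le_add_dist t y]
    _ ≤ (ENNReal.ofReal (2 / 3 * ρ t))⁻¹ * (a * ENNReal.ofReal (ρ t)) := by
        rw [setLIntegral_const]
        gcongr
        exact (measure_mono hsub).trans (h.measure_ball_le _ _)
    _ = (3 / 2 * a : ℝ≥0) := by
        rw [← ENNReal.ofReal_inv_of_pos (by positivity), ← ENNReal.ofReal_coe_nnreal (p := a),
          ← ENNReal.ofReal_coe_nnreal, ← ENNReal.ofReal_mul a.coe_nonneg,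
          ← ENNReal.ofReal_mul (by positivity)]
        push_cast
        field_simp

lemma setLIntegral_meanDensity_le_of_le_scale (h : IsRegularPair Γ m N ρ a b) {z : X}
    (hz : z ∈ Γ) {r : ℝ} (hrz : 4 * r ≤ ρ z) :
    ∫⁻ y in ball z r, meanDensity N ρ y ∂m ≤ (4 / 3 * a : ℝ≥0) * meanVolume N ρ z r := by
  have hρ := h.pos z hz
  calc ∫⁻ y in ball z r, meanDensity N ρ y ∂m
      ≤ ∫⁻ _ in ball z r, N (ball z (ρ z)) / ENNReal.ofReal (3 / 4 * ρ z) ∂m :=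
        setLIntegral_mono measurable_const fun y hy =>
          h.meanDensity_le (by linarith [mem_ball.1 hy])
    _ ≤ N (ball z (ρ z)) / ENNReal.ofReal (3 / 4 * ρ z) * (a * ENNReal.ofReal r) := by
        rw [setLIntegral_const]
        gcongr
        exact h.measure_ball_le z r
    _ = a * (ENNReal.ofReal ((3 / 4 * ρ z)⁻¹) * ENNReal.ofReal r) * N (ball z (ρ z)) := by
        rw [ENNReal.ofReal_inv_of_pos (by positivity), div_eq_mul_inv]
        ring
    _ = a * (ENNReal.ofReal (4 / 3) * ENNReal.ofReal (r / ρ z)) * N (ball z (ρ z)) := by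
        rw [← ENNReal.ofReal_mul (by positivity), ← ENNReal.ofReal_mul (by positivity)]
        congr 3
        field_simp
    _ = (4 / 3 * a : ℝ≥0) * meanVolume N ρ z r := by
        have hcast : ((4 / 3 : ℝ≥0) : ℝ≥0∞) = ENNReal.ofReal (4 / 3) := by
          rw [← ENNReal.ofReal_coe_nnreal]; rfl
        rw [meanVolume, max_eq_right (by linarith), ENNReal.coe_mul, hcast]
        ring

variable [OpensMeasurableSpace X] [SecondCountableTopology X]

lemma setLIntegral_meanDensity_le_measure_ball (h : IsRegularPair Γ m N ρ a b) {z : X} {r : ℝ}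
    (hrz : ρ z ≤ 4 * r) :
    ∫⁻ y in ball z r, meanDensity N ρ y ∂m ≤ (3 / 2 * a : ℝ≥0) * N (ball z (4 * r)) := by
  have := h.isFiniteMeasure_left
  have := h.isFiniteMeasure_right
  have hρm : Measurable ρ := h.lipschitz.continuous.measurable
  have hS (t : X) : MeasurableSet {y | dist t y < ρ y / 2} :=
    measurableSet_lt (by fun_prop) (by fun_prop)
  calc ∫⁻ y in ball z r, meanDensity N ρ y ∂m
      = ∫⁻ t, ∫⁻ y in {y | dist t y < ρ y / 2}, (ENNReal.ofReal (ρ y))⁻¹ ∂m.restrict (ball z r)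
          ∂N := lintegral_measure_ball_mul (by fun_prop) (by fun_prop)
    _ ≤ ∫⁻ t, (ball z (4 * r)).indicator (fun _ => ((3 / 2 * a : ℝ≥0) : ℝ≥0∞)) t ∂N := by
        refine lintegral_mono_ae ?_
        filter_upwards [h.ae_mem_right] with t ht
        by_cases htz : t ∈ ball z (4 * r)
        · rw [indicator_of_mem htz]
          exact (lintegral_mono' (Measure.restrict_mono_measure Measure.restrict_le_self _)
            le_rfl).trans (h.setLIntegral_inv_le ht)
        · have hdisj : {y | dist t y < ρ y / 2} ∩ ball z r = ∅ := by
            refine eq_empty_of_forall_notMem fun y ⟨hty, hyz⟩ => htz (mem_ball.2 ?_)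
            have hty' : dist t y < ρ y / 2 := hty
            linarith [mem_ball.1 hyz, h.le_add_dist y z, dist_triangle t y z,
              dist_nonneg (x := y) (y := z)]
          rw [Measure.restrict_restrict (hS t), hdisj, Measure.restrict_empty,
            lintegral_zero_measure]
          exact zero_le
    _ = (3 / 2 * a : ℝ≥0) * N (ball z (4 * r)) := by
        rw [lintegral_indicator measurableSet_ball, setLIntegral_const]

lemma setLIntegral_meanDensity_le (h : IsRegularPair Γ m N ρ a b) {z : X} (hz : z ∈ Γ) {r : ℝ}
    (hr : 0 < r) :
    ∫⁻ y in ball z r, meanDensity N ρ y ∂m ≤ (6 * a * b ^ 2 : ℝ≥0) * meanVolume N ρ z r := by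
  rcases le_total (4 * r) (ρ z) with hrz | hrz
  · refine (h.setLIntegral_meanDensity_le_of_le_scale hz hrz).trans ?_
    gcongr ?_ * _
    rw [ENNReal.coe_le_coe, ← mul_one (4 / 3 * a)]
    gcongr
    · rw [div_le_iff₀ (by positivity)]
      norm_num
    · exact one_le_pow₀ h.one_le
  have hball : N (ball z (4 * r)) ≤ b ^ 2 * N (ball z (max r (ρ z))) :=
    h.measure_ball_le_pow hz 2 (by linarith [le_max_left r (ρ z)])
  have hratio : 1 ≤ 4 * ENNReal.ofReal (r / max r (ρ z)) := by
    rw [← ENNReal.ofReal_ofNat, ← ENNReal.ofReal_mul (by positivity), ENNReal.one_le_ofReal,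
      ← mul_div_assoc, one_le_div (lt_max_of_lt_left hr)]
    exact max_le (by linarith) hrz
  calc ∫⁻ y in ball z r, meanDensity N ρ y ∂m
      ≤ (3 / 2 * a : ℝ≥0) * (1 * (b ^ 2 * N (ball z (max r (ρ z))))) := by
        rw [one_mul]
        exact (h.setLIntegral_meanDensity_le_measure_ball hrz).trans (by gcongr)
    _ ≤ (3 / 2 * a : ℝ≥0) *
          (4 * ENNReal.ofReal (r / max r (ρ z)) * (b ^ 2 * N (ball z (max r (ρ z))))) := by
        gcongr
    _ = ((3 / 2 * a * 4 * b ^ 2 : ℝ≥0) : ℝ≥0∞) * meanVolume N ρ z r := by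
        rw [meanVolume]
        push_cast
        ring
    _ = (6 * a * b ^ 2 : ℝ≥0) * meanVolume N ρ z r := by
        congr 2
        ring

lemma meanVolume_le_of_le_scale (h : IsRegularPair Γ m N ρ a b) {z : X} (hz : z ∈ Γ) {s : ℝ}
    (hsρ : s ≤ ρ z) {S : Set X} (hS : ∀ y ∈ S, 8 * dist y z ≤ ρ z)
    (hSs : ENNReal.ofReal s ≤ m S) :
    meanVolume N ρ z s ≤ (2 * b ^ 2 : ℝ≥0) * ∫⁻ y in S, meanDensity N ρ y ∂m := by
  have := h.isFiniteMeasure_right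
  have hρ := h.pos z hz
  have hball := h.measure_ball_le_pow hz 2 (R := ρ z) (r := ρ z / 4) (by linarith)
  have hratio : ENNReal.ofReal (s / ρ z) =
      2 * (ENNReal.ofReal s / ENNReal.ofReal (2 * ρ z)) := by
    rw [← ENNReal.ofReal_div_of_pos (by positivity), ← ENNReal.ofReal_ofNat,
      ← ENNReal.ofReal_mul zero_le_two]
    congr 1
    field_simp
  calc meanVolume N ρ z s
      ≤ ENNReal.ofReal (s / ρ z) * (b ^ 2 * N (ball z (ρ z / 4))) := by
        rw [meanVolume, max_eq_right hsρ]
        gcongr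
    _ = (2 * b ^ 2 : ℝ≥0) *
          (N (ball z (ρ z / 4)) / ENNReal.ofReal (2 * ρ z) * ENNReal.ofReal s) := by
        rw [hratio]
        push_cast
        simp only [div_eq_mul_inv]
        ring
    _ ≤ (2 * b ^ 2 : ℝ≥0) * (N (ball z (ρ z / 4)) / ENNReal.ofReal (2 * ρ z) * m S) := by gcongr
    _ ≤ (2 * b ^ 2 : ℝ≥0) * ∫⁻ y in S, meanDensity N ρ y ∂m := by
        rw [← setLIntegral_const]
        gcongr 1
        exact setLIntegral_mono (measurable_meanDensity h.lipschitz.continuous.measurable)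
          fun y hy => h.le_meanDensity (hS y hy)

end IsRegularPair

section DensePart

variable {X : Type*} [PseudoMetricSpace X] [MeasurableSpace X]

/-- The points `t` of `S` around which `S` has measure at least `τ * ρ t` at scale `ρ t / 4`. The
`N`-mass of this part of `S` is controlled by the integral of `meanDensity N ρ` over `S` alone. -/
def densePart (m : Measure X) (ρ : X → ℝ) (τ : ℝ) (S : Set X) : Set X :=
  {t ∈ S | ENNReal.ofReal (τ * ρ t) ≤ m.restrict S (ball t (ρ t / 4))}

lemma densePart_subset (m : Measure X) (ρ : X → ℝ) (τ : ℝ) (S : Set X) :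
    densePart m ρ τ S ⊆ S :=
  fun _ ht => ht.1

lemma restrict_measure_ball_div_le {m : Measure X} {ρ : X → ℝ} (hρ : LipschitzWith 1 ρ)
    {Y : Set X} {τ : ℝ} (hτ : 0 ≤ τ)
    (hY : ∀ t ∈ Y, m.restrict Y (ball t (ρ t / 4)) ≤ ENNReal.ofReal (τ * ρ t)) {y : X}
    (hy : 0 < ρ y) [OpensMeasurableSpace X] :
    m.restrict Y (ball y (ρ y / 16)) / ENNReal.ofReal (ρ y) ≤ ENNReal.ofReal (2 * τ) := by
  refine ENNReal.div_le_of_le_mul ?_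
  rw [← ENNReal.ofReal_mul (by positivity)]
  rcases (Y ∩ ball y (ρ y / 16)).eq_empty_or_nonempty with hempty | ⟨t, htY, hty⟩
  · rw [Measure.restrict_apply measurableSet_ball, inter_comm, hempty, measure_empty]
    exact zero_le
  · have hty' := mem_ball.1 hty
    have hρt : ρ t ≤ 2 * ρ y := by linarith [le_add_dist_of_lipschitzWith_one hρ t y]
    have hρy : ρ y / 16 + dist y t ≤ ρ t / 4 := by
      linarith [le_add_dist_of_lipschitzWith_one hρ y t, dist_comm y t]
    refine (measure_mono (ball_subset_ball' hρy)).trans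
      ((hY t htY).trans (ENNReal.ofReal_le_ofReal ?_))
    calc τ * ρ t ≤ τ * (2 * ρ y) := by gcongr
      _ = 2 * τ * ρ y := by ring

variable [OpensMeasurableSpace X] [SecondCountableTopology X]

lemma measurableSet_densePart {m : Measure X} [SFinite m] {ρ : X → ℝ} (hρ : Measurable ρ) (τ : ℝ)
    {S : Set X} (hS : MeasurableSet S) : MeasurableSet (densePart m ρ τ S) :=
  hS.inter (measurableSet_le (by fun_prop) (measurable_measure_ball (by fun_prop)))

/-- By Fubini, the integral is `∫ t, ∫ y in {y | dist t y < ρ y / θ}, 1 / ρ y ∂m ∂N`, and the inner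
domain contains `ball t (κ * ρ t)`, on which `1 / ρ` is at least `1 / (ρ t + κ * ρ t)`. -/
lemma ofReal_mul_measure_le_lintegral_measure_ball_div {m N : Measure X} [SFinite m] [SFinite N]
    {ρ : X → ℝ} (hρ : LipschitzWith 1 ρ) {θ κ c : ℝ} (hθ : 0 < θ) (hκ : 0 ≤ κ)
    (hθκ : θ * κ ≤ 1 - κ) {Y : Set X} (hY : MeasurableSet Y) (hpos : ∀ t ∈ Y, 0 < ρ t)
    (hm : ∀ t ∈ Y, ENNReal.ofReal (c * (ρ t + κ * ρ t)) ≤ m (ball t (κ * ρ t))) :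
    ENNReal.ofReal c * N Y ≤ ∫⁻ y, N (ball y (ρ y / θ)) / ENNReal.ofReal (ρ y) ∂m := by
  have hρm : Measurable ρ := hρ.continuous.measurable
  simp only [div_eq_mul_inv (N _)]
  rw [lintegral_measure_ball_mul (by fun_prop) (by fun_prop), ← setLIntegral_const]
  refine (setLIntegral_mono' hY fun t ht => ?_).trans (setLIntegral_le_lintegral Y _)
  have hρt := hpos t ht
  have hball : ball t (κ * ρ t) ⊆ {y | dist t y < ρ y / θ} := by
    refine ball_subset_setOf_dist_lt_div hρ hθ ?_
    calc θ * (κ * ρ t) = θ * κ * ρ t := (mul_assoc _ _ _).symm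
      _ ≤ (1 - κ) * ρ t := by gcongr
      _ = ρ t - κ * ρ t := by ring
  have hρκ : 0 < ρ t + κ * ρ t := by positivity
  calc ENNReal.ofReal c
      = (ENNReal.ofReal (ρ t + κ * ρ t))⁻¹ * ENNReal.ofReal (c * (ρ t + κ * ρ t)) := by
        rw [ENNReal.ofReal_mul' hρκ.le, mul_left_comm, ENNReal.inv_mul_cancel
          (ENNReal.ofReal_pos.2 hρκ).ne' ENNReal.ofReal_ne_top, mul_one]
    _ ≤ (ENNReal.ofReal (ρ t + κ * ρ t))⁻¹ * m (ball t (κ * ρ t)) := by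
        gcongr
        exact hm t ht
    _ ≤ ∫⁻ y in {y | dist t y < ρ y / θ}, (ENNReal.ofReal (ρ y))⁻¹ ∂m :=
        (inv_mul_measure_ball_le_setLIntegral_inv hρ m t _).trans (lintegral_mono_set hball)

lemma ofReal_mul_measure_densePart_le {m N : Measure X} [SFinite m] [SFinite N] {ρ : X → ℝ}
    (hρ : LipschitzWith 1 ρ) (τ : ℝ) {S : Set X} (hS : MeasurableSet S)
    (hpos : ∀ t ∈ S, 0 < ρ t) :
    ENNReal.ofReal (4 / 5 * τ) * N (densePart m ρ τ S) ≤ ∫⁻ y in S, meanDensity N ρ y ∂m := by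
  refine ofReal_mul_measure_le_lintegral_measure_ball_div hρ (κ := 1 / 4) two_pos (by norm_num)
    (by norm_num) (measurableSet_densePart hρ.continuous.measurable τ hS)
    (fun t ht => hpos t ht.1) fun t ht => ?_
  convert ht.2 using 2 <;> ring_nf

end DensePart

namespace IsRegularPair

variable {X : Type*} [PseudoMetricSpace X] [MeasurableSpace X] [OpensMeasurableSpace X]
  [SecondCountableTopology X] {Γ : Set X} {m N : Measure X} {ρ : X → ℝ} {a b : ℝ≥0}

lemma ofReal_mul_measure_diff_densePart_le (h : IsRegularPair Γ m N ρ a b) {κ τ : ℝ}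
    (hκ : 0 ≤ κ) (hκ' : 17 * κ ≤ 1) (hτ : 0 ≤ τ) {S B : Set X} (hS : MeasurableSet S)
    (hSΓ : S ⊆ Γ) (hdiam : ∀ t ∈ S, 2 * (κ * ρ t) ≤ diam Γ)
    (hB : ∀ t ∈ S, ball t (κ * ρ t) ⊆ B) :
    ENNReal.ofReal (κ / 2) * m (S \ densePart m ρ τ S) ≤ ENNReal.ofReal (2 * τ) * m B := by
  have := h.isFiniteMeasure_left
  set Y := S \ densePart m ρ τ S
  have hY : MeasurableSet Y :=
    hS.diff (measurableSet_densePart h.lipschitz.continuous.measurable τ hS)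
  have hsparse : ∀ t ∈ Y, m.restrict Y (ball t (ρ t / 4)) ≤ ENNReal.ofReal (τ * ρ t) :=
    fun t ht => (Measure.restrict_mono_set m sdiff_subset _).trans
      (not_le.1 fun hle => ht.2 ⟨ht.1, hle⟩).le
  calc ENNReal.ofReal (κ / 2) * m Y = ENNReal.ofReal (κ / 2) * m.restrict Y Y := by
        rw [Measure.restrict_apply_self]
    _ ≤ ∫⁻ y in B, m.restrict Y (ball y (ρ y / 16)) / ENNReal.ofReal (ρ y) ∂m := by
        refine ofReal_mul_measure_le_lintegral_measure_ball_div h.lipschitz (κ := κ) (by norm_num)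
          hκ (by linarith) hY (fun t ht => h.pos t (hSΓ ht.1)) fun t ht => ?_
        rw [Measure.restrict_apply measurableSet_ball, inter_eq_left.2 (hB t ht.1)]
        refine le_trans (ENNReal.ofReal_le_ofReal ?_)
          (h.le_measure_ball t (hSΓ ht.1) _ (hdiam t ht.1))
        have hρt := h.pos t (hSΓ ht.1)
        calc κ / 2 * (ρ t + κ * ρ t) ≤ κ / 2 * (ρ t + 1 * ρ t) := by gcongr; linarith
          _ = κ * ρ t := by ring
    _ ≤ ∫⁻ _ in B, ENNReal.ofReal (2 * τ) ∂m := by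
        refine lintegral_mono_ae ?_
        filter_upwards [ae_restrict_of_ae h.ae_mem_left] with y hy
        exact restrict_measure_ball_div_le h.lipschitz hτ hsparse (h.pos y hy)
    _ = ENNReal.ofReal (2 * τ) * m B := setLIntegral_const B _

lemma measure_diff_densePart_le (h : IsRegularPair Γ m N ρ a b) (ha : 0 < a) {z : X}
    {s C K : ℝ} (hs : 0 < s) (hC : 0 < C) (hK : 0 ≤ K) (hsd : 2 * s ≤ diam Γ) {S : Set X}
    (hS : MeasurableSet S) (hSΓ : S ⊆ Γ) (hSz : ∀ t ∈ S, dist t z ≤ C * s)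
    (hSρ : ∀ t ∈ S, ρ t ≤ K * s) :
    m (S \ densePart m ρ (1 / (32 * (20 + K) * a * (C + K))) S) ≤ ENNReal.ofReal (s / 8) := by
  set κ : ℝ := 1 / (20 + K) with hκ
  have : (0 : ℝ) < a := ha
  have hκ0 : 0 < κ := by positivity
  have hκK : κ * K ≤ 1 := by
    rw [hκ, one_div, inv_mul_le_one₀ (by positivity)]
    linarith
  have hκ17 : 17 * κ ≤ 1 := by
    rw [hκ, mul_one_div, div_le_one (by positivity)]
    linarith
  have hκρ : ∀ t ∈ S, κ * ρ t ≤ s := fun t ht => by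
    calc κ * ρ t ≤ κ * (K * s) := by gcongr; exact hSρ t ht
      _ = κ * K * s := (mul_assoc _ _ _).symm
      _ ≤ s := mul_le_of_le_one_left hs.le hκK
  have hball : ∀ t ∈ S, ball t (κ * ρ t) ⊆ ball z ((C + K) * s) := fun t ht => by
    have hκρK : κ * ρ t ≤ K * s :=
      (mul_le_of_le_one_left (h.pos t (hSΓ ht)).le (by linarith)).trans (hSρ t ht)
    exact ball_subset_ball' (by linarith [hSz t ht])
  have hκ2 : 0 < κ / 2 := half_pos hκ0
  refine (ENNReal.mul_le_mul_iff_right (ENNReal.ofReal_pos.2 hκ2).ne' ENNReal.ofReal_ne_top).1 ?_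
  refine (h.ofReal_mul_measure_diff_densePart_le hκ0.le hκ17 (by positivity) hS hSΓ
    (fun t ht => by linarith [hκρ t ht]) hball).trans ?_
  refine (mul_le_mul_right (h.measure_ball_le z _) _).trans_eq ?_
  rw [← ENNReal.ofReal_coe_nnreal, ← ENNReal.ofReal_mul a.coe_nonneg,
    ← ENNReal.ofReal_mul (by positivity), ← ENNReal.ofReal_mul (by positivity)]
  congr 1
  rw [hκ]
  field_simp
  norm_num

end IsRegularPair

/-! ### Decaying kernels and Schur's test -/

section Decay

variable {X : Type*} [PseudoMetricSpace X] {M : ℕ} {s : ℝ}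

/-- The kernel `(s / (s + dist x y)) ^ M`, which localizes estimates to the scale `s`. -/
def decay (M : ℕ) (s : ℝ) (x y : X) : ℝ := (s / (s + dist x y)) ^ M

lemma decay_pos (hs : 0 < s) (x y : X) : 0 < decay M s x y := pow_pos (by positivity) M

lemma decay_self (hs : 0 < s) (x : X) : decay M s x x = 1 := by
  rw [decay, dist_self, add_zero, div_self hs.ne', one_pow]

lemma continuous_decay (hs : 0 < s) : Continuous fun q : X × X => decay M s q.1 q.2 := by
  unfold decay
  fun_prop (disch := intro; positivity)

lemma decay_comm (M : ℕ) (s : ℝ) (x y : X) : decay M s x y = decay M s y x := by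
  rw [decay, decay, dist_comm]

lemma decay_eq_exp (hs : 0 < s) (x y : X) :
    decay M s x y = Real.exp (M * (Real.log s - Real.log (s + dist x y))) := by
  have hpos : 0 < s + dist x y := by positivity
  rw [decay, ← Real.log_div hs.ne' hpos.ne', Real.exp_nat_mul, Real.exp_log (div_pos hs hpos)]

lemma tendsto_decay_cobounded (hM : M ≠ 0) (s : ℝ) (x : X) :
    Tendsto (decay M s x) (cobounded X) (𝓝 0) := by
  have hdist : Tendsto (fun y => s + dist x y) (cobounded X) atTop :=
    tendsto_atTop_add_const_left _ s (tendsto_dist_left_cobounded_atTop x)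
  have hpow := (hdist.const_div_atTop s).pow M
  rwa [zero_pow hM] at hpow

lemma decay_le_mul_decay (hs : 0 < s) {K : ℝ} {z t : X} (hzt : dist t z ≤ K * s) (x : X) :
    decay M s x z ≤ (1 + K) ^ M * decay M s x t := by
  have hK : 0 ≤ K := nonneg_of_mul_nonneg_left (dist_nonneg.trans hzt) hs
  have htriangle : s + dist x t ≤ (1 + K) * (s + dist x z) := by
    linarith [dist_triangle_right x t z, mul_nonneg hK (dist_nonneg (x := x) (y := z))]
  rw [decay, decay, ← mul_pow]
  gcongr
  rw [← mul_div_assoc, div_le_div_iff₀ (by positivity) (by positivity)]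
  linarith [mul_le_mul_of_nonneg_left htriangle hs.le]

lemma decay_mul_le (hs : 0 < s) (x y z : X) :
    decay M s x y * decay M s y z ≤ decay M s x z := by
  rw [decay, decay, decay, ← mul_pow]
  gcongr
  rw [div_mul_div_comm, div_le_div_iff₀ (by positivity) (by positivity)]
  have hprod : 0 ≤ dist x y * dist y z := by positivity
  have htriangle := mul_le_mul_of_nonneg_left (dist_triangle x y z) hs.le
  calc s * s * (s + dist x z) = s * (s * s + s * dist x z) := by ring
    _ ≤ s * ((s + dist x y) * (s + dist y z)) := by gcongr; linarith

lemma decay_rpow_le (hs : 0 < s) {N : ℕ} {p : ℝ} (hp : M ≤ N * p) (x y : X) :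
    decay N s x y ^ p ≤ decay M s x y := by
  have hbase : 0 < s / (s + dist x y) := by positivity
  rw [decay, decay, ← Real.rpow_natCast, ← Real.rpow_natCast, ← Real.rpow_mul hbase.le]
  exact Real.rpow_le_rpow_of_exponent_ge hbase
    (div_le_one_of_le₀ (le_add_of_nonneg_right dist_nonneg) (by positivity)) hp

lemma exists_forall_decay_mul_le {K : Set X} (hK : IsCompact K) {f : X → ℝ}
    (hf : ContinuousOn f K) (hf₀ : ∀ x ∈ K, 0 ≤ f x) (hs : 0 < s) {x : X} (hx : x ∈ K) :
    ∃ z ∈ K, f x ≤ decay M s x z * f z ∧ ∀ t ∈ K, decay M s z t * f t ≤ f z := by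
  obtain ⟨z, hz, hmax⟩ := hK.exists_isMaxOn ⟨x, hx⟩
    (((continuous_decay (M := M) hs).comp (Continuous.prodMk_right x)).continuousOn.mul hf)
  refine ⟨z, hz, by simpa [decay_self hs] using hmax hx, fun t ht => ?_⟩
  refine le_of_mul_le_mul_left ?_ (decay_pos (M := M) hs x z)
  calc decay M s x z * (decay M s z t * f t) = decay M s x z * decay M s z t * f t := by ring
    _ ≤ decay M s x t * f t := mul_le_mul_of_nonneg_right (decay_mul_le hs x z t) (hf₀ t ht)
    _ ≤ decay M s x z * f z := hmax ht

lemma exists_decay_le_inv_pow (hs : 0 < s) (x y : X) :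
    ∃ k : ℕ, x ∈ ball y (2 ^ (k + 1) * s) ∧ decay M s x y ≤ ((2 ^ k)⁻¹) ^ M := by
  obtain ⟨k, hk, hk'⟩ := exists_nat_pow_near
    ((one_le_div hs).2 (le_add_of_nonneg_right dist_nonneg) : 1 ≤ (s + dist x y) / s) one_lt_two
  refine ⟨k, mem_ball.2 ?_, pow_le_pow_left₀ (by positivity) ?_ M⟩
  · linarith [(div_lt_iff₀ hs).1 hk']
  · rw [← inv_div]
    gcongr

lemma lintegral_decay_mul_le [MeasurableSpace X] [OpensMeasurableSpace X] {m : Measure X}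
    {u : X → ℝ≥0∞} (hu : Measurable u) (hs : 0 < s) {t : X} {C : ℝ≥0∞} {q : ℝ≥0}
    (hq : 2 * q ≤ 2 ^ M) (hC : ∀ k : ℕ, ∫⁻ x in ball t (2 ^ (k + 1) * s), u x ∂m ≤ C * q ^ k) :
    ∫⁻ x, ENNReal.ofReal (decay M s x t) * u x ∂m ≤ 2 * C := by
  have hgeom (k : ℕ) : ENNReal.ofReal (((2 ^ k)⁻¹) ^ M) * (C * q ^ k) ≤ C * 2⁻¹ ^ k := by
    have hqM : ((2 ^ M)⁻¹ * q : ℝ≥0) ≤ 2⁻¹ := by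
      rw [inv_mul_le_iff₀ (by positivity), ← div_eq_mul_inv, le_div_iff₀ two_pos]
      linarith
    calc ENNReal.ofReal (((2 ^ k)⁻¹) ^ M) * (C * q ^ k)
        = C * (((2 ^ M)⁻¹ * q : ℝ≥0) : ℝ≥0∞) ^ k := by
          rw [mul_left_comm, inv_pow, ← pow_mul, mul_comm k, pow_mul, ← inv_pow, ENNReal.ofReal,
            Real.toNNReal_pow (by positivity), Real.toNNReal_inv, Real.toNNReal_pow two_pos.le,
            Real.toNNReal_ofNat, ENNReal.coe_mul, mul_pow, ENNReal.coe_pow]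
      _ ≤ C * ((2⁻¹ : ℝ≥0) : ℝ≥0∞) ^ k := by gcongr
      _ = C * 2⁻¹ ^ k := by rw [ENNReal.coe_inv two_ne_zero, ENNReal.coe_ofNat]
  calc ∫⁻ x, ENNReal.ofReal (decay M s x t) * u x ∂m
      ≤ ∫⁻ x, ∑' k : ℕ, ENNReal.ofReal (((2 ^ k)⁻¹) ^ M) *
          (ball t (2 ^ (k + 1) * s)).indicator u x ∂m := by
        refine lintegral_mono fun x => ?_
        obtain ⟨k, hk, hle⟩ := exists_decay_le_inv_pow (M := M) hs x t
        refine le_trans ?_ (ENNReal.le_tsum k)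
        rw [indicator_of_mem hk]
        gcongr
    _ = ∑' k : ℕ, ENNReal.ofReal (((2 ^ k)⁻¹) ^ M) *
          ∫⁻ x in ball t (2 ^ (k + 1) * s), u x ∂m := by
        have hmeas (k : ℕ) : Measurable ((ball t (2 ^ (k + 1) * s)).indicator u) :=
          hu.indicator measurableSet_ball
        rw [lintegral_tsum fun k => ((hmeas k).const_mul _).aemeasurable]
        simp only [lintegral_const_mul _ (hmeas _), lintegral_indicator measurableSet_ball]
    _ ≤ ∑' k : ℕ, C * 2⁻¹ ^ k :=
        ENNReal.tsum_le_tsum fun k => (mul_le_mul_right (hC k) _).trans (hgeom k)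
    _ = 2 * C := by
        rw [ENNReal.tsum_mul_left, ENNReal.tsum_geometric, ENNReal.one_sub_inv_two, inv_inv,
          mul_comm]

end Decay

/-- Schur's test for the kernel `F t * D x t` with `F = f * u / V`: by Tonelli, integrating it
against `u` in the variable `x` first costs at most `K * V t`. -/
lemma lintegral_mul_le_of_le_kernel {X : Type*} [MeasurableSpace X] {m : Measure X} [SFinite m]
    {Γ A : Set X} (hm : ∀ᵐ y ∂m, y ∈ Γ) {f u V : X → ℝ≥0∞} {D : X → X → ℝ≥0∞}
    (hf : Measurable f) (hu : Measurable u) (hV : Measurable V)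
    (hD : Measurable (Function.uncurry D)) {K C : ℝ≥0∞} (hC : C ≠ ∞)
    (hK : ∀ t ∈ Γ, ∫⁻ x, D x t * u x ∂m ≤ K * V t)
    (hle : ∀ x ∈ Γ, f x ≤ C * ∫⁻ t in A, f t * u t * (V t)⁻¹ * D x t ∂m) :
    ∫⁻ x, f x * u x ∂m ≤ C * K * ∫⁻ t in A, f t * u t ∂m := by
  set F : X → ℝ≥0∞ := fun t => f t * u t * (V t)⁻¹ with hF
  have hFm : Measurable F := by fun_prop
  have hFD (x : X) : Measurable fun t => F t * D x t := hFm.mul (hD.comp measurable_prodMk_left)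
  have hDu (t : X) : Measurable fun x => D x t * u x := (hD.comp measurable_prodMk_right).mul hu
  have hfu : Measurable fun t => f t * u t := hf.mul hu
  calc ∫⁻ x, f x * u x ∂m
      ≤ ∫⁻ x, C * ∫⁻ t in A, F t * D x t * u x ∂m ∂m := by
        refine lintegral_mono_ae ?_
        filter_upwards [hm] with x hx
        rw [lintegral_mul_const _ (hFD x), ← mul_assoc]
        gcongr
        exact hle x hx
    _ = C * ∫⁻ t in A, ∫⁻ x, F t * D x t * u x ∂m ∂m := by
        rw [lintegral_const_mul' _ _ hC, lintegral_lintegral_swap]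
        exact (((hFm.comp measurable_snd).mul hD).mul (hu.comp measurable_fst)).aemeasurable
    _ ≤ C * ∫⁻ t in A, K * (f t * u t) ∂m := by
        gcongr 1
        refine lintegral_mono_ae ?_
        filter_upwards [ae_restrict_of_ae hm] with t ht
        simp_rw [mul_assoc (F t)]
        rw [lintegral_const_mul _ (hDu t)]
        calc F t * ∫⁻ x, D x t * u x ∂m ≤ F t * (K * V t) := by gcongr; exact hK t ht
          _ = K * (f t * u t) * ((V t)⁻¹ * V t) := by rw [hF]; ring
          _ ≤ K * (f t * u t) := mul_le_of_le_one_right zero_le (ENNReal.inv_mul_le_one _)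
    _ = C * K * ∫⁻ t in A, f t * u t ∂m := by
        rw [lintegral_const_mul _ hfu, mul_assoc]

namespace IsRegularPair

variable {X : Type*} [PseudoMetricSpace X] [MeasurableSpace X] [OpensMeasurableSpace X]
  [SecondCountableTopology X] {Γ : Set X} {m N : Measure X} {ρ : X → ℝ} {a b : ℝ≥0}

lemma lintegral_decay_mul_meanDensity_le (h : IsRegularPair Γ m N ρ a b) {M : ℕ}
    (hM : 4 * b ≤ 2 ^ M) {s : ℝ} (hs : 0 < s) {t : X} (ht : t ∈ Γ) :
    ∫⁻ x, ENNReal.ofReal (decay M s x t) * meanDensity N ρ x ∂m ≤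
      (24 * a * b ^ 3 : ℝ≥0) * meanVolume N ρ t s := by
  have := h.isFiniteMeasure_right
  calc ∫⁻ x, ENNReal.ofReal (decay M s x t) * meanDensity N ρ x ∂m
      ≤ 2 * ((12 * a * b ^ 3 : ℝ≥0) * meanVolume N ρ t s) := by
        refine lintegral_decay_mul_le (measurable_meanDensity h.lipschitz.continuous.measurable) hs
          (by linarith : 2 * (2 * b) ≤ 2 ^ M) fun k => ?_
        calc ∫⁻ x in ball t (2 ^ (k + 1) * s), meanDensity N ρ x ∂m
            ≤ (6 * a * b ^ 2 : ℝ≥0) * meanVolume N ρ t (2 ^ (k + 1) * s) :=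
              h.setLIntegral_meanDensity_le ht (by positivity)
          _ ≤ (6 * a * b ^ 2 : ℝ≥0) * ((2 * b : ℝ≥0) ^ (k + 1) * meanVolume N ρ t s) := by
              gcongr
              exact h.meanVolume_two_pow_mul_le ht hs (k + 1)
          _ = (12 * a * b ^ 3 : ℝ≥0) * meanVolume N ρ t s * (2 * b : ℝ≥0) ^ k := by
              push_cast
              ring
    _ = (24 * a * b ^ 3 : ℝ≥0) * meanVolume N ρ t s := by
        push_cast
        ring

lemma le_mul_setLIntegral_decay (h : IsRegularPair Γ m N ρ a b) (hΓ : IsBounded Γ) (hN : N ≠ 0)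
    {M : ℕ} {s : ℝ} (hs : 0 < s) {K : ℝ} (hK : 0 ≤ K) {j : ℕ} (hj : 1 + 2 * K ≤ 2 ^ j)
    {f : X → ℝ≥0∞} {S : Set X} (hS : MeasurableSet S) {C E : ℝ≥0} {x z : X} (hz : z ∈ Γ)
    (hxz : f x ≤ ENNReal.ofReal (decay M s x z) * f z)
    (hVS : meanVolume N ρ z s ≤ C * ∫⁻ t in S, meanDensity N ρ t ∂m)
    (hSz : ∀ t ∈ S, t ∈ Γ ∧ dist t z ≤ K * s ∧ f z ≤ E * f t) :
    f x ≤ C * E * (ENNReal.ofReal (1 + K) ^ (M + 1) * b ^ j) *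
      ∫⁻ t in S, f t * meanDensity N ρ t * (meanVolume N ρ t s)⁻¹ *
        ENNReal.ofReal (decay M s x t) ∂m := by
  have := h.isFiniteMeasure_right
  set V : X → ℝ≥0∞ := fun t => meanVolume N ρ t s
  set D : X → ℝ≥0∞ := fun t => ENNReal.ofReal (decay M s x t)
  have hV_ne_zero {t : X} (ht : t ∈ Γ) : V t ≠ 0 := h.meanVolume_ne_zero hΓ hN ht hs
  have hV_ne_top (t : X) : V t ≠ ∞ := meanVolume_ne_top N ρ t s
  set c : ℝ≥0∞ := ENNReal.ofReal (1 + K) ^ (M + 1) * b ^ j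
  have hfS : ∀ t ∈ S, f x * (V z)⁻¹ ≤ E * c * (f t * (V t)⁻¹ * D t) := fun t ht => by
    obtain ⟨htΓ, htz, hzt⟩ := hSz t ht
    have hD : ENNReal.ofReal (decay M s x z) ≤ ENNReal.ofReal (1 + K) ^ M * D t := by
      rw [← ENNReal.ofReal_pow (by positivity), ← ENNReal.ofReal_mul (by positivity)]
      exact ENNReal.ofReal_le_ofReal (decay_le_mul_decay hs htz x)
    have hV : (V z)⁻¹ ≤ ENNReal.ofReal (1 + K) * b ^ j * (V t)⁻¹ := by
      rw [← div_eq_mul_inv, ENNReal.le_div_iff_mul_le (.inl (hV_ne_zero htΓ))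
        (.inl (hV_ne_top t)), mul_comm, ← div_eq_mul_inv]
      exact ENNReal.div_le_of_le_mul (h.meanVolume_le_of_dist_le hz hs hK htz hj)
    calc f x * (V z)⁻¹
        ≤ ENNReal.ofReal (1 + K) ^ M * D t * (E * f t) *
            (ENNReal.ofReal (1 + K) * b ^ j * (V t)⁻¹) := by
          gcongr
          exact hxz.trans (by gcongr)
      _ = E * c * (f t * (V t)⁻¹ * D t) := by ring
  calc f x = f x * (V z * (V z)⁻¹) := by
        rw [ENNReal.mul_inv_cancel (hV_ne_zero hz) (hV_ne_top z), mul_one]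
    _ ≤ f x * ((C * ∫⁻ t in S, meanDensity N ρ t ∂m) * (V z)⁻¹) := by gcongr
    _ = C * ∫⁻ t in S, f x * (V z)⁻¹ * meanDensity N ρ t ∂m := by
        rw [lintegral_const_mul _ (measurable_meanDensity h.lipschitz.continuous.measurable)]
        ring
    _ ≤ C * ∫⁻ t in S, E * c * (f t * meanDensity N ρ t * (V t)⁻¹ * D t) ∂m := by
        gcongr 1
        refine setLIntegral_mono' hS fun t ht => (mul_le_mul_left (hfS t ht) _).trans_eq ?_
        ring
    _ = C * E * c * ∫⁻ t in S, f t * meanDensity N ρ t * (V t)⁻¹ * D t ∂m := by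
        rw [lintegral_const_mul' _ _ (by finiteness)]
        ring

/-- Schur's test for the kernel `decay M s x t / meanVolume N ρ t s`. -/
lemma lintegral_mul_meanDensity_le_setLIntegral (h : IsRegularPair Γ m N ρ a b)
    (hΓ : IsBounded Γ) {M : ℕ} (hM : 4 * b ≤ 2 ^ M) {s : ℝ} (hs : 0 < s) {K : ℝ} (hK : 0 ≤ K)
    {j : ℕ} (hj : 1 + 2 * K ≤ 2 ^ j) {f : X → ℝ≥0∞} (hf : Measurable f) {A : Set X} {C E : ℝ≥0}
    (hloc : ∀ x ∈ Γ, ∃ z ∈ Γ, ∃ S ⊆ A, MeasurableSet S ∧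
      f x ≤ ENNReal.ofReal (decay M s x z) * f z ∧
      meanVolume N ρ z s ≤ C * ∫⁻ t in S, meanDensity N ρ t ∂m ∧
      ∀ t ∈ S, t ∈ Γ ∧ dist t z ≤ K * s ∧ f z ≤ E * f t) :
    ∫⁻ x, f x * meanDensity N ρ x ∂m ≤
      C * E * (ENNReal.ofReal (1 + K) ^ (M + 1) * b ^ j) * (24 * a * b ^ 3 : ℝ≥0) *
        ∫⁻ t in A, f t * meanDensity N ρ t ∂m := by
  rcases eq_or_ne N 0 with rfl | hN
  · simp [meanDensity]
  have := h.isFiniteMeasure_left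
  have := h.isFiniteMeasure_right
  have hρ : Measurable ρ := h.lipschitz.continuous.measurable
  refine lintegral_mul_le_of_le_kernel h.ae_mem_left hf (measurable_meanDensity hρ)
    (measurable_meanVolume hρ s) (continuous_decay (M := M) hs).measurable.ennreal_ofReal
    (by finiteness) (fun t ht => h.lintegral_decay_mul_meanDensity_le hM hs ht) fun x hx => ?_
  obtain ⟨z, hz, S, hSA, hS, hxz, hVS, hSz⟩ := hloc x hx
  exact (h.le_mul_setLIntegral_decay hΓ hN hs hK hj hS hz hxz hVS hSz).trans
    (mul_le_mul_right (lintegral_mono_set hSA) _)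

end IsRegularPair

lemma measure_diff_inter_diff_le {X : Type*} [MeasurableSpace X] {μ : Measure X}
    {A B J Γ : Set X} (hJ : J ⊆ Γ) (hA : MeasurableSet A) (hAΓ : A ⊆ Γ) (hΓ : μ Γ ≠ ∞)
    {ε η : ℝ≥0∞} (hε : μ Γ ≤ μ A + ε) (hη : μ B ≤ η) : μ (J \ ((A ∩ J) \ B)) ≤ ε + η := by
  have hsub : J \ ((A ∩ J) \ B) ⊆ (Γ \ A) ∪ B := fun t ⟨htJ, ht⟩ => by
    by_cases htA : t ∈ A
    · exact .inr (not_not.1 fun htB => ht ⟨⟨htA, htJ⟩, htB⟩)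
    · exact .inl ⟨hJ htJ, htA⟩
  have hΓA : μ (Γ \ A) ≤ ε := by
    rw [measure_sdiff hAΓ hA.nullMeasurableSet (measure_ne_top_of_subset hAΓ hΓ)]
    exact tsub_le_iff_left.2 hε
  exact (measure_mono hsub).trans ((measure_union_le _ _).trans (add_le_add hΓA hη))

namespace IsLoop

variable {Γ : Set ℂ} {g : ℝ → ℂ} {T Λ lam : ℝ} {ν : Measure ℂ}

lemma isRegularPair [IsFiniteMeasure ν] (h : IsLoop Γ g T) (hq : IsQuasismooth Γ Λ)
    (hν : IsAInftyMeasure Γ ν lam) {k : ℕ} (hk : 16 * Λ ^ 2 + 1 ≤ 2 ^ k) {ρ : ℂ → ℝ}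
    (hρ : LipschitzWith 1 ρ) (hpos : ∀ z ∈ Γ, 0 < ρ z) :
    IsRegularPair Γ (μH[1].restrict Γ) (ν.restrict Γ) ρ (4 * Λ).toNNReal
      (lam.toNNReal ^ (2 * k + 2)) where
  isFiniteMeasure_left := isFiniteMeasure_restrict.2 (h.hausdorffMeasure_ne_top hq)
  isFiniteMeasure_right := inferInstance
  ae_mem_left := ae_restrict_mem h.isCompact.measurableSet
  ae_mem_right := ae_restrict_mem h.isCompact.measurableSet
  measure_ball_le x r := by
    have hΛ := hq.pos
    rw [Measure.restrict_apply measurableSet_ball, inter_comm]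
    exact (h.hausdorffMeasure_inter_ball_le hq x r).trans_eq (ENNReal.ofReal_mul (by positivity))
  le_measure_ball z hz r hr := by
    rw [Measure.restrict_apply measurableSet_ball, inter_comm]
    exact ofReal_le_hausdorffMeasure_inter_ball h.isPreconnected hz hr
  measure_ball_two_mul_le z hz r := by
    simp only [Measure.restrict_apply measurableSet_ball, inter_comm _ Γ, ENNReal.coe_pow]
    exact h.measure_inter_ball_two_mul_le hq hν hk hz r
  one_le := one_le_pow₀ (Real.one_le_toNNReal.2 hν.1)
  lipschitz := hρ
  pos := hpos

lemma hausdorffMeasure_le_two_mul_densePart (h : IsLoop Γ g T) (hq : IsQuasismooth Γ Λ)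
    {ρ : ℂ → ℝ} {a b : ℝ≥0}
    (hr : IsRegularPair Γ (μH[1].restrict Γ) (ν.restrict Γ) ρ a b) (ha : 0 < a) {s : ℝ}
    (hs : 0 < s) (hsd : 2 * s ≤ diam Γ) {J : Set ℂ} (hJ : IsSubarc Γ J) {z : ℂ}
    (hJz : J ⊆ closedBall z (8 * Λ * s)) (hJs : ENNReal.ofReal (4 * s) ≤ μH[1] J)
    (hρz : ρ z ≤ 64 * Λ * s) {S : Set ℂ} (hS : MeasurableSet S) (hSJ : S ⊆ J)
    (hJS : μH[1] (J \ S) ≤ ENNReal.ofReal (9 / 8 * s)) {τ : ℝ}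
    (hτ : τ = 1 / (32 * (20 + 72 * Λ) * a * (8 * Λ + 72 * Λ))) :
    μH[1] J ≤ 2 * μH[1] (densePart (μH[1].restrict Γ) ρ τ S) := by
  have hΛ := hq.pos
  have hSΓ : S ⊆ Γ := hSJ.trans hJ.1
  set U := densePart (μH[1].restrict Γ) ρ τ S with hU
  have hSU : μH[1] (S \ U) ≤ ENNReal.ofReal (s / 8) := by
    rw [← Measure.restrict_eq_self μH[1] (sdiff_subset.trans hSΓ : S \ U ⊆ Γ), hU, hτ]
    refine hr.measure_diff_densePart_le ha hs (by positivity) (by positivity) hsd hS hSΓ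
      (fun t ht => mem_closedBall.1 (hJz (hSJ ht))) fun t ht => ?_
    linarith [hr.le_add_dist t z, mem_closedBall.1 (hJz (hSJ ht))]
  refine measure_le_two_mul_of_two_mul_measure_diff_le
    (measure_ne_top_of_subset hJ.1 (h.hausdorffMeasure_ne_top hq)) ?_
  calc 2 * μH[1] (J \ U)
      ≤ 2 * (ENNReal.ofReal (9 / 8 * s) + ENNReal.ofReal (s / 8)) := by
        gcongr
        exact (measure_mono (sdiff_triangle J S U)).trans
          ((measure_union_le _ _).trans (add_le_add hJS hSU))
    _ = ENNReal.ofReal (2 * (9 / 8 * s + s / 8)) := by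
        rw [← ENNReal.ofReal_add (by positivity) (by positivity),
          ENNReal.ofReal_mul (p := 2) (by norm_num), ENNReal.ofReal_ofNat]
    _ ≤ μH[1] J := (ENNReal.ofReal_le_ofReal (by linarith)).trans hJs

lemma measure_inter_ball_le_setLIntegral_meanDensity (h : IsLoop Γ g T) (hq : IsQuasismooth Γ Λ)
    (hν : IsAInftyMeasure Γ ν lam) {ρ : ℂ → ℝ} {a b : ℝ≥0}
    (hr : IsRegularPair Γ (μH[1].restrict Γ) (ν.restrict Γ) ρ a b) (ha : 0 < a)
    {k : ℕ} (hk : 64 * Λ ^ 2 + 1 ≤ 2 ^ k) {s : ℝ} (hs : 0 < s) (hsd : 2 * s ≤ diam Γ)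
    {J : Set ℂ} (hJ : IsSubarc Γ J) {z w : ℂ} (hz : z ∈ J) (hw : w ∈ J) (hzw : 2 * s ≤ dist z w)
    (hJz : J ⊆ closedBall z (8 * Λ * s)) (hJs : ENNReal.ofReal (4 * s) ≤ μH[1] J)
    (hρz : ρ z ≤ 64 * Λ * s) {S : Set ℂ} (hS : MeasurableSet S) (hSJ : S ⊆ J)
    (hJS : μH[1] (J \ S) ≤ ENNReal.ofReal (9 / 8 * s)) :
    ν (Γ ∩ ball z (64 * Λ * s)) ≤ ENNReal.ofReal lam ^ (2 * k + 3) *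
      (ENNReal.ofReal (3200 * (20 + 72 * Λ) * a * Λ) *
        ∫⁻ y in S, meanDensity (ν.restrict Γ) ρ y ∂(μH[1].restrict Γ)) := by
  have hΛ := hq.pos
  have : 0 < (a : ℝ) := NNReal.coe_pos.2 ha
  have := hr.isFiniteMeasure_left
  have := hr.isFiniteMeasure_right
  obtain ⟨τ, hτ⟩ : ∃ τ, τ = 1 / (32 * (20 + 72 * Λ) * a * (8 * Λ + 72 * Λ)) := ⟨_, rfl⟩
  set U := densePart (μH[1].restrict Γ) ρ τ S
  have hUS : U ⊆ S := densePart_subset _ _ _ _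
  have hU : MeasurableSet U := measurableSet_densePart hr.lipschitz.continuous.measurable τ hS
  have hJU : μH[1] J ≤ 2 * μH[1] U :=
    h.hausdorffMeasure_le_two_mul_densePart hq hr ha hs hsd hJ hJz hJs hρz hS hSJ hJS hτ
  have hball : ν (Γ ∩ ball z (64 * Λ * s)) ≤ ENNReal.ofReal lam ^ (2 * k + 2) * ν J :=
    h.measure_inter_ball_le_of_isSubarc hq hν hJ hz hw (by positivity) k <| calc
      2 * Λ * (64 * Λ * s) = 64 * Λ ^ 2 * (2 * s) := by ring
      _ ≤ 64 * Λ ^ 2 * dist z w := by gcongr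
      _ ≤ (2 ^ k - 1) * dist z w := by gcongr; linarith
  have hint : ν U ≤ ENNReal.ofReal (3200 * (20 + 72 * Λ) * a * Λ) *
      ∫⁻ y in S, meanDensity (ν.restrict Γ) ρ y ∂(μH[1].restrict Γ) := by
    have hτ' : 3200 * (20 + 72 * Λ) * a * Λ * (4 / 5 * τ) = 1 := by
      rw [hτ]
      field_simp
      norm_num
    have hle := mul_le_mul_right (ofReal_mul_measure_densePart_le (m := μH[1].restrict Γ)
      (N := ν.restrict Γ) hr.lipschitz τ hS fun t ht => hr.pos t (hJ.1 (hSJ ht)))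
      (ENNReal.ofReal (3200 * (20 + 72 * Λ) * a * Λ))
    rwa [← mul_assoc, ← ENNReal.ofReal_mul (by positivity), hτ', ENNReal.ofReal_one, one_mul,
      Measure.restrict_eq_self _ (hUS.trans (hSJ.trans hJ.1))] at hle
  refine (hball.trans (mul_le_mul_right ((hν.2 J U hJ (hUS.trans hSJ) hU hJU).trans
    (mul_le_mul_right hint _)) _)).trans_eq ?_
  rw [← mul_assoc, ← pow_succ]

lemma exists_isSubarc_meanVolume_le (h : IsLoop Γ g T) (hq : IsQuasismooth Γ Λ) (lam : ℝ)
    {a : ℝ≥0} (ha : 0 < a) (b : ℝ≥0) :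
    ∃ C : ℝ≥0, ∀ (ν : Measure ℂ) (ρ : ℂ → ℝ), IsAInftyMeasure Γ ν lam →
      IsRegularPair Γ (μH[1].restrict Γ) (ν.restrict Γ) ρ a b →
      ∀ z ∈ Γ, ∀ s, 0 < s → 4 * s < diam Γ → ∃ J, IsSubarc Γ J ∧ J ⊆ closedBall z (8 * Λ * s) ∧
        ∀ S ⊆ J, MeasurableSet S → μH[1] (J \ S) ≤ ENNReal.ofReal (9 / 8 * s) →
          meanVolume (ν.restrict Γ) ρ z s ≤
            C * ∫⁻ y in S, meanDensity (ν.restrict Γ) ρ y ∂(μH[1].restrict Γ) := by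
  obtain ⟨k, hk⟩ := pow_unbounded_of_one_lt (64 * Λ ^ 2 + 1) one_lt_two
  refine ⟨2 * b ^ 2 + lam.toNNReal ^ (2 * k + 3) * (3200 * (20 + 72 * Λ) * a * Λ).toNNReal,
    fun ν ρ hν hr z hz s hs hsd => ?_⟩
  obtain ⟨J, hJ, hzJ, hJz, ⟨w, hw, hzw⟩, hJs⟩ := h.exists_isSubarc_at_scale hq hz hs hsd
  refine ⟨J, hJ, hJz, fun S hSJ hS hJS => ?_⟩
  have hsΛ : s ≤ Λ * s := le_mul_of_one_le_left hs.le hq.1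
  rw [ENNReal.coe_add, add_mul]
  rcases le_or_gt (64 * Λ * s) (ρ z) with hρ | hρ
  · have hSs : ENNReal.ofReal s ≤ μH[1].restrict Γ S := by
      rw [Measure.restrict_eq_self _ (hSJ.trans hJ.1)]
      refine (ENNReal.add_le_add_iff_right (ENNReal.ofReal_ne_top (r := 9 / 8 * s))).1 ?_
      calc ENNReal.ofReal s + ENNReal.ofReal (9 / 8 * s)
          ≤ ENNReal.ofReal (4 * s) := by
            rw [← ENNReal.ofReal_add hs.le (by positivity)]
            exact ENNReal.ofReal_le_ofReal (by linarith)
        _ ≤ μH[1] (S ∪ J \ S) := by rwa [union_sdiff_cancel hSJ]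
        _ ≤ μH[1] S + ENNReal.ofReal (9 / 8 * s) := (measure_union_le _ _).trans (by gcongr)
    refine le_add_right (hr.meanVolume_le_of_le_scale hz (by linarith) (fun y hy => ?_) hSs)
    linarith [mem_closedBall.1 (hJz (hSJ hy))]
  · refine le_add_left ((meanVolume_le_measure_ball _ ρ z hs).trans ?_)
    rw [Measure.restrict_apply measurableSet_ball, inter_comm, ENNReal.coe_mul, ENNReal.coe_pow,
      mul_assoc]
    refine le_trans (measure_mono ?_) (h.measure_inter_ball_le_setLIntegral_meanDensity hq hν hr ha
      hk.le hs (by linarith) hJ hzJ hw hzw hJz hJs hρ.le hS hSJ hJS)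
    gcongr
    exact max_le (by linarith) hρ.le

lemma exists_lintegral_mul_meanDensity_le (h : IsLoop Γ g T) (hq : IsQuasismooth Γ Λ) (lam : ℝ)
    {k : ℕ} (hk : 16 * Λ ^ 2 + 1 ≤ 2 ^ k) {M : ℕ}
    (hM : 4 * lam.toNNReal ^ (2 * k + 2) ≤ 2 ^ M) :
    ∃ C : ℝ≥0, ∀ (ν : Measure ℂ) (ρ : ℂ → ℝ) (f : ℂ → ℝ≥0∞) (E : ℝ≥0) (s : ℝ) (A : Set ℂ),
      IsFiniteMeasure ν → IsAInftyMeasure Γ ν lam → LipschitzWith 1 ρ → (∀ z ∈ Γ, 0 < ρ z) →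
      Measurable f → 0 < s → 4 * s < diam Γ → MeasurableSet A → A ⊆ Γ →
      μH[1] Γ ≤ μH[1] A + ENNReal.ofReal s →
      (∀ x ∈ Γ, ∃ z ∈ Γ, f x ≤ ENNReal.ofReal (decay M s x z) * f z ∧
        μH[1] (Γ ∩ closedBall z (8 * Λ * s) ∩ {w | E * f w < f z}) ≤ ENNReal.ofReal (s / 8)) →
      ∫⁻ x in Γ, f x * meanDensity (ν.restrict Γ) ρ x ∂μH[1] ≤
        C * E * ∫⁻ x in A, f x * meanDensity (ν.restrict Γ) ρ x ∂μH[1] := by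
  have hΛ := hq.pos
  set a : ℝ≥0 := (4 * Λ).toNNReal
  set b : ℝ≥0 := lam.toNNReal ^ (2 * k + 2)
  obtain ⟨C, hC⟩ := h.exists_isSubarc_meanVolume_le hq lam
    (Real.toNNReal_pos.2 (by positivity) : 0 < a) b
  obtain ⟨j, hj⟩ := pow_unbounded_of_one_lt (1 + 2 * (8 * Λ)) one_lt_two
  refine ⟨C * ((1 + 8 * Λ).toNNReal ^ (M + 1) * b ^ j) * (24 * a * b ^ 3),
    fun ν ρ f E s A _ hν hρ hpos hf hs hsd hA hAΓ hAs hloc => ?_⟩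
  have hr : IsRegularPair Γ (μH[1].restrict Γ) (ν.restrict Γ) ρ a b :=
    h.isRegularPair hq hν hk hρ hpos
  rw [← Measure.restrict_restrict_of_subset hAΓ]
  refine (hr.lintegral_mul_meanDensity_le_setLIntegral h.isCompact.isBounded hM hs
    (K := 8 * Λ) (C := C) (E := E) (A := A) (by positivity) hj.le hf fun x hx => ?_).trans_eq ?_
  · obtain ⟨z, hz, hxz, hbad⟩ := hloc x hx
    obtain ⟨J, hJ, hJz, hJC⟩ := hC ν ρ hν hr z hz s hs hsd
    set B := Γ ∩ closedBall z (8 * Λ * s) ∩ {w | E * f w < f z}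
    have hB : MeasurableSet B := (h.isCompact.measurableSet.inter measurableSet_closedBall).inter
      (measurableSet_lt (hf.const_mul _) measurable_const)
    have hS : MeasurableSet ((A ∩ J) \ B) := (hA.inter hJ.2.1.measurableSet).diff hB
    refine ⟨z, hz, (A ∩ J) \ B, fun t ht => ht.1.1, hS, hxz,
      hJC _ (fun t ht => ht.1.2) hS ?_, fun t ht => ?_⟩
    · refine (measure_diff_inter_diff_le hJ.1 hA hAΓ (h.hausdorffMeasure_ne_top hq)
        hAs hbad).trans_eq ?_
      rw [← ENNReal.ofReal_add hs.le (by positivity)]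
      ring_nf
    · have htJ := hJz ht.1.2
      exact ⟨hAΓ ht.1.1, htJ, not_lt.1 fun hlt => ht.2 ⟨⟨hAΓ ht.1.1, htJ⟩, hlt⟩⟩
  · push_cast
    rw [ENNReal.ofReal]
    ring

end IsLoop

/-! ### The exterior conformal map -/

lemma exists_differentiableOn_eq_mul_exp {f : ℂ → ℂ} {c : ℂ} {r : ℝ}
    (hf : DifferentiableOn ℂ f (ball c r)) (h0 : ∀ z ∈ ball c r, f z ≠ 0) (hr : 0 < r) :
    ∃ G : ℂ → ℂ, DifferentiableOn ℂ G (ball c r) ∧ G c = 0 ∧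
      ∀ z ∈ ball c r, f z = f c * exp (G z) := by
  obtain ⟨G, hG0, hG⟩ := ((hf.deriv isOpen_ball).div hf h0).isExactOn_ball.with_val_at c 0
  have hd : ∀ z ∈ ball c r, HasDerivAt (fun z => f z * exp (-G z)) 0 z := fun z hz => by
    refine ((hf.differentiableAt (isOpen_ball.mem_nhds hz)).hasDerivAt.mul
      (hG z hz).neg.cexp).congr_deriv ?_
    have : f z * (deriv f / f) z = deriv f z := mul_div_cancel₀ _ (h0 z hz)
    linear_combination -exp ((-G) z) * this
  refine ⟨G, fun z hz => (hG z hz).differentiableAt.differentiableWithinAt, hG0, fun z hz => ?_⟩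
  have hconst := isOpen_ball.is_const_of_deriv_eq_zero isPreconnected_ball
    (fun x hx => (hd x hx).differentiableAt.differentiableWithinAt)
    (fun x hx => (hd x hx).deriv) hz (mem_ball_self hr)
  simp only [hG0, neg_zero, exp_zero, mul_one] at hconst
  rw [← hconst, mul_assoc, ← exp_add, neg_add_cancel, exp_zero, mul_one]

lemma norm_le_two_mul_of_re_le {G : ℂ → ℂ} {c w : ℂ} {r M : ℝ}
    (hG : DifferentiableOn ℂ G (ball c r)) (hG0 : G c = 0) (hM : 0 ≤ M)
    (hre : ∀ z ∈ ball c r, (G z).re ≤ M) (hr : 0 < r) (hw : dist w c ≤ r / 2) :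
    ‖G w‖ ≤ 2 * M := by
  rw [dist_eq_norm] at hw
  have hmaps : MapsTo (fun z => c + z) (ball 0 r) (ball c r) := fun z hz => by
    simpa [mem_ball, dist_eq_norm] using hz
  refine le_of_forall_pos_le_add fun ε hε => ?_
  have hbound := borelCaratheodory_zero (f := fun z => G (c + z)) (R := r) (M := M + ε / 2)
    (z := w - c) (by positivity) (hG.comp (by fun_prop) hmaps)
    (fun z hz => (hre _ (hmaps hz)).trans (by linarith)) hr
    (mem_ball_zero_iff.2 (by linarith)) (by simpa using hG0)
  simp only [add_sub_cancel] at hbound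
  refine hbound.trans ?_
  rw [div_le_iff₀ (by linarith)]
  nlinarith

-- Harnack's inequality for the positive harmonic function `-log ‖f‖`.
lemma norm_pow_three_le_of_ne_zero {f : ℂ → ℂ} {c w : ℂ} {r : ℝ}
    (hf : DifferentiableOn ℂ f (ball c r)) (h0 : ∀ z ∈ ball c r, f z ≠ 0)
    (h1 : ∀ z ∈ ball c r, ‖f z‖ ≤ 1) (hr : 0 < r) (hw : dist w c ≤ r / 2) :
    ‖f c‖ ^ 3 ≤ ‖f w‖ := by
  obtain ⟨G, hG, hG0, hfG⟩ := exists_differentiableOn_eq_mul_exp hf h0 hr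
  have hc : c ∈ ball c r := mem_ball_self hr
  have hfc : 0 < ‖f c‖ := norm_pos_iff.2 (h0 c hc)
  have hnorm : ∀ z ∈ ball c r, ‖f z‖ = ‖f c‖ * Real.exp (G z).re := fun z hz => by
    rw [hfG z hz, norm_mul, norm_exp]
  have hre : ∀ z ∈ ball c r, (G z).re ≤ -Real.log ‖f c‖ := fun z hz => by
    have hle := h1 z hz
    rw [hnorm z hz, ← Real.exp_log hfc, ← Real.exp_add, Real.exp_le_one_iff] at hle
    linarith
  have hGw : ‖G w‖ ≤ 2 * -Real.log ‖f c‖ :=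
    norm_le_two_mul_of_re_le hG hG0 (by linarith [Real.log_nonpos hfc.le (h1 c hc)]) hre hr hw
  have hlog : 2 * Real.log ‖f c‖ ≤ (G w).re := by
    linarith [(abs_le.1 ((abs_re_le_norm (G w)).trans hGw)).1]
  calc ‖f c‖ ^ 3 = ‖f c‖ * Real.exp (2 * Real.log ‖f c‖) := by
        rw [two_mul, Real.exp_add, Real.exp_log hfc]
        ring
    _ ≤ ‖f c‖ * Real.exp (G w).re := by gcongr
    _ = ‖f w‖ := (hnorm w (mem_ball.2 (by linarith))).symm

lemma isPreconnected_setOf_lt_norm {E : Type*} [NormedAddCommGroup E] [NormedSpace ℝ E]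
    (hE : 1 < Module.rank ℝ E) {R : ℝ} (hR : 0 ≤ R) : IsPreconnected {x : E | R < ‖x‖} := by
  have hpolar : {x : E | R < ‖x‖} =
      (fun p : ℝ × E => p.1 • p.2) '' (Ioi R ×ˢ sphere (0 : E) 1) := by
    ext x
    refine ⟨fun hx => ⟨(‖x‖, ‖x‖⁻¹ • x), ⟨hx, ?_⟩, ?_⟩, ?_⟩
    · rw [mem_sphere_zero_iff_norm, norm_smul, norm_inv, norm_norm,
        inv_mul_cancel₀ (hR.trans_lt hx).ne']
    · exact smul_inv_smul₀ (hR.trans_lt hx).ne' x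
    · rintro ⟨⟨t, y⟩, ⟨ht, hy⟩, rfl⟩
      rw [mem_sphere_zero_iff_norm] at hy
      simpa [norm_smul, hy, abs_of_pos (hR.trans_lt ht)] using ht
  rw [hpolar]
  exact (isPreconnected_Ioi.prod (isPreconnected_sphere hE 0 1)).image _
    (by fun_prop : Continuous fun p : ℝ × E => p.1 • p.2).continuousOn

section UnboundedComponent

variable {Γ S : Set ℂ} {x y z : ℂ} {r R : ℝ}

lemma mem_unboundedComponent_of_isPreconnected (hS : IsPreconnected S) (hSΓ : S ⊆ Γᶜ)
    (hx : x ∈ S) (hy : y ∈ S) (hxΩ : x ∈ unboundedComponent Γ) : y ∈ unboundedComponent Γ :=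
  ⟨hSΓ hy, connectedComponentIn_eq (hS.subset_connectedComponentIn hx hSΓ hy) ▸ hxΩ.2⟩

lemma ball_subset_unboundedComponent (hx : x ∈ unboundedComponent Γ) (hr : 0 < r)
    (hsub : ball x r ⊆ Γᶜ) : ball x r ⊆ unboundedComponent Γ := fun _ hy =>
  mem_unboundedComponent_of_isPreconnected isPreconnected_ball hsub (mem_ball_self hr) hy hx

lemma isOpen_unboundedComponent (hΓ : IsClosed Γ) : IsOpen (unboundedComponent Γ) :=
  isOpen_iff.2 fun z hz =>
    have ⟨r, hr, hsub⟩ := isOpen_iff.1 hΓ.isOpen_compl z hz.1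
    ⟨r, hr, ball_subset_unboundedComponent hz hr hsub⟩

lemma isClosed_union_unboundedComponent (hΓ : IsClosed Γ) :
    IsClosed (Γ ∪ unboundedComponent Γ) := by
  rw [← isOpen_compl_iff, Metric.isOpen_iff]
  intro z hz
  rw [mem_compl_iff, mem_union, not_or] at hz
  obtain ⟨r, hr, hsub⟩ := isOpen_iff.1 hΓ.isOpen_compl z hz.1
  refine ⟨r, hr, fun w hw => ?_⟩
  rw [mem_compl_iff, mem_union, not_or]
  exact ⟨hsub hw, fun hwΩ => hz.2 (mem_unboundedComponent_of_isPreconnected isPreconnected_ball hsub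
    hw (mem_ball_self hr) hwΩ)⟩

lemma mem_unboundedComponent_of_lt_norm (hR : 0 ≤ R) (hΓ : Γ ⊆ closedBall 0 R) (hz : R < ‖z‖) :
    z ∈ unboundedComponent Γ := by
  have hsub : {w : ℂ | R < ‖w‖} ⊆ Γᶜ := fun w hw hwΓ =>
    (mem_closedBall_zero_iff.1 (hΓ hwΓ)).not_gt hw
  refine ⟨hsub hz, fun hb => NormedSpace.unbounded_univ ℝ ℂ ?_⟩
  have hconn : IsPreconnected {w : ℂ | R < ‖w‖} :=
    isPreconnected_setOf_lt_norm (by simp) hR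
  refine ((hb.subset (hconn.subset_connectedComponentIn hz hsub)).union
    (isBounded_closedBall (x := 0) (r := R))).subset fun w _ => ?_
  exact (lt_or_ge R ‖w‖).imp_right mem_closedBall_zero_iff.2

end UnboundedComponent

namespace IsExtConformal

variable {Γ Ω : Set ℂ} {Φ : ℂ → ℂ} {z : ℂ} {δ R : ℝ}

lemma one_lt_norm (h : IsExtConformal Ω Φ) (hz : z ∈ Ω) : 1 < ‖Φ z‖ := h.2.1.1 hz

lemma ne_zero (h : IsExtConformal Ω Φ) (hz : z ∈ Ω) : Φ z ≠ 0 :=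
  norm_pos_iff.1 (one_pos.trans (h.one_lt_norm hz))

lemma nhds_le_map (h : IsExtConformal Ω Φ) (hΩ : IsOpen Ω) (hz : z ∈ Ω) :
    𝓝 (Φ z) ≤ map Φ (𝓝 z) := by
  have ha : AnalyticAt ℂ Φ z := h.1.analyticAt (hΩ.mem_nhds hz)
  refine ha.eventually_constant_or_nhds_le_map_nhds.resolve_left fun hconst => ?_
  have heq : ∀ᶠ w in 𝓝 z, w = z := by
    filter_upwards [hconst, hΩ.mem_nhds hz] with w hw hwΩ using h.2.1.2.1 hwΩ hz hw
  obtain ⟨w, hw, hne⟩ := ((heq.filter_mono nhdsWithin_le_nhds).and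
    (self_mem_nhdsWithin (s := {z}ᶜ))).exists
  exact hne hw

lemma continuousOn_invFunOn (h : IsExtConformal Ω Φ) (hΩ : IsOpen Ω) :
    ContinuousOn (Function.invFunOn Φ Ω) extDisk := by
  intro w hw
  have hz : Function.invFunOn Φ Ω w ∈ Ω := Function.invFunOn_mem (h.2.1.2.2 hw)
  have hzw : Φ (Function.invFunOn Φ Ω w) = w := Function.invFunOn_eq (h.2.1.2.2 hw)
  refine ContinuousAt.continuousWithinAt fun V hV => ?_
  have hV' : Φ '' (V ∩ Ω) ∈ 𝓝 w := by
    simpa only [hzw] using h.nhds_le_map hΩ hz (image_mem_map (inter_mem hV (hΩ.mem_nhds hz)))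
  refine mem_map.2 (mem_of_superset hV' ?_)
  rintro _ ⟨x, ⟨hxV, hxΩ⟩, rfl⟩
  rwa [mem_preimage, h.2.1.2.1.leftInvOn_invFunOn hxΩ]

lemma tendsto_norm_atTop (h : IsExtConformal Ω Φ) :
    Tendsto (fun z => ‖Φ z‖) (cobounded ℂ) atTop := by
  obtain ⟨c, hc, hlim⟩ := h.2.2
  refine (hlim.norm.pos_mul_atTop (by simpa using hc.ne') tendsto_norm_cobounded_atTop).congr' ?_
  filter_upwards [eventually_ne_cobounded 0] with z hz
  rw [norm_div, div_mul_cancel₀ _ (norm_ne_zero_iff.2 hz)]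

-- If `‖z‖ ≤ R`, then `Φ⁻¹` maps the connected set `{K < ‖w‖}` onto a set that contains `z` and
-- points near infinity but misses the circle `‖w‖ = R + 1`, where `‖Φ‖ ≤ K`.
lemma exists_lt_norm (h : IsExtConformal (unboundedComponent Γ) Φ) (hΓ : IsClosed Γ)
    (hR : 0 ≤ R) (hΓR : Γ ⊆ closedBall 0 R) :
    ∃ K, ∀ z ∈ unboundedComponent Γ, K < ‖Φ z‖ → R < ‖z‖ := by
  have hout : ∀ x : ℂ, R < ‖x‖ → x ∈ unboundedComponent Γ := fun x =>
    mem_unboundedComponent_of_lt_norm hR hΓR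
  have hsphere : sphere (0 : ℂ) (R + 1) ⊆ unboundedComponent Γ := fun z hz =>
    hout z (by rw [mem_sphere_zero_iff_norm.1 hz]; linarith)
  obtain ⟨K', hK'⟩ := (isCompact_sphere (0 : ℂ) (R + 1)).exists_bound_of_continuousOn
    (h.1.continuousOn.mono hsphere)
  set K := max 1 K'
  have hK1 : 1 ≤ K := le_max_left _ _
  refine ⟨K, fun z hz hzK => ?_⟩
  by_contra! hzR
  have hsub : {w : ℂ | K < ‖w‖} ⊆ extDisk := fun w hw => hK1.trans_lt hw
  have hconn : IsPreconnected (norm '' (Function.invFunOn Φ (unboundedComponent Γ) ''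
      {w : ℂ | K < ‖w‖})) :=
    ((isPreconnected_setOf_lt_norm (by simp) (zero_le_one.trans hK1)).image _
      ((h.continuousOn_invFunOn (isOpen_unboundedComponent hΓ)).mono hsub)).image _
      continuous_norm.continuousOn
  obtain ⟨x, hxK, hxR⟩ := ((h.tendsto_norm_atTop.eventually_gt_atTop K).and
    (tendsto_norm_cobounded_atTop.eventually_gt_atTop (R + 1))).exists
  have hmem := hconn.ordConnected.out (mem_image_of_mem _ (mem_image_of_mem _ hzK))
    (mem_image_of_mem _ (mem_image_of_mem _ hxK))
  rw [h.2.1.2.1.leftInvOn_invFunOn hz, h.2.1.2.1.leftInvOn_invFunOn (hout x (by linarith))] at hmem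
  obtain ⟨_, ⟨w, hw, rfl⟩, hwR⟩ := hmem (⟨by linarith, hxR.le⟩ : R + 1 ∈ Icc ‖z‖ ‖x‖)
  have hwK := hK' _ (mem_sphere_zero_iff_norm.2 hwR)
  rw [Function.invFunOn_eq (h.2.1.2.2 (hsub hw))] at hwK
  exact (hwK.trans (le_max_right _ _)).not_gt hw

lemma eventually_norm_lt (h : IsExtConformal (unboundedComponent Γ) Φ) (hΓ : IsCompact Γ)
    (hδ : 0 < δ) (hz : z ∈ Γ) :
    ∀ᶠ w in 𝓝 z, w ∈ unboundedComponent Γ → ‖Φ w‖ < 1 + δ := by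
  obtain ⟨R, hR, hΓR⟩ := hΓ.isBounded.subset_closedBall_lt 0 0
  obtain ⟨R', hR'⟩ := h.exists_lt_norm hΓ.isClosed (R := R + 1) (by linarith)
    (hΓR.trans (closedBall_subset_closedBall (by linarith)))
  set K : Set ℂ := {w | 1 + δ ≤ ‖w‖} ∩ closedBall 0 R'
  have hKc : IsCompact K := (isCompact_closedBall (0 : ℂ) R').inter_left
    (isClosed_le continuous_const continuous_norm)
  have hK : K ⊆ extDisk := fun w hw => by
    have : 1 + δ ≤ ‖w‖ := hw.1
    exact (by linarith : 1 < ‖w‖)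
  have hclosed : IsClosed (Function.invFunOn Φ (unboundedComponent Γ) '' K) :=
    (hKc.image_of_continuousOn ((h.continuousOn_invFunOn
      (isOpen_unboundedComponent hΓ.isClosed)).mono hK)).isClosed
  have hzK : z ∉ Function.invFunOn Φ (unboundedComponent Γ) '' K := by
    rintro ⟨w, hw, rfl⟩
    exact (Function.invFunOn_mem (h.2.1.2.2 (hK hw))).1 hz
  have hzR : ‖z‖ < R + 1 := by linarith [mem_closedBall_zero_iff.1 (hΓR hz)]
  filter_upwards [hclosed.isOpen_compl.mem_nhds hzK,
    continuous_norm.continuousAt.eventually_lt continuousAt_const hzR] with w hwK hwR hwΩ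
  by_contra! hle
  refine hwK ⟨Φ w, ⟨hle, mem_closedBall_zero_iff.2 ?_⟩, h.2.1.2.1.leftInvOn_invFunOn hwΩ⟩
  exact not_lt.1 fun hlt => (hR' w hwΩ hlt).not_gt hwR

lemma isClosed_superlevel (h : IsExtConformal (unboundedComponent Γ) Φ) (hΓ : IsCompact Γ)
    (hδ : 0 < δ) : IsClosed {z ∈ unboundedComponent Γ | 1 + δ ≤ ‖Φ z‖} := by
  have hΩ := isOpen_unboundedComponent hΓ.isClosed
  rw [← isOpen_compl_iff, isOpen_iff_mem_nhds]
  intro z hz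
  by_cases hzΩ : z ∈ unboundedComponent Γ
  · have hlt : ‖Φ z‖ < 1 + δ := not_le.1 fun hle => hz ⟨hzΩ, hle⟩
    filter_upwards [(h.1.continuousOn.continuousAt (hΩ.mem_nhds hzΩ)).norm.eventually_lt
      continuousAt_const hlt] with w hw hwδ
    exact hw.not_ge hwδ.2
  by_cases hzΓ : z ∈ Γ
  · filter_upwards [h.eventually_norm_lt hΓ hδ hzΓ] with w hw hwδ
    exact (hw hwδ.1).not_ge hwδ.2
  · have hmem : z ∈ (Γ ∪ unboundedComponent Γ)ᶜ := by simp [hzΓ, hzΩ]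
    filter_upwards [(isClosed_union_unboundedComponent hΓ.isClosed).isOpen_compl.mem_nhds hmem]
      with w hw hwδ
    exact hw (Or.inr hwδ.1)

lemma levelCurve_nonempty (h : IsExtConformal Ω Φ) (hδ : 0 < δ) : (levelCurve Ω Φ δ).Nonempty := by
  have hnorm : ‖((1 + δ : ℝ) : ℂ)‖ = 1 + δ := by
    rw [norm_real, Real.norm_eq_abs, abs_of_pos (by linarith)]
  obtain ⟨z, hz, hzw⟩ := h.2.1.2.2 (show 1 < ‖((1 + δ : ℝ) : ℂ)‖ by rw [hnorm]; linarith)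
  exact ⟨z, hz, by rw [hzw, hnorm]⟩

lemma exists_le_rho (h : IsExtConformal (unboundedComponent Γ) Φ) (hΓ : IsCompact Γ) {δ₀ : ℝ}
    (hδ₀ : 0 < δ₀) :
    ∃ c > 0, ∀ δ, δ₀ ≤ δ → ∀ z ∈ Γ, c ≤ rho (unboundedComponent Γ) Φ δ z := by
  set F := {z ∈ unboundedComponent Γ | 1 + δ₀ ≤ ‖Φ z‖}
  have hsub : ∀ δ, δ₀ ≤ δ → levelCurve (unboundedComponent Γ) Φ δ ⊆ F := fun δ hδ z hz =>
    ⟨hz.1, by rw [hz.2]; linarith⟩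
  have hne := (h.levelCurve_nonempty hδ₀).mono (hsub δ₀ le_rfl)
  rcases Γ.eq_empty_or_nonempty with rfl | hΓne
  · exact ⟨1, one_pos, by simp⟩
  obtain ⟨z₀, hz₀, hmin⟩ := hΓ.exists_isMinOn hΓne (continuous_infDist_pt F).continuousOn
  refine ⟨infDist z₀ F, ?_, fun δ hδ z hz => (hmin hz).trans
    (infDist_le_infDist_of_subset (hsub δ hδ) (h.levelCurve_nonempty (hδ₀.trans_le hδ)))⟩
  rw [gt_iff_lt, ← (h.isClosed_superlevel hΓ hδ₀).notMem_iff_infDist_pos hne]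
  exact fun hmem => hmem.1.1 hz₀

lemma rho_pos (h : IsExtConformal (unboundedComponent Γ) Φ) (hΓ : IsCompact Γ) (hδ : 0 < δ)
    (hz : z ∈ Γ) : 0 < rho (unboundedComponent Γ) Φ δ z :=
  have ⟨_, hc, hle⟩ := h.exists_le_rho hΓ hδ
  hc.trans_le (hle δ le_rfl z hz)

end IsExtConformal

section ExteriorGrowth

variable {Γ : Set ℂ} {Φ : ℂ → ℂ} {q x z : ℂ} {δ r : ℝ}

lemma mul_dist_le_infDist_lineMap {E : Type*} [SeminormedAddCommGroup E] [NormedSpace ℝ E]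
    {S : Set E} {q z : E} (hq : infDist z S = dist z q) {t : ℝ} (ht : t ≤ 1) :
    t * dist z q ≤ infDist (AffineMap.lineMap q z t) S := by
  have h := infDist_le_infDist_add_dist (s := S) (x := z) (y := AffineMap.lineMap q z t)
  rw [hq, dist_right_lineMap, Real.norm_of_nonneg (sub_nonneg.2 ht), dist_comm q z] at h
  linarith

lemma lineMap_mem_unboundedComponent (hz : z ∈ unboundedComponent Γ)
    (hq : infDist z Γ = dist z q) {t : ℝ} (ht : t ∈ Ioc (0 : ℝ) 1) :
    AffineMap.lineMap q z t ∈ unboundedComponent Γ := by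
  rcases eq_or_ne z q with rfl | hne
  · simpa using hz
  have hcont : Continuous fun u : ℝ => AffineMap.lineMap q z u := AffineMap.lineMap_continuous
  refine mem_unboundedComponent_of_isPreconnected (isPreconnected_Ioc.image _ hcont.continuousOn)
    ?_ (mem_image_of_mem _ (right_mem_Ioc.2 one_pos)) (mem_image_of_mem _ ht) (by simpa using hz)
  rintro _ ⟨u, hu, rfl⟩ hmem
  have := mul_dist_le_infDist_lineMap hq hu.2
  rw [infDist_zero_of_mem hmem] at this
  exact this.not_gt (mul_pos hu.1 (dist_pos.2 hne))

lemma setDist_levelCurve_le (hz : z ∈ Γ) {ζ : ℂ} {Ω : Set ℂ} (hζ : ζ ∈ levelCurve Ω Φ δ) :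
    setDist Γ (levelCurve Ω Φ δ) ≤ dist ζ z :=
  dist_comm z ζ ▸ csInf_le ⟨0, forall_mem_image2.2 fun _ _ _ _ => dist_nonneg⟩
    (mem_image2_of_mem hz hζ)

namespace IsExtConformal

lemma norm_lt_of_infDist_lt (h : IsExtConformal (unboundedComponent Γ) Φ) (hΓ : IsCompact Γ)
    (hΓne : Γ.Nonempty) (hδ : 0 < δ) (hz : z ∈ unboundedComponent Γ)
    (hlt : infDist z Γ < setDist Γ (levelCurve (unboundedComponent Γ) Φ δ)) :
    ‖Φ z‖ < 1 + δ := by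
  by_contra! hge
  obtain ⟨q, hq, hzq⟩ := hΓ.exists_infDist_eq_dist hΓne z
  have hmem : ∀ u ∈ Ioc (0 : ℝ) 1, AffineMap.lineMap q z u ∈ unboundedComponent Γ := fun u hu =>
    lineMap_mem_unboundedComponent hz hzq hu
  have hline : Continuous fun u : ℝ => AffineMap.lineMap q z u := AffineMap.lineMap_continuous
  have hcont : ContinuousOn (fun u : ℝ => ‖Φ (AffineMap.lineMap q z u)‖) (Ioc 0 1) :=
    (h.1.continuousOn.comp hline.continuousOn hmem).norm
  have hne : ∀ u ∈ Ioc (0 : ℝ) 1, ‖Φ (AffineMap.lineMap q z u)‖ ≠ 1 + δ := fun u hu he => by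
    have hle := setDist_levelCurve_le hq ⟨hmem u hu, he⟩
    rw [dist_lineMap_left, Real.norm_of_nonneg hu.1.le, dist_comm q z, ← hzq] at hle
    exact (hle.trans (mul_le_of_le_one_left infDist_nonneg hu.2)).not_gt hlt
  have hgt : ∀ u ∈ Ioc (0 : ℝ) 1, 1 + δ ≤ ‖Φ (AffineMap.lineMap q z u)‖ := fun u hu => by
    by_contra! hlt'
    obtain ⟨v, hv, hve⟩ := (isPreconnected_Ioc.image _ hcont).ordConnected.out
      (mem_image_of_mem _ hu) (mem_image_of_mem _ (right_mem_Ioc.2 one_pos))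
      ⟨hlt'.le, by simpa using hge⟩
    exact hne v hv hve
  have hlim : Tendsto (fun u : ℝ => AffineMap.lineMap q z u) (𝓝[>] 0) (𝓝 q) :=
    (hline.tendsto' 0 q (AffineMap.lineMap_apply_zero q z)).mono_left nhdsWithin_le_nhds
  have hqF : q ∈ {z ∈ unboundedComponent Γ | 1 + δ ≤ ‖Φ z‖} := by
    refine (h.isClosed_superlevel hΓ hδ).mem_of_tendsto hlim ?_
    filter_upwards [Ioc_mem_nhdsGT one_pos] with u hu using ⟨hmem u hu, hgt u hu⟩
  exact hqF.1.1 hq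

lemma norm_le_norm_pow_three (h : IsExtConformal (unboundedComponent Γ) Φ) (hr : 0 < r)
    (hball : ball x r ⊆ unboundedComponent Γ) (hzx : dist z x ≤ r / 2) : ‖Φ z‖ ≤ ‖Φ x‖ ^ 3 := by
  have hx : x ∈ unboundedComponent Γ := hball (mem_ball_self hr)
  have hz : z ∈ unboundedComponent Γ := hball (mem_ball.2 (by linarith))
  have hle := norm_pow_three_le_of_ne_zero
    ((h.1.mono hball).inv fun y hy => h.ne_zero (hball hy))
    (fun y hy => inv_ne_zero (h.ne_zero (hball hy)))
    (fun y hy => (norm_inv (Φ y)).trans_le (inv_le_one_of_one_le₀ (h.one_lt_norm (hball hy)).le))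
    hr hzx
  simp only [Pi.inv_apply] at hle
  rwa [norm_inv, norm_inv, inv_pow, inv_le_inv₀ (pow_pos (norm_pos_iff.2 (h.ne_zero hx)) 3)
    (norm_pos_iff.2 (h.ne_zero hz))] at hle

lemma norm_le_norm_lineMap_pow_three (h : IsExtConformal (unboundedComponent Γ) Φ)
    (hz : z ∈ unboundedComponent Γ) (hq : q ∈ Γ) (hzq : infDist z Γ = dist z q) :
    ‖Φ z‖ ≤ ‖Φ (AffineMap.lineMap q z (2 / 3 : ℝ))‖ ^ 3 := by
  have hpos : 0 < dist z q := dist_pos.2 fun he => hz.1 (he ▸ hq)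
  refine h.norm_le_norm_pow_three (r := 2 / 3 * dist z q) (by positivity)
    (ball_subset_unboundedComponent (lineMap_mem_unboundedComponent hz hzq (by norm_num))
      (by positivity) fun w hw hwΓ => ?_) ?_
  · have := mul_dist_le_infDist_lineMap hzq (t := 2 / 3) (by norm_num)
    exact (mem_ball'.1 hw).not_ge (this.trans (infDist_le_dist_of_mem hwΓ))
  · rw [dist_right_lineMap, dist_comm q z]
    norm_num
    linarith

lemma norm_le_pow_of_infDist_lt (h : IsExtConformal (unboundedComponent Γ) Φ) (hΓ : IsCompact Γ)
    (hΓne : Γ.Nonempty) (hδ : 0 < δ) (k : ℕ) (hz : z ∈ unboundedComponent Γ)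
    (hlt : infDist z Γ < (3 / 2) ^ k * setDist Γ (levelCurve (unboundedComponent Γ) Φ δ)) :
    ‖Φ z‖ ≤ (1 + δ) ^ 3 ^ k := by
  induction k generalizing z with
  | zero => simpa using (h.norm_lt_of_infDist_lt hΓ hΓne hδ hz (by simpa using hlt)).le
  | succ k ih =>
    obtain ⟨q, hq, hzq⟩ := hΓ.exists_infDist_eq_dist hΓne z
    have hle : infDist (AffineMap.lineMap q z (2 / 3 : ℝ)) Γ ≤ 2 / 3 * dist z q := by
      refine (infDist_le_dist_of_mem hq).trans_eq ?_
      rw [dist_lineMap_left, dist_comm q z]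
      norm_num
    rw [hzq, pow_succ] at hlt
    calc ‖Φ z‖ ≤ ‖Φ (AffineMap.lineMap q z (2 / 3 : ℝ))‖ ^ 3 :=
          h.norm_le_norm_lineMap_pow_three hz hq hzq
      _ ≤ ((1 + δ) ^ 3 ^ k) ^ 3 := by
          gcongr
          exact ih (lineMap_mem_unboundedComponent hz hzq (by norm_num)) (by linarith)
      _ = (1 + δ) ^ 3 ^ (k + 1) := by rw [← pow_mul, pow_succ]

end IsExtConformal

end ExteriorGrowth

namespace IsArcFamily

variable {Γ Ω : Set ℂ} {g : ℝ → ℂ} {T Λ lam δ₀ : ℝ} {ν : Measure ℂ} {Φ : ℂ → ℂ} {n : ℕ}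
  {ℓ : ℂ → Set ℂ} {z : ℂ}

lemma subset_inter_ball (hℓ : IsArcFamily Γ Ω Φ δ₀ n ℓ) (hΓ : IsBounded Γ)
    (hq : IsQuasismooth Γ Λ) {c K : ℝ} (hc : 0 < c)
    (hcle : δ₀ ≤ 1 / n → c ≤ rho Ω Φ (1 / n) z)
    (hK : 4 * Λ ≤ K) (hcK : 2 * (diam Γ + 1) / c ≤ K) (hz : z ∈ Γ) (hρ : 0 < rho Ω Φ (1 / n) z) :
    ℓ z ⊆ Γ ∩ ball z (K * (rho Ω Φ (1 / n) z / 2)) := by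
  have hΛ := hq.pos
  rcases lt_or_ge (1 / (n : ℝ)) δ₀ with hlt | hge
  · obtain ⟨z', z'', -, -, hJ, hzJ, hz', hz''⟩ := (hℓ z hz).1 hlt
    refine fun t ht => ⟨hJ.1.1 ht, mem_ball.2 ?_⟩
    calc dist t z ≤ Λ * rho Ω Φ (1 / n) z := hJ.subset_closedBall hq hρ.le hz' hz'' hzJ ht
      _ < 4 * Λ * (rho Ω Φ (1 / n) z / 2) := by nlinarith
      _ ≤ K * (rho Ω Φ (1 / n) z / 2) := by gcongr
  · rw [(hℓ z hz).2 hge]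
    refine fun t ht => ⟨ht, mem_ball.2 ?_⟩
    calc dist t z ≤ diam Γ := dist_le_diam_of_mem hΓ ht hz
      _ < 2 * (diam Γ + 1) / c * (c / 2) := by field_simp; linarith
      _ ≤ K * (rho Ω Φ (1 / n) z / 2) := by
        have := diam_nonneg (s := Γ)
        have : 0 ≤ K := le_trans (by positivity) hK
        gcongr
        exact hcle hge

lemma measure_inter_ball_le (hℓ : IsArcFamily Γ Ω Φ δ₀ n ℓ) (h : IsLoop Γ g T)
    (hq : IsQuasismooth Γ Λ) (hν : IsAInftyMeasure Γ ν lam) {k : ℕ} (hk : 2 * Λ ^ 2 + 1 ≤ 2 ^ k)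
    (hz : z ∈ Γ) (hρ : 0 ≤ rho Ω Φ (1 / n) z) :
    ν (Γ ∩ ball z (rho Ω Φ (1 / n) z / 2)) ≤ ENNReal.ofReal lam ^ (2 * k + 2) * ν (ℓ z) := by
  rcases lt_or_ge (1 / (n : ℝ)) δ₀ with hlt | hge
  · obtain ⟨z', z'', -, -, hJ, hzJ, hz', -⟩ := (hℓ z hz).1 hlt
    exact h.measure_inter_ball_le_of_isShorterArc hq hν hρ hJ hz' hzJ hk
  · rw [(hℓ z hz).2 hge]
    exact (measure_mono inter_subset_left).trans (le_mul_of_one_le_left zero_le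
      (one_le_pow₀ hν.one_le))

end IsArcFamily

lemma ofReal_wFun (ν : Measure ℂ) [IsFiniteMeasure ν] {Ω : Set ℂ} {Φ : ℂ → ℂ} {n : ℕ}
    (ℓ : ℂ → Set ℂ) {z : ℂ} (hρ : 0 < rho Ω Φ (1 / n) z) :
    ENNReal.ofReal (wFun ν Ω Φ n ℓ z) = ν (ℓ z) / ENNReal.ofReal (rho Ω Φ (1 / n) z) := by
  rw [wFun, ENNReal.ofReal_div_of_pos hρ, ENNReal.ofReal_toReal (measure_ne_top ν _)]

lemma IsLoop.exists_wFun_compare {Γ : Set ℂ} {g : ℝ → ℂ} {T Λ δ₀ : ℝ} {Φ : ℂ → ℂ}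
    (h : IsLoop Γ g T) (hq : IsQuasismooth Γ Λ) (hΦ : IsExtConformal (unboundedComponent Γ) Φ)
    (hδ₀ : 0 < δ₀) (lam : ℝ) :
    ∃ C : ℝ≥0, ∀ ν : Measure ℂ, IsFiniteMeasure ν → IsAInftyMeasure Γ ν lam →
      ∀ n : ℕ, 0 < n → ∀ ℓ, IsArcFamily Γ (unboundedComponent Γ) Φ δ₀ n ℓ → ∀ z ∈ Γ,
        ENNReal.ofReal (wFun ν (unboundedComponent Γ) Φ n ℓ z) ≤
          C * meanDensity (ν.restrict Γ) (rho (unboundedComponent Γ) Φ (1 / n)) z ∧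
        meanDensity (ν.restrict Γ) (rho (unboundedComponent Γ) Φ (1 / n)) z ≤
          C * ENNReal.ofReal (wFun ν (unboundedComponent Γ) Φ n ℓ z) := by
  obtain ⟨c, hc, hcle⟩ := hΦ.exists_le_rho h.isCompact hδ₀
  obtain ⟨k, hk⟩ := pow_unbounded_of_one_lt (16 * Λ ^ 2 + 1) one_lt_two
  obtain ⟨j, hj⟩ := pow_unbounded_of_one_lt (max (4 * Λ) (2 * (diam Γ + 1) / c)) one_lt_two
  set b : ℝ≥0 := lam.toNNReal ^ (2 * k + 2)
  refine ⟨max (b ^ j) b, fun ν _ hν n hn ℓ hℓ z hz => ?_⟩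
  set ρ := rho (unboundedComponent Γ) Φ (1 / n)
  have hn' : (0 : ℝ) < 1 / n := by positivity
  have hpos : ∀ z ∈ Γ, 0 < ρ z := fun z hz => hΦ.rho_pos h.isCompact hn' hz
  have hR : IsRegularPair Γ (μH[1].restrict Γ) (ν.restrict Γ) ρ (4 * Λ).toNNReal b :=
    h.isRegularPair hq hν hk.le (lipschitz_infDist_pt _) hpos
  have hball : ∀ r, ν.restrict Γ (ball z r) = ν (Γ ∩ ball z r) := fun r => by
    rw [Measure.restrict_apply measurableSet_ball, inter_comm]
  have hle : ν (ℓ z) ≤ (b ^ j : ℝ≥0) * ν (Γ ∩ ball z (ρ z / 2)) := by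
    have hsub := hℓ.subset_inter_ball h.isCompact.isBounded hq hc (fun hge => hcle _ hge z hz)
      ((le_max_left _ _).trans hj.le) ((le_max_right _ _).trans hj.le) hz (hpos z hz)
    rw [← hball, ENNReal.coe_pow]
    exact (measure_mono hsub).trans (hball _ ▸ hR.measure_ball_le_pow hz j le_rfl)
  have hge : ν (Γ ∩ ball z (ρ z / 2)) ≤ b * ν (ℓ z) := by
    rw [ENNReal.coe_pow]
    exact hℓ.measure_inter_ball_le h hq hν (by nlinarith) hz (hpos z hz).le
  rw [ofReal_wFun ν ℓ (hpos z hz), meanDensity, hball, ← mul_div_assoc, ← mul_div_assoc]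
  constructor
  · gcongr
    exact hle.trans (by gcongr; exact le_max_left _ _)
  · gcongr
    exact hge.trans (by gcongr; exact le_max_right _ _)

/-! ### Logarithmic potentials -/

section LogPotential

variable {X : Type*} [PseudoMetricSpace X] {x : X} {r : ℝ}

-- The right-hand side is the number of `k` with `2 ^ k < r / dist y x`.
lemma ofReal_log_div_dist_le_tsum (hr : 0 < r) (x y : X) :
    ENNReal.ofReal (Real.log (r / dist y x)) ≤
      ∑' k : ℕ, (ball x (r * 2⁻¹ ^ k)).indicator (1 : X → ℝ≥0∞) y := by
  rcases (dist_nonneg (x := y) (y := x)).eq_or_lt with hd | hd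
  · simp [← hd]
  set L := Real.log (r / dist y x)
  have hmem : ∀ k ∈ Finset.range ⌈L⌉₊, y ∈ ball x (r * 2⁻¹ ^ k) := fun k hk => by
    have hexp : Real.exp k < r / dist y x :=
      (Real.lt_log_iff_exp_lt (by positivity)).1 (Nat.lt_ceil.1 (Finset.mem_range.1 hk))
    have hpow : (2 : ℝ) ^ k ≤ Real.exp k := by
      rw [← mul_one (k : ℝ), Real.exp_nat_mul]
      gcongr
      linarith [Real.add_one_le_exp 1]
    rw [lt_div_iff₀ hd] at hexp
    rw [mem_ball, inv_pow, ← div_eq_mul_inv, lt_div_iff₀ (by positivity)]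
    nlinarith
  calc ENNReal.ofReal L ≤ (⌈L⌉₊ : ℝ≥0∞) := by
        rw [← ENNReal.ofReal_natCast]
        exact ENNReal.ofReal_le_ofReal (Nat.le_ceil L)
    _ = ∑ k ∈ Finset.range ⌈L⌉₊, (ball x (r * 2⁻¹ ^ k)).indicator (1 : X → ℝ≥0∞) y := by
        rw [Finset.sum_congr rfl fun k hk => indicator_of_mem (hmem k hk) 1]
        simp
    _ ≤ ∑' k : ℕ, (ball x (r * 2⁻¹ ^ k)).indicator (1 : X → ℝ≥0∞) y := ENNReal.sum_le_tsum _

variable [MeasurableSpace X] {m : Measure X} {a : ℝ≥0}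

/-- The logarithmic potential of the normalization of the measure `m`. -/
def logPotential (m : Measure X) (x : X) : ℝ := ⨍ y, Real.log (dist y x) ∂m

lemma ae_dist_pos_of_measure_ball_le (hm : ∀ r, m (ball x r) ≤ a * ENNReal.ofReal r) :
    ∀ᵐ y ∂m, 0 < dist y x := by
  have hlim : Tendsto (fun r => a * ENNReal.ofReal r) (𝓝[>] 0) (𝓝 0) := by
    have : Continuous fun r => (a : ℝ≥0∞) * ENNReal.ofReal r :=
      (ENNReal.continuous_const_mul ENNReal.coe_ne_top).comp ENNReal.continuous_ofReal
    exact (this.tendsto' 0 0 (by simp)).mono_left nhdsWithin_le_nhds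
  have hnull : m {y | ¬0 < dist y x} = 0 := by
    refine nonpos_iff_eq_zero.1 (ge_of_tendsto hlim ?_)
    filter_upwards [self_mem_nhdsWithin] with r hr
    exact (measure_mono fun y hy => mem_ball.2 ((not_lt.1 hy).trans_lt hr)).trans (hm r)
  exact hnull

lemma ae_log_div_dist_nonneg (hm : ∀ r, m (ball x r) ≤ a * ENNReal.ofReal r)
    (hmr : ∀ᵐ y ∂m, dist y x ≤ r) : ∀ᵐ y ∂m, 0 ≤ Real.log (r / dist y x) := by
  filter_upwards [hmr, ae_dist_pos_of_measure_ball_le hm] with y hy hpos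
  exact Real.log_nonneg ((one_le_div hpos).2 hy)

lemma log_sub_log_div_dist_ae_eq (hm : ∀ r, m (ball x r) ≤ a * ENNReal.ofReal r) (hr : 0 < r) :
    (fun y => Real.log r - Real.log (r / dist y x)) =ᵐ[m] fun y => Real.log (dist y x) := by
  filter_upwards [ae_dist_pos_of_measure_ball_le hm] with y hy
  rw [Real.log_div hr.ne' hy.ne', sub_sub_cancel]

variable [OpensMeasurableSpace X]

lemma lintegral_log_div_dist_le (hm : ∀ r, m (ball x r) ≤ a * ENNReal.ofReal r) (hr : 0 < r) :
    ∫⁻ y, ENNReal.ofReal (Real.log (r / dist y x)) ∂m ≤ ENNReal.ofReal (2 * a * r) := by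
  calc ∫⁻ y, ENNReal.ofReal (Real.log (r / dist y x)) ∂m
      ≤ ∫⁻ y, ∑' k : ℕ, (ball x (r * 2⁻¹ ^ k)).indicator (1 : X → ℝ≥0∞) y ∂m :=
        lintegral_mono (ofReal_log_div_dist_le_tsum hr x)
    _ = ∑' k : ℕ, m (ball x (r * 2⁻¹ ^ k)) := by
        rw [lintegral_tsum fun k => (measurable_one.indicator measurableSet_ball).aemeasurable]
        exact tsum_congr fun k => lintegral_indicator_one measurableSet_ball
    _ ≤ ∑' k : ℕ, a * ENNReal.ofReal r * 2⁻¹ ^ k := by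
        refine ENNReal.tsum_le_tsum fun k => (hm _).trans_eq ?_
        rw [ENNReal.ofReal_mul hr.le, ENNReal.ofReal_pow (by positivity),
          ENNReal.ofReal_inv_of_pos two_pos, ENNReal.ofReal_ofNat, mul_assoc]
    _ = 2 * a * ENNReal.ofReal r := by
        rw [ENNReal.tsum_mul_left, ENNReal.tsum_geometric, ENNReal.one_sub_inv_two, inv_inv]
        ring
    _ = ENNReal.ofReal (2 * a * r) := by
        rw [ENNReal.ofReal_mul (by positivity), ENNReal.ofReal_mul zero_le_two,
          ENNReal.ofReal_ofNat, ENNReal.ofReal_coe_nnreal]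

lemma integrable_log_div_dist (hm : ∀ r, m (ball x r) ≤ a * ENNReal.ofReal r) (hr : 0 < r)
    (hmr : ∀ᵐ y ∂m, dist y x ≤ r) : Integrable (fun y => Real.log (r / dist y x)) m := by
  have hmeas : Measurable fun y => Real.log (r / dist y x) := by fun_prop
  refine ⟨hmeas.aestronglyMeasurable, ?_⟩
  rw [hasFiniteIntegral_iff_ofReal (ae_log_div_dist_nonneg hm hmr)]
  exact (lintegral_log_div_dist_le hm hr).trans_lt (by finiteness)

lemma integral_log_div_dist_le (hm : ∀ r, m (ball x r) ≤ a * ENNReal.ofReal r) (hr : 0 < r)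
    (hmr : ∀ᵐ y ∂m, dist y x ≤ r) : ∫ y, Real.log (r / dist y x) ∂m ≤ 2 * a * r := by
  rw [integral_eq_lintegral_of_nonneg_ae (ae_log_div_dist_nonneg hm hmr)
    (integrable_log_div_dist hm hr hmr).1]
  exact ENNReal.toReal_le_of_le_ofReal (by positivity) (lintegral_log_div_dist_le hm hr)

variable [IsFiniteMeasure m]

lemma integrable_log_dist (hm : ∀ r, m (ball x r) ≤ a * ENNReal.ofReal r) (hr : 0 < r)
    (hmr : ∀ᵐ y ∂m, dist y x ≤ r) : Integrable (fun y => Real.log (dist y x)) m :=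
  ((integrable_const _).sub (integrable_log_div_dist hm hr hmr)).congr
    (log_sub_log_div_dist_ae_eq hm hr)

lemma logPotential_eq_sub [NeZero m] (hm : ∀ r, m (ball x r) ≤ a * ENNReal.ofReal r) (hr : 0 < r)
    (hmr : ∀ᵐ y ∂m, dist y x ≤ r) :
    logPotential m x = Real.log r - (m.real univ)⁻¹ * ∫ y, Real.log (r / dist y x) ∂m := by
  rw [logPotential, average_eq, ← integral_congr_ae (log_sub_log_div_dist_ae_eq hm hr),
    integral_sub (integrable_const _) (integrable_log_div_dist hm hr hmr), integral_const,
    smul_eq_mul, smul_eq_mul, mul_sub, inv_mul_cancel_left₀ measureReal_univ_ne_zero]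

lemma logPotential_le_log [NeZero m] (hm : ∀ r, m (ball x r) ≤ a * ENNReal.ofReal r) (hr : 0 < r)
    (hmr : ∀ᵐ y ∂m, dist y x ≤ r) : logPotential m x ≤ Real.log r := by
  rw [logPotential_eq_sub hm hr hmr, sub_le_self_iff]
  exact mul_nonneg (by positivity) (integral_nonneg_of_ae (ae_log_div_dist_nonneg hm hmr))

lemma log_sub_le_logPotential (hm : ∀ r, m (ball x r) ≤ a * ENNReal.ofReal r) {z : X} {s : ℝ}
    (hs : 0 < s) (hms : ∀ᵐ y ∂m, dist y z ≤ s) (hmass : s ≤ m.real univ) :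
    Real.log (s + dist x z) - (6 * a + 2) ≤ logPotential m x := by
  have : NeZero m := ⟨fun h => (hs.trans_le hmass).ne' (by simp [h])⟩
  have hr : 0 < s + dist x z := by positivity
  have hmr : ∀ᵐ y ∂m, dist y x ≤ s + dist x z := by
    filter_upwards [hms] with y hy
    linarith [dist_triangle_right y x z]
  have hint := integrable_log_div_dist hm hr hmr
  have hle : ∫ y, Real.log ((s + dist x z) / dist y x) ∂m ≤ (6 * a + 2) * m.real univ := by
    rcases le_or_gt (dist x z) (2 * s) with hnear | hfar
    · calc ∫ y, Real.log ((s + dist x z) / dist y x) ∂m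
          ≤ 2 * a * (s + dist x z) := integral_log_div_dist_le hm hr hmr
        _ ≤ 2 * a * (3 * m.real univ) := by gcongr; linarith
        _ ≤ (6 * a + 2) * m.real univ := by linarith
    · calc ∫ y, Real.log ((s + dist x z) / dist y x) ∂m ≤ ∫ _, (2 : ℝ) ∂m := by
            refine integral_mono_ae hint (integrable_const _) ?_
            filter_upwards [hms] with y hy
            have htri : dist x z ≤ dist y x + s := by linarith [dist_triangle_left x z y]
            have hpos : 0 < dist y x := by linarith
            have h3 : (s + dist x z) / dist y x ≤ 3 := by
              rw [div_le_iff₀ hpos]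
              linarith
            linarith [Real.log_le_sub_one_of_pos (div_pos hr hpos)]
        _ = 2 * m.real univ := by rw [integral_const, smul_eq_mul, mul_comm]
        _ ≤ (6 * a + 2) * m.real univ := by gcongr; linarith [a.2]
  rw [logPotential_eq_sub hm hr hmr]
  gcongr
  exact (inv_mul_le_iff₀ (hs.trans_le hmass)).2 (mul_comm _ (m.real univ) ▸ hle)

end LogPotential

section HolomorphicPotential

variable {m : Measure ℂ} {a : ℝ≥0} {w x y : ℂ} {r : ℝ}

lemma sub_div_sub_eq_one_add (h : x - y ≠ 0) : (w - y) / (x - y) = 1 + (w - x) / (x - y) := by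
  field_simp
  ring

lemma norm_sub_div_sub_le (hr : 0 < r) (hw : w ∈ ball x (r / 2)) (hy : r ≤ dist x y) :
    ‖(w - x) / (x - y)‖ ≤ 1 / 2 := by
  rw [norm_div, ← dist_eq_norm, ← dist_eq_norm, div_le_iff₀ (hr.trans_le hy)]
  linarith [mem_ball.1 hw]

lemma hasDerivAt_log_sub_div_sub (hr : 0 < r) (hw : w ∈ ball x (r / 2)) (hy : r ≤ dist x y) :
    HasDerivAt (fun v => log ((v - y) / (x - y))) (w - y)⁻¹ w := by
  have hxy : x - y ≠ 0 := sub_ne_zero.2 (dist_pos.1 (hr.trans_le hy))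
  have hslit : (w - y) / (x - y) ∈ slitPlane := by
    rw [sub_div_sub_eq_one_add hxy]
    exact mem_slitPlane_of_norm_lt_one ((norm_sub_div_sub_le hr hw hy).trans_lt (by norm_num))
  have hwy : w - y ≠ 0 := fun h0 => slitPlane_ne_zero hslit (by simp [h0])
  refine ((((hasDerivAt_id w).sub_const y).div_const (x - y)).clog hslit).congr_deriv ?_
  simp only [id_eq]
  field_simp

lemma integrable_log_sub_div_sub [IsFiniteMeasure m] (hr : 0 < r) (hmr : ∀ᵐ y ∂m, r ≤ dist x y)
    (hw : w ∈ ball x (r / 2)) : Integrable (fun y => log ((w - y) / (x - y))) m := by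
  refine Integrable.of_bound (measurable_log.comp (by fun_prop)).aestronglyMeasurable 1 ?_
  filter_upwards [hmr] with y hy
  have hle := norm_sub_div_sub_le hr hw hy
  rw [sub_div_sub_eq_one_add (sub_ne_zero.2 (dist_pos.1 (hr.trans_le hy)))]
  linarith [norm_log_one_add_half_le_self hle]

lemma differentiableAt_integral_log_sub_div_sub [IsFiniteMeasure m] (hr : 0 < r)
    (hmr : ∀ᵐ y ∂m, r ≤ dist x y) (hw : w ∈ ball x (r / 2)) :
    DifferentiableAt ℂ (fun w => ∫ y, log ((w - y) / (x - y)) ∂m) w := by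
  refine (hasDerivAt_integral_of_dominated_loc_of_deriv_le (F := fun w y => log ((w - y) / (x - y)))
    (F' := fun w y => (w - y)⁻¹)
    (bound := fun _ => 2 / r) (isOpen_ball.mem_nhds hw)
    (Eventually.of_forall fun v => (measurable_log.comp (by fun_prop)).aestronglyMeasurable)
    (integrable_log_sub_div_sub hr hmr hw) (by fun_prop) ?_ (integrable_const _)
    ?_).2.differentiableAt
  · filter_upwards [hmr] with y hy v hv
    have hvy : r / 2 ≤ ‖v - y‖ := by
      rw [← dist_eq_norm]
      linarith [dist_triangle_left x y v, mem_ball.1 hv]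
    rwa [norm_inv, inv_le_comm₀ (by linarith) (by positivity), inv_div]
  · filter_upwards [hmr] with y hy v hv using hasDerivAt_log_sub_div_sub hr hv hy

lemma re_integral_log_sub_div_sub [IsFiniteMeasure m]
    (hm : ∀ x r, m (ball x r) ≤ a * ENNReal.ofReal r) {K : Set ℂ} (hK : IsBounded K)
    (hmK : ∀ᵐ y ∂m, y ∈ K) (hr : 0 < r) (hmr : ∀ᵐ y ∂m, r ≤ dist x y) (hw : w ∈ ball x (r / 2)) :
    (∫ y, log ((w - y) / (x - y)) ∂m).re =
      ∫ y, Real.log (dist y w) ∂m - ∫ y, Real.log (dist y x) ∂m := by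
  have hint : ∀ v, Integrable (fun y => Real.log (dist y v)) m := fun v => by
    obtain ⟨R, hR, hKR⟩ := hK.subset_closedBall_lt 0 v
    exact integrable_log_dist (hm v) hR (hmK.mono fun y hy => hKR hy)
  rw [← integral_sub (hint w) (hint x)]
  refine (reCLM.integral_comp_comm (integrable_log_sub_div_sub hr hmr hw)).symm.trans
    (integral_congr_ae ?_)
  filter_upwards [hmr] with y hy
  have hwy : 0 < dist w y := by linarith [dist_triangle_left x y w, mem_ball.1 hw]
  rw [reCLM_apply, log_re, norm_div, ← dist_eq_norm, ← dist_eq_norm,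
    Real.log_div hwy.ne' (hr.trans_le hy).ne', dist_comm w, dist_comm x]

lemma exists_differentiableOn_re_eq_logPotential [IsFiniteMeasure m]
    (hm : ∀ x r, m (ball x r) ≤ a * ENNReal.ofReal r) {K : Set ℂ} (hK : IsBounded K)
    (hmK : ∀ᵐ y ∂m, y ∈ K) (hr : 0 < r) (hmr : ∀ᵐ y ∂m, r ≤ dist x y) :
    ∃ F : ℂ → ℂ, DifferentiableOn ℂ F (ball x (r / 2)) ∧
      ∀ w ∈ ball x (r / 2), (F w).re = logPotential m w := by
  refine ⟨fun w => (m.real univ)⁻¹ * ∫ y, log ((w - y) / (x - y)) ∂m + logPotential m x,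
    fun w hw => (((differentiableAt_integral_log_sub_div_sub hr hmr hw).const_mul _).add_const
      _).differentiableWithinAt, fun w hw => ?_⟩
  rw [add_re, re_ofReal_mul, ofReal_re,
    re_integral_log_sub_div_sub hm hK hmK hr hmr hw, logPotential, logPotential, average_eq,
    average_eq, smul_eq_mul, smul_eq_mul]
  ring

end HolomorphicPotential

/-! ### Maximum principle and Bernstein–Walsh inequality -/

section MaximumPrinciple

variable {X : Type*} {Γ : Set X} {v : X → ℝ} {c : ℝ}

lemma isClosed_notMem_and_le [TopologicalSpace X] (hv : ∀ x ∉ Γ, ContinuousAt v x)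
    (hΓ : ∀ x ∈ Γ, ∀ᶠ w in 𝓝 x, w ∉ Γ → v w < c) : IsClosed {w | w ∉ Γ ∧ c ≤ v w} := by
  rw [← isOpen_compl_iff, isOpen_iff_mem_nhds]
  intro x hx
  by_cases hxΓ : x ∈ Γ
  · filter_upwards [hΓ x hxΓ] with w hw hwc using (hw hwc.1).not_ge hwc.2
  · have hlt : v x < c := not_le.1 fun hle => hx ⟨hxΓ, hle⟩
    filter_upwards [(hv x hxΓ).eventually_lt_const hlt] with w hw hwc using hw.not_ge hwc.2

variable [NormedAddCommGroup X] [NormedSpace ℂ X] {V : Type*} [NormedAddCommGroup V]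
  [NormedSpace ℂ V]

lemma isOpen_setOf_isMaxOn_of_locally_eq_norm (hΓ : IsClosed Γ)
    (hv : ∀ x ∉ Γ, ∃ F : X → V, (∀ᶠ w in 𝓝 x, DifferentiableAt ℂ F w) ∧ ∀ᶠ w in 𝓝 x, ‖F w‖ = v w) :
    IsOpen {x | x ∉ Γ ∧ IsMaxOn v Γᶜ x} := by
  rw [isOpen_iff_mem_nhds]
  rintro x ⟨hx, hmax⟩
  obtain ⟨F, hF, hFv⟩ := hv x hx
  have hΓx := hΓ.isOpen_compl.mem_nhds hx
  have hloc : IsLocalMax (norm ∘ F) x := by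
    filter_upwards [hFv, hΓx] with w hw hwΓ
    rw [Function.comp_apply, Function.comp_apply, hw, hFv.self_of_nhds]
    exact hmax hwΓ
  filter_upwards [norm_eventually_eq_of_isLocalMax hF hloc, hFv, hΓx] with w hconst hw hwΓ
  refine ⟨hwΓ, fun y hy => ?_⟩
  exact (hmax hy).trans_eq (hFv.self_of_nhds.symm.trans (hconst.symm.trans hw))

lemma le_of_locally_eq_norm [NoncompactSpace X] (hΓ : IsClosed Γ)
    (hv : ∀ x ∉ Γ, ∃ F : X → V, (∀ᶠ w in 𝓝 x, DifferentiableAt ℂ F w) ∧ ∀ᶠ w in 𝓝 x, ‖F w‖ = v w)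
    (hbdry : ∀ a > c, ∀ x ∈ Γ, ∀ᶠ w in 𝓝 x, w ∉ Γ → v w < a)
    (hinf : ∀ a > c, ∀ᶠ w in cocompact X, v w < a) {x : X} (hx : x ∉ Γ) : v x ≤ c := by
  by_contra! hlt
  have hcont : ∀ w ∉ Γ, ContinuousAt v w := fun w hw =>
    have ⟨_, hF, hFv⟩ := hv w hw
    hF.self_of_nhds.continuousAt.norm.congr hFv
  have hcompact : ∀ a > c, IsCompact {w | w ∉ Γ ∧ a ≤ v w} := fun a ha => by
    obtain ⟨K, hK, hKv⟩ := mem_cocompact.1 (hinf a ha)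
    exact hK.of_isClosed_subset (isClosed_notMem_and_le hcont (hbdry a ha))
      fun w hw => not_not.1 fun hwK => (hKv hwK).not_ge hw.2
  obtain ⟨y, hy, hmax⟩ := (hcompact (v x) hlt).exists_isMaxOn ⟨x, hx, le_rfl⟩
    fun w hw => (hcont w hw.1).continuousWithinAt
  have hglob : IsMaxOn v Γᶜ y := fun w hw => by
    rcases le_or_gt (v x) (v w) with hle | hgt
    · exact hmax ⟨hw, hle⟩
    · exact hgt.le.trans hy.2
  have heq : {w | w ∉ Γ ∧ IsMaxOn v Γᶜ w} = {w | w ∉ Γ ∧ v y ≤ v w} :=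
    ext fun w => and_congr_right fun _ => ⟨fun hmax => hmax hy.1, fun hle _ hz =>
      (hglob hz).trans hle⟩
  have hcompact_max : IsCompact {w | w ∉ Γ ∧ IsMaxOn v Γᶜ w} :=
    heq ▸ hcompact (v y) (hlt.trans_le hy.2)
  have huniv := IsClopen.eq_univ ⟨hcompact_max.isClosed,
    isOpen_setOf_isMaxOn_of_locally_eq_norm hΓ hv⟩ ⟨y, hy.1, hglob⟩
  exact noncompact_univ X (huniv ▸ hcompact_max)

end MaximumPrinciple

section ExteriorMap

lemma unboundedComponent_mem_cobounded {Γ : Set ℂ} (hΓ : IsBounded Γ) :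
    unboundedComponent Γ ∈ cobounded ℂ := by
  obtain ⟨R, hR, hΓR⟩ := hΓ.subset_closedBall_lt 0 0
  filter_upwards [tendsto_norm_cobounded_atTop.eventually_gt_atTop R] with w hw using
    mem_unboundedComponent_of_lt_norm hR.le hΓR hw

variable {Γ : Set ℂ} {Φ : ℂ → ℂ} {n : ℕ}

namespace IsExtConformal

lemma one_le_norm_mulIndicator {Ω : Set ℂ} (h : IsExtConformal Ω Φ) (w : ℂ) :
    1 ≤ ‖Ω.mulIndicator Φ w‖ := by
  by_cases hw : w ∈ Ω
  · rw [mulIndicator_of_mem hw]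
    exact (h.one_lt_norm hw).le
  · rw [mulIndicator_of_notMem hw, norm_one]

lemma differentiableOn_mulIndicator (h : IsExtConformal (unboundedComponent Γ) Φ)
    (hΓ : IsClosed Γ) : DifferentiableOn ℂ ((unboundedComponent Γ).mulIndicator Φ) Γᶜ := by
  intro x hx
  refine DifferentiableAt.differentiableWithinAt ?_
  by_cases hxΩ : x ∈ unboundedComponent Γ
  · have hΩ := (isOpen_unboundedComponent hΓ).mem_nhds hxΩ
    exact (h.1.differentiableAt hΩ).congr_of_eventuallyEq
      (mem_of_superset hΩ fun w hw => mulIndicator_of_mem hw Φ)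
  · have hO : (Γ ∪ unboundedComponent Γ)ᶜ ∈ 𝓝 x :=
      (isClosed_union_unboundedComponent hΓ).isOpen_compl.mem_nhds (by simp_all)
    exact (differentiableAt_const (1 : ℂ)).congr_of_eventuallyEq
      (mem_of_superset hO fun w hw => mulIndicator_of_notMem (fun hwΩ => hw (.inr hwΩ)) Φ)

lemma isBigO_eval (h : IsExtConformal (unboundedComponent Γ) Φ) (hΓ : IsBounded Γ)
    {P : Polynomial ℂ} (hP : P.natDegree ≤ n) :
    P.eval =O[cobounded ℂ] fun w => (unboundedComponent Γ).mulIndicator Φ w ^ n := by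
  obtain ⟨c, hc, hlim⟩ := h.2.2
  have hΦ : (fun w => w) =O[cobounded ℂ] (unboundedComponent Γ).mulIndicator Φ := by
    refine .of_bound (2 / c) ?_
    have hc' : c / 2 < ‖(c : ℂ)‖ := by rw [norm_real, Real.norm_of_nonneg hc.le]; linarith
    filter_upwards [hlim.norm.eventually_const_lt hc', eventually_ne_cobounded 0,
      unboundedComponent_mem_cobounded hΓ] with w hw hw0 hwΩ
    rw [norm_div, lt_div_iff₀ (norm_pos_iff.2 hw0)] at hw
    rw [mulIndicator_of_mem hwΩ, div_mul_eq_mul_div, le_div_iff₀ hc]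
    linarith
  have hX : P.eval =O[cobounded ℂ] fun w => w ^ n := by
    simpa using P.isBigO_cobounded_of_degree_le (Q := .X ^ n)
      (by simpa using Polynomial.degree_le_of_natDegree_le hP)
  exact hX.trans (hΦ.pow n)

lemma tendsto_decay_mul_norm_eval_div (h : IsExtConformal (unboundedComponent Γ) Φ)
    (hΓ : IsBounded Γ) {P : Polynomial ℂ} (hP : P.natDegree ≤ n) {M : ℕ} (hM : M ≠ 0) (s : ℝ)
    (z : ℂ) :
    Tendsto (fun w => decay M s z w * ‖P.eval w‖ / ‖(unboundedComponent Γ).mulIndicator Φ w‖ ^ n)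
      (cobounded ℂ) (𝓝 0) := by
  have hdiv : (fun w => P.eval w / (unboundedComponent Γ).mulIndicator Φ w ^ n)
      =O[cobounded ℂ] fun _ => (1 : ℝ) :=
    (Asymptotics.isBigO_one_iff ℝ).2
      (Asymptotics.div_isBoundedUnder_of_isBigO (h.isBigO_eval hΓ hP))
  have hprod := (Asymptotics.isBigO_refl (decay M s z) (cobounded ℂ)).mul hdiv.norm_left
  refine (hprod.trans_tendsto (by simpa using tendsto_decay_cobounded hM s z)).congr fun w => ?_
  rw [norm_div, norm_pow, mul_div_assoc]

end IsExtConformal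

end ExteriorMap

section DecayPotential

variable {X : Type*} [PseudoMetricSpace X] [MeasurableSpace X] [OpensMeasurableSpace X]
  {m : Measure X} [IsFiniteMeasure m] {a : ℝ≥0} {x z : X} {s : ℝ}

lemma decay_le_exp_sub_logPotential [NeZero m] (hm : ∀ r, m (ball x r) ≤ a * ENNReal.ofReal r)
    (hs : 0 < s) (hms : ∀ᵐ y ∂m, dist y z ≤ s) (M : ℕ) :
    decay M s z x ≤ Real.exp (M * (Real.log s - logPotential m x)) := by
  rw [decay_eq_exp hs]
  gcongr
  refine logPotential_le_log hm (by positivity) ?_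
  filter_upwards [hms] with y hy
  linarith [dist_triangle y z x]

lemma exp_sub_logPotential_le_mul_decay (hm : ∀ r, m (ball x r) ≤ a * ENNReal.ofReal r)
    (hs : 0 < s) (hms : ∀ᵐ y ∂m, dist y z ≤ s) (hmass : s ≤ m.real univ) (M : ℕ) :
    Real.exp (M * (Real.log s - logPotential m x)) ≤
      Real.exp (M * (6 * a + 2)) * decay M s z x := by
  rw [decay_eq_exp hs, ← Real.exp_add, ← mul_add, dist_comm z x]
  gcongr
  linarith [log_sub_le_logPotential hm hs hms hmass]

end DecayPotential

lemma exists_measure_ae_mem_inter_ball {X : Type*} [MetricSpace X] [MeasurableSpace X]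
    [BorelSpace X] {Γ : Set X} (hΓ : MeasurableSet Γ) (hconn : IsPreconnected Γ) {a : ℝ≥0}
    (hμ : ∀ x r, μH[1] (Γ ∩ ball x r) ≤ a * ENNReal.ofReal r) {z : X} (hz : z ∈ Γ) {s : ℝ}
    (hs : 2 * s ≤ diam Γ) :
    ∃ m : Measure X, IsFiniteMeasure m ∧ (∀ x r, m (ball x r) ≤ a * ENNReal.ofReal r) ∧
      (∀ᵐ y ∂m, y ∈ Γ ∩ ball z s) ∧ s ≤ m.real univ := by
  have hfin : μH[1] (Γ ∩ ball z s) ≠ ∞ := ne_top_of_le_ne_top (by finiteness) (hμ z s)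
  refine ⟨μH[1].restrict (Γ ∩ ball z s), isFiniteMeasure_restrict.2 hfin, fun x r => ?_,
    ae_restrict_mem (hΓ.inter measurableSet_ball), ?_⟩
  · rw [Measure.restrict_apply measurableSet_ball, inter_comm]
    exact (measure_mono (inter_subset_inter_left _ inter_subset_left)).trans (hμ x r)
  · rw [Measure.real, Measure.restrict_apply_univ]
    exact (ENNReal.ofReal_le_iff_le_toReal hfin).1
      (ofReal_le_hausdorffMeasure_inter_ball hconn hz hs)

section BernsteinWalsh

variable {Γ : Set ℂ} {Φ : ℂ → ℂ} {m : Measure ℂ} [IsFiniteMeasure m] {a : ℝ≥0} {x z : ℂ}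
  {s δ D : ℝ} {M n : ℕ} {P : Polynomial ℂ}

lemma exists_norm_eq_exp_sub_logPotential (hm : ∀ x r, m (ball x r) ≤ a * ENNReal.ofReal r)
    (hΓ : IsCompact Γ) (hmΓ : ∀ᵐ y ∂m, y ∈ Γ) (hx : x ∉ Γ) (M : ℕ) (b : ℝ) :
    ∃ F : ℂ → ℂ, (∀ᶠ w in 𝓝 x, DifferentiableAt ℂ F w) ∧
      ∀ᶠ w in 𝓝 x, ‖F w‖ = Real.exp (M * (b - logPotential m w)) := by
  obtain ⟨r, hr, hball⟩ := Metric.isOpen_iff.1 hΓ.isClosed.isOpen_compl x hx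
  have hmr : ∀ᵐ y ∂m, r ≤ dist x y := hmΓ.mono fun y hy => not_lt.1 fun hlt =>
    hball (mem_ball'.2 hlt) hy
  obtain ⟨F, hF, hFre⟩ := exists_differentiableOn_re_eq_logPotential hm hΓ.isBounded hmΓ hr hmr
  have hnhds : ball x (r / 2) ∈ 𝓝 x := ball_mem_nhds x (half_pos hr)
  refine ⟨fun w => exp (M * (b - F w)), ?_, ?_⟩
  · filter_upwards [hF.eventually_differentiableAt hnhds] with w hw
    fun_prop
  · filter_upwards [hnhds] with w hw
    rw [norm_exp, ← ofReal_natCast, re_ofReal_mul, sub_re, ofReal_re, hFre w hw]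

namespace IsExtConformal

lemma exists_norm_eq_exp_mul_norm_eval_div (h : IsExtConformal (unboundedComponent Γ) Φ)
    (hΓ : IsCompact Γ) (hm : ∀ x r, m (ball x r) ≤ a * ENNReal.ofReal r) (hmΓ : ∀ᵐ y ∂m, y ∈ Γ)
    (M n : ℕ) (b : ℝ) (P : Polynomial ℂ) (hx : x ∉ Γ) :
    ∃ F : ℂ → ℂ, (∀ᶠ w in 𝓝 x, DifferentiableAt ℂ F w) ∧
      ∀ᶠ w in 𝓝 x, ‖F w‖ = Real.exp (M * (b - logPotential m w)) *
        (‖P.eval w‖ / ‖(unboundedComponent Γ).mulIndicator Φ w‖ ^ n) := by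
  obtain ⟨F, hF, hFW⟩ := exists_norm_eq_exp_sub_logPotential hm hΓ hmΓ hx M b
  refine ⟨fun w => F w * (P.eval w / (unboundedComponent Γ).mulIndicator Φ w ^ n), ?_,
    hFW.mono fun w hw => by rw [norm_mul, norm_div, norm_pow, hw]⟩
  filter_upwards [hF, (h.differentiableOn_mulIndicator hΓ.isClosed).eventually_differentiableAt
    (hΓ.isClosed.isOpen_compl.mem_nhds hx)] with w hFw hGw
  exact hFw.mul (P.differentiableAt.div (hGw.pow n)
    (pow_ne_zero n (norm_pos_iff.1 (one_pos.trans_le (h.one_le_norm_mulIndicator w)))))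

lemma decay_mul_norm_eval_div_le (h : IsExtConformal (unboundedComponent Γ) Φ) (hΓ : IsCompact Γ)
    (hm : ∀ x r, m (ball x r) ≤ a * ENNReal.ofReal r) (hmΓ : ∀ᵐ y ∂m, y ∈ Γ) (hs : 0 < s)
    (hms : ∀ᵐ y ∂m, dist y z ≤ s) (hmass : s ≤ m.real univ) (hM : M ≠ 0) (hP : P.natDegree ≤ n)
    (hD₀ : 0 ≤ D) (hD : ∀ t ∈ Γ, decay M s z t * ‖P.eval t‖ ≤ D) (hx : x ∉ Γ) :
    decay M s z x * ‖P.eval x‖ / ‖(unboundedComponent Γ).mulIndicator Φ x‖ ^ n ≤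
      Real.exp (M * (6 * a + 2)) * D := by
  have : NeZero m := ⟨fun h => (hs.trans_le hmass).ne' (by simp [h])⟩
  set G := (unboundedComponent Γ).mulIndicator Φ
  set c := Real.exp (M * (6 * a + 2))
  set v : ℂ → ℝ := fun w =>
    Real.exp (M * (Real.log s - logPotential m w)) * (‖P.eval w‖ / ‖G w‖ ^ n)
  have hv (w : ℂ) : v w ≤ c * (decay M s z w * ‖P.eval w‖ / ‖G w‖ ^ n) := by
    rw [mul_div_assoc, ← mul_assoc]
    exact mul_le_mul_of_nonneg_right (exp_sub_logPotential_le_mul_decay (hm w) hs hms hmass M)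
      (by positivity)
  suffices v x ≤ c * D by
    refine le_trans ?_ this
    rw [mul_div_assoc]
    exact mul_le_mul_of_nonneg_right (decay_le_exp_sub_logPotential (hm x) hs hms M)
      (by positivity)
  refine le_of_locally_eq_norm hΓ.isClosed
    (fun y hy => h.exists_norm_eq_exp_mul_norm_eval_div hΓ hm hmΓ M n (Real.log s) P hy)
    (fun b hb y hy => ?_) (fun b hb => ?_) hx
  · have hcont : Continuous fun w => c * (decay M s z w * ‖P.eval w‖) :=
      (((continuous_decay hs).comp (by fun_prop : Continuous fun w => (z, w))).mul
        P.continuous.norm).const_mul c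
    filter_upwards [hcont.continuousAt.eventually_lt_const
      ((mul_le_mul_of_nonneg_left (hD y hy) (Real.exp_nonneg _)).trans_lt hb)] with w hw _
    refine (hv w).trans_lt (hw.trans_le' ?_)
    gcongr
    exact div_le_self (mul_nonneg (decay_pos hs z w).le (norm_nonneg _))
      (one_le_pow₀ (h.one_le_norm_mulIndicator w))
  · have hlim := (h.tendsto_decay_mul_norm_eval_div hΓ.isBounded hP hM s z).const_mul c
    rw [mul_zero] at hlim
    rw [← cobounded_eq_cocompact]
    exact (hlim.eventually_lt_const ((by positivity : 0 ≤ c * D).trans_lt hb)).mono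
      fun w hw => (hv w).trans_lt hw

lemma norm_mulIndicator_pow_le_exp (h : IsExtConformal (unboundedComponent Γ) Φ)
    (hΓ : IsCompact Γ) (hΓne : Γ.Nonempty) (hδ : 0 < δ) {k : ℕ}
    (hx : infDist x Γ < (3 / 2) ^ k * setDist Γ (levelCurve (unboundedComponent Γ) Φ δ)) (n : ℕ) :
    ‖(unboundedComponent Γ).mulIndicator Φ x‖ ^ n ≤ Real.exp (3 ^ k * δ * n) := by
  by_cases hxΩ : x ∈ unboundedComponent Γ
  · rw [mulIndicator_of_mem hxΩ]
    calc ‖Φ x‖ ^ n ≤ ((1 + δ) ^ 3 ^ k) ^ n := by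
          gcongr
          exact h.norm_le_pow_of_infDist_lt hΓ hΓne hδ k hxΩ hx
      _ ≤ (Real.exp δ ^ 3 ^ k) ^ n := by
          gcongr
          linarith [Real.add_one_le_exp δ]
      _ = Real.exp (3 ^ k * δ * n) := by
          rw [← Real.exp_nat_mul, ← Real.exp_nat_mul]
          push_cast
          ring_nf
  · rw [mulIndicator_of_notMem hxΩ, norm_one, one_pow]
    exact Real.one_le_exp (by positivity)

lemma norm_eval_le (h : IsExtConformal (unboundedComponent Γ) Φ) (hΓ : IsCompact Γ)
    (hconn : IsPreconnected Γ) (hμ : ∀ x r, μH[1] (Γ ∩ ball x r) ≤ a * ENNReal.ofReal r)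
    (hs : 0 < s) (hsd : 2 * s ≤ diam Γ) (hδ : 0 < δ)
    (hset : setDist Γ (levelCurve (unboundedComponent Γ) Φ δ) = s) (hM : M ≠ 0)
    (hP : P.natDegree ≤ n) (hz : z ∈ Γ) (hD : ∀ t ∈ Γ, decay M s z t * ‖P.eval t‖ ≤ D) {K : ℝ}
    {k : ℕ} (hK : K ≤ (3 / 2) ^ k) (hx : dist x z < K * s) :
    ‖P.eval x‖ ≤ Real.exp (M * (6 * a + 2)) * (1 + K) ^ M * Real.exp (3 ^ k * δ * n) * D := by
  have hD₀ : 0 ≤ D := (mul_nonneg (decay_pos hs z z).le (norm_nonneg _)).trans (hD z hz)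
  obtain ⟨m, _, hm, hmem, hmass⟩ :=
    exists_measure_ae_mem_inter_ball hΓ.measurableSet hconn hμ hz hsd
  have hG : ‖(unboundedComponent Γ).mulIndicator Φ x‖ ^ n ≤ Real.exp (3 ^ k * δ * n) := by
    refine h.norm_mulIndicator_pow_le_exp hΓ ⟨z, hz⟩ hδ ?_ n
    rw [hset]
    exact (infDist_le_dist_of_mem hz).trans_lt (hx.trans_le (by gcongr))
  have hdecay : decay M s z x * ‖P.eval x‖ ≤
      Real.exp (M * (6 * a + 2)) * D * Real.exp (3 ^ k * δ * n) := by
    by_cases hxΓ : x ∈ Γ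
    · rw [mul_right_comm]
      exact (hD x hxΓ).trans (le_mul_of_one_le_left hD₀ (one_le_mul_of_one_le_of_one_le
        (Real.one_le_exp (by positivity)) (Real.one_le_exp (by positivity))))
    · have hGpos := pow_pos (one_pos.trans_le (h.one_le_norm_mulIndicator x)) n
      exact ((div_le_iff₀ hGpos).1 (h.decay_mul_norm_eval_div_le hΓ hm (hmem.mono fun y hy => hy.1)
        hs (hmem.mono fun y hy => (mem_ball.1 hy.2).le) hmass hM hP hD₀ hD hxΓ)).trans (by gcongr)
  calc ‖P.eval x‖ = decay M s x x * ‖P.eval x‖ := by rw [decay_self hs, one_mul]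
    _ ≤ (1 + K) ^ M * decay M s x z * ‖P.eval x‖ := by
        gcongr
        exact decay_le_mul_decay hs (dist_comm x z ▸ hx.le) x
    _ = (1 + K) ^ M * (decay M s z x * ‖P.eval x‖) := by rw [decay_comm, mul_assoc]
    _ ≤ (1 + K) ^ M * (Real.exp (M * (6 * a + 2)) * D * Real.exp (3 ^ k * δ * n)) := by
        have hK₀ : 0 ≤ K := (pos_of_mul_pos_left (dist_nonneg.trans_lt hx) hs.le).le
        gcongr
    _ = Real.exp (M * (6 * a + 2)) * (1 + K) ^ M * Real.exp (3 ^ k * δ * n) * D := by ring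

end IsExtConformal

end BernsteinWalsh

/-! ### A local Remez inequality -/

section PolynomialRoots

open Polynomial

lemma norm_eval_mul_prod_X_sub_C {K : Type*} [NormedField K] (Q : K[X]) (S : Multiset K) (w : K) :
    ‖(Q * (S.map fun x => X - C x).prod).eval w‖ =
      ‖Q.eval w‖ * (S.map fun x => dist w x).prod := by
  rw [eval_mul, norm_mul]
  congr 1
  induction S using Multiset.induction_on with
  | empty => simp
  | cons x S ih => simp [ih, dist_eq_norm]

lemma exists_eq_mul_prod_X_sub_C {K : Type*} [Field K] [IsAlgClosed K] {P : K[X]} (hP : P ≠ 0)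
    (U : Set K) : ∃ (Q : K[X]) (S : Multiset K), P = Q * (S.map fun x => X - C x).prod ∧
      (∀ x ∈ S, x ∈ U) ∧ ∀ w ∈ U, Q.eval w ≠ 0 := by
  classical
  refine ⟨C P.leadingCoeff * ((P.roots.filter (· ∉ U)).map fun x => X - C x).prod,
    P.roots.filter (· ∈ U), ?_, fun x hx => (Multiset.mem_filter.1 hx).2, fun w hw hQw => ?_⟩
  · conv_lhs => rw [(IsAlgClosed.splits P).eq_prod_roots, ← Multiset.filter_add_not (· ∈ U) P.roots,
      Multiset.map_add, Multiset.prod_add, mul_comm (Multiset.prod _), ← mul_assoc]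
  · rw [eval_mul, eval_C, mul_eq_zero, or_iff_right (leadingCoeff_ne_zero.2 hP), eval_multiset_prod,
      Multiset.map_map, Multiset.prod_eq_zero_iff, Multiset.mem_map] at hQw
    obtain ⟨x, hx, hwx⟩ := hQw
    rw [Function.comp_apply, eval_sub, eval_X, eval_C, sub_eq_zero] at hwx
    exact (Multiset.mem_filter.1 hx).2 (hwx ▸ hw)

lemma norm_eval_mul_prod_X_sub_C_le {K : Type*} [NormedField K] (Q : K[X]) {S : Multiset K} {z : K}
    {r : ℝ} (hS : ∀ x ∈ S, x ∈ ball z r) :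
    ‖(Q * (S.map fun x => X - C x).prod).eval z‖ ≤ ‖Q.eval z‖ * r ^ S.card := by
  rw [norm_eval_mul_prod_X_sub_C]
  gcongr
  exact (Multiset.prod_map_le_prod_map₀ _ (fun _ => r) (fun _ _ => dist_nonneg)
    fun x hx => (mem_ball'.1 (hS x hx)).le).trans_eq (by simp)

lemma pow_card_mul_norm_eval_le {Q : ℂ[X]} {S : Multiset ℂ} {z w : ℂ} {r D : ℝ} (hr : 0 < r)
    (hS : ∀ x ∈ S, x ∈ ball z r)
    (hD : ∀ v ∈ sphere z (4 * r), ‖(Q * (S.map fun x => X - C x).prod).eval v‖ ≤ D)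
    (hw : w ∈ closedBall z (4 * r)) : (3 * r) ^ S.card * ‖Q.eval w‖ ≤ D := by
  rw [← closure_ball z (by positivity)] at hw
  rw [← le_div_iff₀' (by positivity)]
  refine norm_le_of_forall_mem_frontier_norm_le isBounded_ball
    Q.differentiable.diffContOnCl (fun v hv => ?_) hw
  rw [frontier_ball z (by positivity)] at hv
  rw [le_div_iff₀ (by positivity)]
  calc ‖Q.eval v‖ * (3 * r) ^ S.card ≤ ‖Q.eval v‖ * (S.map fun x => dist v x).prod := by
        gcongr
        refine (Multiset.prod_map_le_prod_map₀ (fun _ => 3 * r) _ (fun _ _ => by positivity)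
          fun x hx => ?_).trans_eq' (by simp)
        linarith [dist_triangle_right v z x, mem_sphere.1 hv, mem_ball'.1 (hS x hx)]
    _ = ‖(Q * (S.map fun x => X - C x).prod).eval v‖ := (norm_eval_mul_prod_X_sub_C Q S v).symm
    _ ≤ D := hD v hv

lemma norm_le_sq_mul_norm {f : ℂ → ℂ} {z w : ℂ} {r B : ℝ} (hf : DifferentiableOn ℂ f (ball z r))
    (hf₀ : ∀ v ∈ ball z r, f v ≠ 0) (hr : 0 < r) (hB : ∀ v ∈ ball z r, ‖f v‖ ≤ B * ‖f z‖)
    (hw : dist w z ≤ r / 2) : ‖f z‖ ≤ B ^ 2 * ‖f w‖ := by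
  have hfz : 0 < ‖f z‖ := norm_pos_iff.2 (hf₀ z (mem_ball_self hr))
  have hB₀ : 0 < B := pos_of_mul_pos_left (hfz.trans_le (hB z (mem_ball_self hr))) hfz.le
  have hc : 0 < B * ‖f z‖ := mul_pos hB₀ hfz
  have hnorm (v : ℂ) : ‖f v / (B * ‖f z‖ : ℝ)‖ = ‖f v‖ / (B * ‖f z‖) := by
    rw [norm_div, norm_real, Real.norm_of_nonneg hc.le]
  have hharnack := norm_pow_three_le_of_ne_zero (hf.div_const ((B * ‖f z‖ : ℝ) : ℂ))
    (fun v hv => div_ne_zero (hf₀ v hv) (ofReal_ne_zero.2 hc.ne'))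
    (fun v hv => by rw [hnorm, div_le_one hc]; exact hB v hv) hr hw
  rw [hnorm, hnorm, le_div_iff₀ hc] at hharnack
  calc ‖f z‖ = B ^ 2 * ((‖f z‖ / (B * ‖f z‖)) ^ 3 * (B * ‖f z‖)) := by field_simp
    _ ≤ B ^ 2 * ‖f w‖ := by gcongr

lemma three_pow_card_mul_norm_eval_le {Q : ℂ[X]} {S : Multiset ℂ} {z w : ℂ} {r B : ℝ} (hr : 0 < r)
    (hS : ∀ x ∈ S, x ∈ ball z r) (hB₀ : 0 ≤ B)
    (hB : ∀ v ∈ sphere z (4 * r), ‖(Q * (S.map fun x => X - C x).prod).eval v‖ ≤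
      B * ‖(Q * (S.map fun x => X - C x).prod).eval z‖)
    (hw : w ∈ closedBall z (4 * r)) : 3 ^ S.card * ‖Q.eval w‖ ≤ B * ‖Q.eval z‖ := by
  have hmax := pow_card_mul_norm_eval_le hr hS hB hw
  rw [mul_pow] at hmax
  refine le_of_mul_le_mul_right ?_ (pow_pos hr S.card)
  linarith [mul_le_mul_of_nonneg_left (norm_eval_mul_prod_X_sub_C_le Q hS) hB₀]

lemma exists_multiset_prod_le_norm_eval {P : ℂ[X]} {z : ℂ} {r B : ℝ} (hr : 0 < r)
    (hPz : P.eval z ≠ 0) (hP : ∀ w ∈ closedBall z (4 * r), ‖P.eval w‖ ≤ B * ‖P.eval z‖) :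
    ∃ S : Multiset ℂ, (S.card : ℝ) ≤ Real.log B ∧ ∀ w ∈ closedBall z (r / 2),
      ‖P.eval z‖ * (S.map fun x => dist w x / r).prod ≤ B ^ 2 * ‖P.eval w‖ := by
  obtain ⟨Q, S, rfl, hS, hQ⟩ := exists_eq_mul_prod_X_sub_C
    (show P ≠ 0 from fun h0 => hPz (by rw [h0, eval_zero])) (ball z r)
  have hz : z ∈ closedBall z (4 * r) := mem_closedBall_self (by positivity)
  have hB : 0 < B := pos_of_mul_pos_left ((norm_pos_iff.2 hPz).trans_le (hP z hz)) (norm_nonneg _)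
  have hQB : ∀ w ∈ closedBall z (4 * r), 3 ^ S.card * ‖Q.eval w‖ ≤ B * ‖Q.eval z‖ := fun w hw =>
    three_pow_card_mul_norm_eval_le hr hS hB.le (fun v hv => hP v (sphere_subset_closedBall hv)) hw
  refine ⟨S, ?_, fun w hw => ?_⟩
  · have hcard : 3 ^ S.card ≤ B :=
      le_of_mul_le_mul_right (hQB z hz) (norm_pos_iff.2 (hQ z (mem_ball_self hr)))
    rw [Real.le_log_iff_exp_le hB, ← mul_one (S.card : ℝ), Real.exp_nat_mul]
    exact (pow_le_pow_left₀ (by positivity) Real.exp_one_lt_three.le _).trans hcard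
  · have hharnack : ‖Q.eval z‖ ≤ B ^ 2 * ‖Q.eval w‖ :=
      norm_le_sq_mul_norm Q.differentiable.differentiableOn hQ hr (fun v hv =>
        (le_mul_of_one_le_left (norm_nonneg _) (one_le_pow₀ (by norm_num))).trans
          (hQB v (closedBall_subset_closedBall (by linarith) (ball_subset_closedBall hv)))) hw
    calc ‖(Q * (S.map fun x => X - C x).prod).eval z‖ * (S.map fun x => dist w x / r).prod
        ≤ ‖Q.eval z‖ * r ^ S.card * (S.map fun x => dist w x / r).prod := by
          gcongr
          · exact Multiset.prod_map_nonneg fun _ _ => by positivity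
          · exact norm_eval_mul_prod_X_sub_C_le Q hS
      _ = ‖Q.eval z‖ * (S.map fun x => dist w x).prod := by
          rw [Multiset.prod_map_div, Multiset.map_const', Multiset.prod_replicate, mul_assoc,
            mul_div_cancel₀ _ (by positivity)]
      _ ≤ B ^ 2 * ‖Q.eval w‖ * (S.map fun x => dist w x).prod := by
          gcongr
          exact Multiset.prod_map_nonneg fun _ _ => dist_nonneg
      _ = B ^ 2 * ‖(Q * (S.map fun x => X - C x).prod).eval w‖ := by
          rw [norm_eval_mul_prod_X_sub_C, mul_assoc]

end PolynomialRoots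

section LocalRemez

variable {X : Type*} [PseudoMetricSpace X] [MeasurableSpace X]
  {m : Measure X} {a : ℝ≥0} {r : ℝ}

lemma ae_prod_pos_and_ofReal_neg_log_prod_le (hm : ∀ x r, m (ball x r) ≤ a * ENNReal.ofReal r)
    (hr : 0 < r) (S : Multiset X) : ∀ᵐ w ∂m, 0 < (S.map fun x => dist w x / r).prod ∧
      ENNReal.ofReal (-Real.log (S.map fun x => dist w x / r).prod) ≤
        (S.map fun x => ENNReal.ofReal (Real.log (r / dist w x))).sum := by
  induction S using Multiset.induction_on with
  | empty => simp
  | cons x S ih =>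
    filter_upwards [ih, ae_dist_pos_of_measure_ball_le (hm x)] with w ⟨hprod, hsum⟩ hw
    simp only [Multiset.map_cons, Multiset.sum_cons, Multiset.prod_cons]
    have hwr : 0 < dist w x / r := div_pos hw hr
    refine ⟨mul_pos hwr hprod, ?_⟩
    rw [Real.log_mul hwr.ne' hprod.ne', neg_add, ← Real.log_inv, inv_div]
    exact ENNReal.ofReal_add_le.trans (by gcongr)

lemma lintegral_multiset_sum_log_le [OpensMeasurableSpace X]
    (hm : ∀ x r, m (ball x r) ≤ a * ENNReal.ofReal r) (hr : 0 < r) (S : Multiset X) :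
    ∫⁻ w, (S.map fun x => ENNReal.ofReal (Real.log (r / dist w x))).sum ∂m ≤
      S.card * ENNReal.ofReal (2 * a * r) := by
  induction S using Multiset.induction_on with
  | empty => simp
  | cons x S ih =>
    simp only [Multiset.map_cons, Multiset.sum_cons, Multiset.card_cons]
    rw [lintegral_add_left (by fun_prop), Nat.cast_add, Nat.cast_one, add_mul, one_mul, add_comm]
    exact add_le_add ih (lintegral_log_div_dist_le (hm x) hr)

lemma ofReal_mul_measure_prod_le_exp_neg_le [OpensMeasurableSpace X]
    (hm : ∀ x r, m (ball x r) ≤ a * ENNReal.ofReal r) (hr : 0 < r) (S : Multiset X) (t : ℝ) :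
    ENNReal.ofReal t * m {w | (S.map fun x => dist w x / r).prod ≤ Real.exp (-t)} ≤
      S.card * ENNReal.ofReal (2 * a * r) := by
  have hmeas : Measurable fun w =>
      (S.map fun x => ENNReal.ofReal (Real.log (r / dist w x))).sum := by
    induction S using Multiset.induction_on with
    | empty => simp
    | cons x S ih =>
      simp only [Multiset.map_cons, Multiset.sum_cons]
      fun_prop
  refine le_trans ?_ (lintegral_multiset_sum_log_le hm hr S)
  refine le_trans ?_ (mul_meas_ge_le_lintegral hmeas (ENNReal.ofReal t))
  gcongr 1
  refine measure_mono_ae ?_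
  filter_upwards [ae_prod_pos_and_ofReal_neg_log_prod_le hm hr S] with w ⟨hprod, hsum⟩ hw
  refine (ENNReal.ofReal_le_ofReal ?_).trans hsum
  rw [le_neg, ← Real.log_exp (-t)]
  exact Real.log_le_log hprod hw

lemma natCast_mul_measure_norm_eval_lt_le {m : Measure ℂ}
    (hm : ∀ x r, m (ball x r) ≤ a * ENNReal.ofReal r) (hr : 0 < r)
    {P : Polynomial ℂ} {z : ℂ} {B : ℝ} (hB : 1 < B)
    (hP : ∀ w ∈ closedBall z (4 * r), ‖P.eval w‖ ≤ B * ‖P.eval z‖) (l : ℕ) :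
    l * m (closedBall z (r / 2) ∩ {w | B ^ (l + 2) * ‖P.eval w‖ < ‖P.eval z‖}) ≤
      ENNReal.ofReal (2 * a * r) := by
  have hB₀ : 0 < B := one_pos.trans hB
  have hlog : 0 < Real.log B := Real.log_pos hB
  by_cases hPz : P.eval z = 0
  · have hempty : {w | B ^ (l + 2) * ‖P.eval w‖ < ‖P.eval z‖} = ∅ :=
      eq_empty_of_forall_notMem fun w hw => by
        rw [mem_ofPred_eq, hPz, norm_zero] at hw
        exact hw.not_ge (by positivity)
    rw [hempty, inter_empty, measure_empty, mul_zero]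
    exact zero_le
  obtain ⟨S, hcard, hS⟩ := exists_multiset_prod_le_norm_eval hr hPz hP
  have hsub : closedBall z (r / 2) ∩ {w | B ^ (l + 2) * ‖P.eval w‖ < ‖P.eval z‖} ⊆
      {w | (S.map fun x => dist w x / r).prod ≤ Real.exp (-(l * Real.log B))} := fun w hw => by
    rw [mem_ofPred_eq, Real.exp_neg, Real.exp_nat_mul, Real.exp_log hB₀,
      ← one_div, le_div_iff₀' (by positivity)]
    refine le_of_mul_le_mul_right ?_ (norm_pos_iff.2 hPz)
    calc B ^ l * (S.map fun x => dist w x / r).prod * ‖P.eval z‖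
        = B ^ l * (‖P.eval z‖ * (S.map fun x => dist w x / r).prod) := by ring
      _ ≤ B ^ l * (B ^ 2 * ‖P.eval w‖) :=
          mul_le_mul_of_nonneg_left (hS w hw.1) (by positivity)
      _ = B ^ (l + 2) * ‖P.eval w‖ := by ring
      _ ≤ 1 * ‖P.eval z‖ := hw.2.le.trans_eq (one_mul _).symm
  rw [← ENNReal.mul_le_mul_iff_right (a := ENNReal.ofReal (Real.log B)) (by simpa using hlog)
    ENNReal.ofReal_ne_top]
  calc ENNReal.ofReal (Real.log B) * (l * m _)
      = ENNReal.ofReal (l * Real.log B) * m _ := by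
        rw [ENNReal.ofReal_mul (by positivity), ENNReal.ofReal_natCast]
        ring
    _ ≤ ENNReal.ofReal (l * Real.log B) *
        m {w | (S.map fun x => dist w x / r).prod ≤ Real.exp (-(l * Real.log B))} := by gcongr
    _ ≤ S.card * ENNReal.ofReal (2 * a * r) := ofReal_mul_measure_prod_le_exp_neg_le hm hr S _
    _ ≤ ENNReal.ofReal (Real.log B) * ENNReal.ofReal (2 * a * r) := by
        gcongr
        rw [← ENNReal.ofReal_natCast]
        exact ENNReal.ofReal_le_ofReal hcard

lemma measure_inter_norm_eval_lt_le {μ : Measure ℂ} {Γ : Set ℂ} (hΓ : MeasurableSet Γ)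
    (hμ : ∀ x r, μ (Γ ∩ ball x r) ≤ a * ENNReal.ofReal r) (hr : 0 < r)
    {P : Polynomial ℂ} {z : ℂ} {B : ℝ} (hB : 1 < B)
    (hP : ∀ w ∈ closedBall z (8 * r), ‖P.eval w‖ ≤ B * ‖P.eval z‖) {l : ℕ} (hl : l ≠ 0) {t : ℝ}
    (ht : 4 * a * r ≤ l * t) :
    μ (Γ ∩ closedBall z r ∩ {w | B ^ (l + 2) * ‖P.eval w‖ < ‖P.eval z‖}) ≤ ENNReal.ofReal t := by
  have hremez := natCast_mul_measure_norm_eval_lt_le (m := μ.restrict Γ)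
    (fun x r => by simpa only [Measure.restrict_apply' hΓ, inter_comm Γ] using hμ x r)
    (r := 2 * r) (by positivity) hB (fun w hw => hP w (by convert hw using 2; ring)) l
  rw [mul_div_cancel_left₀ _ two_ne_zero, Measure.restrict_apply' hΓ, inter_right_comm,
    inter_comm (closedBall z r)] at hremez
  rw [← ENNReal.mul_le_mul_iff_right (Nat.cast_ne_zero.2 hl) (ENNReal.natCast_ne_top l)]
  refine hremez.trans ?_
  rw [← ENNReal.ofReal_natCast, ← ENNReal.ofReal_mul l.cast_nonneg]
  exact ENNReal.ofReal_le_ofReal (by linarith)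

end LocalRemez

namespace IsLoop

variable {Γ : Set ℂ} {Λ T : ℝ} {g : ℝ → ℂ} {Φ : ℂ → ℂ}

lemma exists_hausdorffMeasure_norm_eval_lt_le (h : IsLoop Γ g T) (hq : IsQuasismooth Γ Λ)
    (hΦ : IsExtConformal (unboundedComponent Γ) Φ) {M : ℕ} (hM : M ≠ 0) :
    ∃ C > (0 : ℝ), ∃ c > (0 : ℝ), ∀ (n : ℕ) (P : Polynomial ℂ) (s δ : ℝ), P.natDegree ≤ n →
      0 < s → 2 * s ≤ diam Γ → 0 < δ → setDist Γ (levelCurve (unboundedComponent Γ) Φ δ) = s →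
      ∀ z ∈ Γ, (∀ t ∈ Γ, decay M s z t * ‖P.eval t‖ ≤ ‖P.eval z‖) →
        μH[1] (Γ ∩ closedBall z (8 * Λ * s) ∩
          {w | C * Real.exp (c * δ * n) * ‖P.eval w‖ < ‖P.eval z‖}) ≤ ENNReal.ofReal (s / 8) := by
  have hΛ := hq.pos
  obtain ⟨κ, hκ⟩ := pow_unbounded_of_one_lt (65 * Λ) (by norm_num : (1 : ℝ) < 3 / 2)
  set a : ℝ≥0 := (4 * Λ).toNNReal
  have ha : ∀ x r, μH[1] (Γ ∩ ball x r) ≤ a * ENNReal.ofReal r := fun x r => by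
    rw [ENNReal.ofNNReal_toNNReal, ← ENNReal.ofReal_mul (by positivity)]
    exact h.hausdorffMeasure_inter_ball_le hq x r
  set B : ℝ := Real.exp (M * (6 * a + 2)) * (1 + 65 * Λ) ^ M
  have hB : 1 < B := one_lt_mul_of_lt_of_le (Real.one_lt_exp_iff.2 (by positivity))
    (one_le_pow₀ (by linarith))
  set l : ℕ := ⌈1024 * Λ ^ 2⌉₊
  refine ⟨B ^ (l + 2), by positivity, (l + 2 : ℕ) * 3 ^ κ, by positivity,
    fun n P s δ hP hs hsd hδ hset z hz hmax => ?_⟩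
  have hpow : B ^ (l + 2) * Real.exp ((l + 2 : ℕ) * 3 ^ κ * δ * n) =
      (B * Real.exp (3 ^ κ * δ * n)) ^ (l + 2) := by
    rw [mul_pow B, ← Real.exp_nat_mul, ← mul_assoc, ← mul_assoc]
  rw [hpow]
  refine measure_inter_norm_eval_lt_le h.isCompact.measurableSet ha (by positivity)
    (one_lt_mul_of_lt_of_le hB (Real.one_le_exp (by positivity))) (fun w hw => ?_)
    (Nat.ceil_pos.2 (by positivity)).ne' ?_
  · refine hΦ.norm_eval_le h.isCompact h.isPreconnected ha hs hsd hδ hset hM hP hz hmax hκ.le ?_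
    exact (mem_closedBall.1 hw).trans_lt (by linarith [mul_pos hΛ hs])
  · rw [Real.coe_toNNReal _ (by positivity)]
    linarith [mul_le_mul_of_nonneg_right (Nat.le_ceil (1024 * Λ ^ 2)) hs.le]

lemma exists_norm_eval_le_decay_mul (h : IsLoop Γ g T) (hq : IsQuasismooth Γ Λ)
    (hΦ : IsExtConformal (unboundedComponent Γ) Φ) {M : ℕ} (hM : M ≠ 0) :
    ∃ C > (0 : ℝ), ∃ c > (0 : ℝ), ∀ (n : ℕ) (P : Polynomial ℂ) (s δ : ℝ), P.natDegree ≤ n →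
      0 < s → 2 * s ≤ diam Γ → 0 < δ → setDist Γ (levelCurve (unboundedComponent Γ) Φ δ) = s →
      ∀ x ∈ Γ, ∃ z ∈ Γ, ‖P.eval x‖ ≤ decay M s x z * ‖P.eval z‖ ∧
        μH[1] (Γ ∩ closedBall z (8 * Λ * s) ∩
          {w | C * Real.exp (c * δ * n) * ‖P.eval w‖ < ‖P.eval z‖}) ≤ ENNReal.ofReal (s / 8) := by
  obtain ⟨C, hC, c, hc, hmeas⟩ := h.exists_hausdorffMeasure_norm_eval_lt_le hq hΦ hM
  refine ⟨C, hC, c, hc, fun n P s δ hP hs hsd hδ hset x hx => ?_⟩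
  obtain ⟨z, hz, hle, hmax⟩ := exists_forall_decay_mul_le (M := M) h.isCompact
    P.continuous.norm.continuousOn (fun _ _ => norm_nonneg _) hs hx
  exact ⟨z, hz, hle, hmeas n P s δ hP hs hsd hδ hset z hz hmax⟩

end IsLoop

lemma lintegral_mul_le_of_forall_le_mul {X : Type*} [MeasurableSpace X] {m : Measure X}
    {S A : Set X} (hS : MeasurableSet S) (hA : MeasurableSet A) (hAS : A ⊆ S)
    {f u v : X → ℝ≥0∞} {C : ℝ≥0} (huv : ∀ x ∈ S, u x ≤ C * v x ∧ v x ≤ C * u x) {D : ℝ≥0∞}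
    (hD : ∫⁻ x in S, f x * v x ∂m ≤ D * ∫⁻ x in A, f x * v x ∂m) :
    ∫⁻ x in S, f x * u x ∂m ≤ C * C * D * ∫⁻ x in A, f x * u x ∂m := by
  calc ∫⁻ x in S, f x * u x ∂m
      ≤ ∫⁻ x in S, C * (f x * v x) ∂m := setLIntegral_mono' hS fun x hx => by
        rw [mul_left_comm]
        gcongr
        exact (huv x hx).1
    _ = C * ∫⁻ x in S, f x * v x ∂m := lintegral_const_mul' _ _ ENNReal.coe_ne_top
    _ ≤ C * (D * ∫⁻ x in A, C * (f x * u x) ∂m) := by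
        gcongr
        refine hD.trans ?_
        gcongr 1
        refine setLIntegral_mono' hA fun x hx => ?_
        rw [mul_left_comm]
        gcongr
        exact (huv x (hAS hx)).2
    _ = C * C * D * ∫⁻ x in A, f x * u x ∂m := by
        rw [lintegral_const_mul' _ _ ENNReal.coe_ne_top]
        ring

lemma setIntegral_le_mul_of_lintegral_ofReal_le {X : Type*} [MeasurableSpace X] {m : Measure X}
    {S A : Set X} (hAS : A ⊆ S) {f : X → ℝ} (hf : ∀ x, 0 ≤ f x) {C : ℝ} (hC : 0 ≤ C)
    (h : ∫⁻ x in S, ENNReal.ofReal (f x) ∂m ≤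
      ENNReal.ofReal C * ∫⁻ x in A, ENNReal.ofReal (f x) ∂m) :
    ∫ x in S, f x ∂m ≤ C * ∫ x in A, f x ∂m := by
  have hA : 0 ≤ ∫ x in A, f x ∂m := integral_nonneg hf
  by_cases hint : IntegrableOn f S m
  · rwa [← ofReal_integral_eq_lintegral_ofReal hint (ae_of_all _ hf),
      ← ofReal_integral_eq_lintegral_ofReal (hint.mono_set hAS) (ae_of_all _ hf),
      ← ENNReal.ofReal_mul hC, ENNReal.ofReal_le_ofReal_iff (by positivity)] at h
  · rw [integral_undef hint]
    positivity

namespace IsLoop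

variable {Γ : Set ℂ} {Λ T : ℝ} {g : ℝ → ℂ} {Φ : ℂ → ℂ}

lemma exists_norm_eval_rpow_le_decay_mul (h : IsLoop Γ g T) (hq : IsQuasismooth Γ Λ)
    (hΦ : IsExtConformal (unboundedComponent Γ) Φ) (M : ℕ) {p : ℝ} (hp : 0 < p) :
    ∃ C > (0 : ℝ), ∃ c > (0 : ℝ), ∀ (n : ℕ) (P : Polynomial ℂ) (s δ : ℝ), P.natDegree ≤ n →
      0 < s → 2 * s ≤ diam Γ → 0 < δ → setDist Γ (levelCurve (unboundedComponent Γ) Φ δ) = s →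
      ∀ x ∈ Γ, ∃ z ∈ Γ, ENNReal.ofReal (‖P.eval x‖ ^ p) ≤
          ENNReal.ofReal (decay M s x z) * ENNReal.ofReal (‖P.eval z‖ ^ p) ∧
        μH[1] (Γ ∩ closedBall z (8 * Λ * s) ∩
          {w | ENNReal.ofReal (C * Real.exp (c * δ * n)) * ENNReal.ofReal (‖P.eval w‖ ^ p) <
            ENNReal.ofReal (‖P.eval z‖ ^ p)}) ≤ ENNReal.ofReal (s / 8) := by
  obtain ⟨N, hN⟩ := exists_nat_gt (M / p)
  have hN₀ : N ≠ 0 := Nat.cast_ne_zero.1 (hN.trans_le' (by positivity)).ne'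
  obtain ⟨C, hC, c, hc, hpoly⟩ := h.exists_norm_eval_le_decay_mul hq hΦ hN₀
  refine ⟨C ^ p, by positivity, c * p, by positivity,
    fun n P s δ hP hs hsd hδ hset x hx => ?_⟩
  have hE : C ^ p * Real.exp (c * p * δ * n) = (C * Real.exp (c * δ * n)) ^ p := by
    rw [Real.mul_rpow hC.le (Real.exp_pos _).le, ← Real.exp_mul]
    ring_nf
  obtain ⟨z, hz, hle, hmeas⟩ := hpoly n P s δ hP hs hsd hδ hset x hx
  refine ⟨z, hz, ?_, (measure_mono ?_).trans hmeas⟩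
  · rw [← ENNReal.ofReal_mul (decay_pos hs x z).le]
    refine ENNReal.ofReal_le_ofReal ?_
    calc ‖P.eval x‖ ^ p ≤ (decay N s x z * ‖P.eval z‖) ^ p := by gcongr
      _ = decay N s x z ^ p * ‖P.eval z‖ ^ p :=
        Real.mul_rpow (decay_pos hs x z).le (norm_nonneg _)
      _ ≤ decay M s x z * ‖P.eval z‖ ^ p := by
        gcongr
        exact decay_rpow_le hs ((div_le_iff₀ hp).1 hN.le) x z
  · gcongr with w
    intro hw
    rw [hE, ← ENNReal.ofReal_mul (by positivity),
      ← Real.mul_rpow (by positivity) (norm_nonneg _)] at hw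
    exact (Real.rpow_lt_rpow_iff (by positivity) (norm_nonneg _) hp).1
      (ENNReal.ofReal_lt_ofReal_iff'.1 hw).1

lemma exists_lintegral_norm_eval_rpow_mul_meanDensity_le (h : IsLoop Γ g T)
    (hq : IsQuasismooth Γ Λ) (hΦ : IsExtConformal (unboundedComponent Γ) Φ) (lam : ℝ) {p : ℝ}
    (hp : 0 < p) :
    ∃ C > (0 : ℝ), ∃ c > (0 : ℝ), ∀ (ν : Measure ℂ) (ρ : ℂ → ℝ) (n : ℕ) (P : Polynomial ℂ)
      (s δ : ℝ) (A : Set ℂ), IsFiniteMeasure ν → IsAInftyMeasure Γ ν lam → LipschitzWith 1 ρ →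
      (∀ z ∈ Γ, 0 < ρ z) → P.natDegree ≤ n → 0 < s → 4 * s < diam Γ → 0 < δ →
      setDist Γ (levelCurve (unboundedComponent Γ) Φ δ) = s → MeasurableSet A → A ⊆ Γ →
      μH[1] Γ ≤ μH[1] A + ENNReal.ofReal s →
      ∫⁻ x in Γ, ENNReal.ofReal (‖P.eval x‖ ^ p) * meanDensity (ν.restrict Γ) ρ x ∂μH[1] ≤
        ENNReal.ofReal (C * Real.exp (c * δ * n)) *
          ∫⁻ x in A, ENNReal.ofReal (‖P.eval x‖ ^ p) * meanDensity (ν.restrict Γ) ρ x ∂μH[1] := by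
  obtain ⟨k, hk⟩ := pow_unbounded_of_one_lt (16 * Λ ^ 2 + 1) one_lt_two
  obtain ⟨M, hM⟩ := pow_unbounded_of_one_lt (4 * lam.toNNReal ^ (2 * k + 2)) one_lt_two
  obtain ⟨C₁, hC₁, c, hc, hpoly⟩ := h.exists_norm_eval_rpow_le_decay_mul hq hΦ M hp
  obtain ⟨C₂, hC₂⟩ := h.exists_lintegral_mul_meanDensity_le hq lam hk.le hM.le
  refine ⟨(C₂ + 1) * C₁, by positivity, c, hc,
    fun ν ρ n P s δ A hν hνA hρ hρ₀ hP hs hsd hδ hset hA hAΓ hAs => ?_⟩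
  refine (hC₂ ν ρ (fun x => ENNReal.ofReal (‖P.eval x‖ ^ p)) (C₁ * Real.exp (c * δ * n)).toNNReal
    s A hν hνA hρ hρ₀ (P.continuous.norm.rpow_const fun _ => Or.inr hp.le).measurable.ennreal_ofReal
    hs hsd hA hAΓ hAs (hpoly n P s δ hP hs (by linarith) hδ hset)).trans ?_
  rw [mul_assoc _ C₁, ENNReal.ofReal_mul (by positivity : (0 : ℝ) ≤ C₂ + 1),
    ENNReal.ofNNReal_toNNReal]
  gcongr
  rw [← ENNReal.ofReal_coe_nnreal]
  exact ENNReal.ofReal_le_ofReal (le_add_of_nonneg_right zero_le_one)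

end IsLoop

theorem weighted_remez_wn_general
    {Γ : Set ℂ} {Λ : ℝ} (hΓJ : IsJordanCurve Γ) (hΓq : IsQuasismooth Γ Λ) (lam : ℝ) {p : ℝ}
    (hp : 0 < p) {Φ : ℂ → ℂ} (hΦ : IsExtConformal (unboundedComponent Γ) Φ) {δ₀ : ℝ}
    (hδ₀ : 0 < δ₀) :
    ∃ c₃ > (0:ℝ), ∃ c₄ > (0:ℝ),
      ∀ ν : Measure ℂ, IsFiniteMeasure ν → IsAInftyMeasure Γ ν lam →
      ∀ n : ℕ, 0 < n → ∀ ℓ : ℂ → Set ℂ, IsArcFamily Γ (unboundedComponent Γ) Φ δ₀ n ℓ →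
      ∀ (P : Polynomial ℂ) (s δs : ℝ) (A : Set ℂ), P.natDegree ≤ n →
        0 < s → s < diam Γ / 4 →
        0 < δs → setDist Γ (levelCurve (unboundedComponent Γ) Φ δs) = s →
        MeasurableSet A → A ⊆ Γ → μH[1] Γ ≤ μH[1] A + ENNReal.ofReal s →
        ∫ z in Γ, ‖P.eval z‖ ^ p * wFun ν (unboundedComponent Γ) Φ n ℓ z ∂μH[1] ≤
          c₃ * Real.exp (c₄ * δs * n) *
            ∫ z in A, ‖P.eval z‖ ^ p * wFun ν (unboundedComponent Γ) Φ n ℓ z ∂μH[1] := by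
  obtain ⟨g, T, h⟩ := hΓJ.exists_isLoop
  obtain ⟨C₁, hC₁⟩ := h.exists_wFun_compare hΓq hΦ hδ₀ lam
  obtain ⟨C₂, hC₂, c, hc, hmean⟩ :=
    h.exists_lintegral_norm_eval_rpow_mul_meanDensity_le hΓq hΦ lam hp
  refine ⟨(C₁ * C₁ + 1) * C₂, by positivity, c, hc,
    fun ν hν hνA n hn ℓ hℓ P s δs A hP hs hsd hδs hset hA hAΓ hAs => ?_⟩
  have hw (z : ℂ) : 0 ≤ wFun ν (unboundedComponent Γ) Φ n ℓ z :=
    div_nonneg ENNReal.toReal_nonneg infDist_nonneg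
  refine setIntegral_le_mul_of_lintegral_ofReal_le hAΓ
    (fun z => mul_nonneg (by positivity) (hw z)) (by positivity) ?_
  simp only [ENNReal.ofReal_mul (Real.rpow_nonneg (norm_nonneg _) p)]
  have hrho := fun z hz => hΦ.rho_pos h.isCompact (by positivity : (0 : ℝ) < 1 / n) (z := z) hz
  refine (lintegral_mul_le_of_forall_le_mul h.isCompact.measurableSet hA hAΓ
    (hC₁ ν hν hνA n hn ℓ hℓ) (hmean ν _ n P s δs A hν hνA (lipschitz_infDist_pt _) hrho
      hP hs (by linarith) hδs hset hA hAΓ hAs)).trans ?_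
  rw [mul_assoc _ C₂, ENNReal.ofReal_mul (by positivity : (0 : ℝ) ≤ C₁ * C₁ + 1)]
  gcongr
  rw [← ENNReal.ofReal_coe_nnreal, ← ENNReal.ofReal_mul (by positivity)]
  exact ENNReal.ofReal_le_ofReal (le_add_of_nonneg_right zero_le_one)

/-- Lemma 4.1: for `ν ∈ A∞(Γ)` and `1 ≤ p < ∞` there are
`c₃, c₄ > 0` depending only on `Γ, p, λ_ν` such that for every `n`, `p_n ∈ ℙ_n`,
`0 < s < (diam Γ)/4` and every Borel `A ⊆ Γ` with `|A| ≥ |Γ| - s`,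
`∫_Γ |p_n|^p w_n ds ≤ c₃ exp(c₄ δ(s) n) ∫_A |p_n|^p w_n ds`. -/
theorem weighted_remez_wn
    (Γ : Set ℂ) (Λ : ℝ) (hΓJ : IsJordanCurve Γ) (hΓq : IsQuasismooth Γ Λ)
    (lam : ℝ) (p : ℝ) (hp : 1 ≤ p)
    (Φ : ℂ → ℂ) (hΦ : IsExtConformal (unboundedComponent Γ) Φ)
    (δ₀ : ℝ) (hδ₀pos : 0 < δ₀)
    (hδ₀ : ∀ z ∈ Γ, ENNReal.ofReal (2 * rho (unboundedComponent Γ) Φ δ₀ z) < μH[1] Γ) :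
    ∃ c₃ > (0:ℝ), ∃ c₄ > (0:ℝ),
      ∀ ν : MeasureTheory.Measure ℂ, IsFiniteMeasure ν → IsAInftyMeasure Γ ν lam →
      ∀ (n : ℕ), 0 < n → ∀ ℓ : ℂ → Set ℂ, IsArcFamily Γ (unboundedComponent Γ) Φ δ₀ n ℓ →
      ∀ (P : Polynomial ℂ) (s δs : ℝ) (A : Set ℂ),
        P.natDegree ≤ n →
        0 < s → s < Metric.diam Γ / 4 →
        0 < δs → setDist Γ (levelCurve (unboundedComponent Γ) Φ δs) = s →
        MeasurableSet A → A ⊆ Γ → μH[1] Γ ≤ μH[1] A + ENNReal.ofReal s →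
        ∫ z in Γ, ‖P.eval z‖ ^ p * wFun ν (unboundedComponent Γ) Φ n ℓ z ∂μH[1] ≤
          c₃ * Real.exp (c₄ * δs * n) *
            ∫ z in A, ‖P.eval z‖ ^ p * wFun ν (unboundedComponent Γ) Φ n ℓ z ∂μH[1] :=
  weighted_remez_wn_general hΓJ hΓq lam (one_pos.trans_le hp) hΦ hδ₀pos
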